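/- arXiv:2010.06754 — 2 statements merged into one kernel-verified Lean document; each statement's English description precedes it below -/
import Mathlib

section
/- There exists a universal constant C > 0 such that the following holds: let m ≥ 3 be an integer and let D ⊂ ℝ² be a bounded open set that is m-fold symmetric. Define g(r) = ℋ¹(∂B_r ∩ D)/(2πr) for r > 0, regarded as a radial function on ℝ², and let φ_m = (1_D − g) * N. Then |∇φ_m(x)| ≤ C·|x|/m for all x ∈ ℝ². -/
/-!
Write `F = 1_D - g` and identify `ℝ²` with `ℂ`. Then `F` is bounded by `1`, compactly supported,
invariant under the rotation by `2π/m`, and has mean zero on every centred disk (the structure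
`SymDensity`). Up to conjugation, the gradient of `F * N` at `z` is the Cauchy transform
`(1/2π) ∫ F(w) (z - w)⁻¹ dw`.

*Symmetrisation.* Averaging the Cauchy kernel over the `m` rotations replaces `(z - w)⁻¹` by
`z^(m-1) / (z^m - w^m)` (`sum_cauchy_rotations`). Since `F` has mean zero on the disk of radius `|z|`,
`z⁻¹` may be subtracted for `|w| < |z|`, leaving `w^m / (z (z^m - w^m))` there. The resulting kernel
is `symKer`, and `SymDensity.cauchy_eq_symKer` is the corresponding identity.

*Estimate.* In polar coordinates the norm of the kernel involves `|1 - t e^{iθ}|⁻¹` with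
`t = (r/|z|)^m` or `t = (|z|/r)^m`. From `|1 - t e^{iθ}| ≥ √|1 - t| √(|θ|/π)` the angular integral is
at most `4π / √|1 - t|` (`angular_integral_le`), and the remaining radial integrals have explicit
primitives (`radial_inner`, `radial_outer`). This gives `∫ |symKer m z w| dw ≤ 32π |z| / m`
(`lintegral_symKer_le`); `m ≥ 3` ensures convergence at infinity.

*From the Cauchy transform to the gradient.* Integrating along the segment from `z` to `z + h` and
exchanging the integrals bounds the increments of the potential by `O((|z| + |h|) |h| / m)`
(`SymDensity.potential_sub_le`), which bounds the derivative wherever it exists.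

*The slice function.* `g` is defined through `ℋ¹`, and `hausdorff_circle_inter` identifies `ℋ¹` on a
circle with arc length. Integration in polar coordinates then gives the mean-zero property.
-/

open MeasureTheory Set Real Bornology

noncomputable section

/-- The plane `ℝ²`. -/
abbrev R2 : Type := EuclideanSpace ℝ (Fin 2)

/-- The point of `ℝ²` with given coordinates. -/
def pt (a b : ℝ) : R2 := (EuclideanSpace.equiv (Fin 2) ℝ).symm ![a, b]

/-- The 2D Newtonian potential kernel `N(x) = (1/(2π)) log |x|`. -/
def nker (x : R2) : ℝ := (1 / (2 * π)) * Real.log ‖x‖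

/-- The convolution `1_D * N`. -/
def patchConv (D : Set R2) (x : R2) : ℝ := ∫ y in D, nker (x - y)

/-- The relative stream function `Ψ(x) = (1_D * N)(x) − (Ω/2)|x|²`. -/
def streamFun (D : Set R2) (Ω : ℝ) (x : R2) : ℝ := patchConv D x - Ω / 2 * ‖x‖ ^ 2

/-- `(D, Ω)` is a solution of the rotating patch equation: `D` is a bounded open
simply connected set whose boundary is a `C²` Jordan curve, and `Ψ` is constant
on `∂D`. -/
def IsPatchSolution (D : Set R2) (Ω : ℝ) : Prop :=
  IsOpen D ∧ IsBounded D ∧ SimplyConnectedSpace D ∧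
  (∃ γ : ℝ → R2,
      ContDiff ℝ 2 γ ∧ Function.Periodic γ (2 * π) ∧
      Set.InjOn γ (Set.Ico 0 (2 * π)) ∧ (∀ t, deriv γ t ≠ 0) ∧
      Set.range γ = frontier D) ∧
  (∃ c : ℝ, ∀ x ∈ frontier D, streamFun D Ω x = c)

/-- Rotation of the plane by angle `α` about the origin. -/
def rot (α : ℝ) (x : R2) : R2 :=
  pt (Real.cos α * x 0 - Real.sin α * x 1) (Real.sin α * x 0 + Real.cos α * x 1)

/-- `D` is `m`-fold symmetric. -/
def MFoldSymmetric (m : ℕ) (D : Set R2) : Prop := rot (2 * π / m) '' D = D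

/-- Polar coordinates point `r(cos θ, sin θ)`. -/
def polar (r θ : ℝ) : R2 := pt (r * Real.cos θ) (r * Real.sin θ)

/-- The star-shaped domain with polar graph boundary `1 + u`. -/
def polarDomain (u : ℝ → ℝ) : Set R2 :=
  {x | ∃ r θ : ℝ, 0 ≤ r ∧ r < 1 + u θ ∧ x = polar r θ}

/-- The polar graph `{(1+u(θ))(cos θ, sin θ)}`. -/
def polarGraph (u : ℝ → ℝ) : Set R2 := {x | ∃ θ : ℝ, x = polar (1 + u θ) θ}

/-- `L^∞` norm of a (continuous periodic) function on the torus. -/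
def supNorm (u : ℝ → ℝ) : ℝ := ⨆ θ : ℝ, |u θ|

/-- The Fraenkel asymmetry. -/
def fraenkel (D : Set R2) : ℝ :=
  sInf (Set.range fun x : R2 =>
    (volume (symmDiff D (Metric.ball x (Real.sqrt ((volume D).toReal / π))))).toReal
      / (volume D).toReal)

/-- Asymmetry with respect to the unit disk centered at the origin. -/
def asym0 (D : Set R2) : ℝ :=
  (volume (symmDiff D (Metric.ball (0 : R2) 1))).toReal / π

/-- The Laplacian in the plane. -/
def lap (p : R2 → ℝ) (x : R2) : ℝ :=
  ∑ i : Fin 2,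
    fderiv ℝ (fun y => fderiv ℝ p y (EuclideanSpace.single i 1)) x (EuclideanSpace.single i 1)

/-- The radial function `g(r) = ℋ¹(∂B_r ∩ D)/(2πr)`, as a function on the plane. -/
def sliceg (D : Set R2) (y : R2) : ℝ :=
  (μH[1] (Metric.sphere (0 : R2) ‖y‖ ∩ D)).toReal / (2 * π * ‖y‖)

/-- Convolution of `f` with the Newtonian potential over the plane. -/
def convN (f : R2 → ℝ) (x : R2) : ℝ := ∫ y, f y * nker (x - y)

/-! ### Hausdorff measure on circles -/

/-- The `ℋ¹` measure of an arc is at least the length of its chord: the orthogonal projection onto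
the direction of the chord is `1`-Lipschitz and maps the arc onto an interval of that length. -/
lemma hausdorff_arc_ge {r : ℝ} (hr : 0 < r) (α : ℝ) {s : ℝ} (hs : 0 < s) (hs' : s ≤ π / 2) :
    ENNReal.ofReal (2 * r * Real.sin s) ≤ μH[1] (circleMap 0 r '' Ioo (α - s) (α + s)) := by
  set L : ℂ → ℝ := fun w => (w * Complex.exp (-α * Complex.I)).im with hL
  have hLip : LipschitzWith 1 L := by
    refine LipschitzWith.of_dist_le_mul fun z w => ?_
    rw [NNReal.coe_one, one_mul, Real.dist_eq, dist_eq_norm, hL]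
    simp only
    rw [← Complex.sub_im, ← sub_mul]
    refine (Complex.abs_im_le_norm _).trans ?_
    rw [norm_mul, ← Complex.ofReal_neg, Complex.norm_exp_ofReal_mul_I, mul_one]
  have himg : ∀ t : ℝ, L (circleMap 0 r (α + t)) = r * Real.sin t := by
    intro t
    simp only [hL, circleMap, zero_add]
    rw [mul_assoc, ← Complex.exp_add, Complex.im_ofReal_mul,
      show ((α + t : ℝ) : ℂ) * Complex.I + -α * Complex.I = t * Complex.I by push_cast; ring,
      Complex.exp_ofReal_mul_I_im]
  have hsub : Ioo (-(r * Real.sin s)) (r * Real.sin s) ⊆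
      L '' (circleMap 0 r '' Ioo (α - s) (α + s)) := by
    intro y hy
    have h1 : -(Real.sin s) < y / r := by
      rw [lt_div_iff₀ hr]; linarith [hy.1]
    have h2 : y / r < Real.sin s := by
      rw [div_lt_iff₀ hr]; linarith [hy.2]
    have hs1 := Real.sin_le_one s
    refine ⟨_, ⟨α + Real.arcsin (y / r), ⟨?_, ?_⟩, rfl⟩, ?_⟩
    · have : -s < Real.arcsin (y / r) := by
        rw [Real.lt_arcsin_iff_sin_lt' ⟨by linarith, by linarith⟩, Real.sin_neg]
        exact h1
      linarith
    · have : Real.arcsin (y / r) < s := by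
        rw [Real.arcsin_lt_iff_lt_sin' ⟨by linarith, by linarith⟩]
        exact h2
      linarith
    · rw [himg, Real.sin_arcsin (by linarith) (by linarith)]
      field_simp
  calc ENNReal.ofReal (2 * r * Real.sin s)
      = volume (Ioo (-(r * Real.sin s)) (r * Real.sin s)) := by
        rw [Real.volume_Ioo]; congr 1; ring
    _ ≤ volume (L '' (circleMap 0 r '' Ioo (α - s) (α + s))) := measure_mono hsub
    _ = μH[1] (L '' (circleMap 0 r '' Ioo (α - s) (α + s))) := by rw [hausdorffMeasure_real]
    _ ≤ _ := by
        simpa using hLip.hausdorffMeasure_image_le zero_le_one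
          (circleMap 0 r '' Ioo (α - s) (α + s))

/-- Lower bound for the `ℋ¹` measure of a circle, from the perimeters of inscribed regular polygons. -/
lemma hausdorff_circle_ge {r : ℝ} (hr : 0 < r) :
    ENNReal.ofReal (2 * π * r) ≤ μH[1] (Metric.sphere (0 : ℂ) r) := by
  have key : ∀ n : ℕ, 2 ≤ n →
      ENNReal.ofReal (2 * π * r - 2 * r * π ^ 3 / 6 * ((n : ℝ)⁻¹) ^ 2) ≤
        μH[1] (Metric.sphere (0 : ℂ) r) := by
    intro n hn
    have hn0 : (0 : ℝ) < n := by positivity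
    have hn2 : (2 : ℝ) ≤ n := by exact_mod_cast hn
    set s : ℝ := π / n with hs
    have hs0 : 0 < s := by positivity
    have hs2 : s ≤ π / 2 := by
      rw [hs]; gcongr
    have hns : n * s = π := by rw [hs]; field_simp
    set a : ℕ → ℝ := fun k => -π + (2 * k + 1) * s with ha
    have hcov : ∀ k ∈ Finset.range n, Ioo (a k - s) (a k + s) ⊆ Ioc (-π) π := by
      intro k hk x hx
      have hk' : (k : ℝ) + 1 ≤ n := by exact_mod_cast Finset.mem_range.1 hk
      have h1 := hx.1
      have h2 := hx.2
      simp only [ha] at h1 h2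
      have h3 : (0 : ℝ) ≤ k * s := by positivity
      have h4 : ((k : ℝ) + 1) * s ≤ n * s := by gcongr
      constructor <;> nlinarith
    have hinj : InjOn (circleMap 0 r) (Ioc (-π) π) := by
      intro x hx y hy h
      refine eq_of_circleMap_eq hr.ne' ?_ h
      rw [abs_lt]
      constructor <;> linarith [hx.1, hx.2, hy.1, hy.2]
    have hdisj : (Finset.range n : Set ℕ).PairwiseDisjoint
        fun k => circleMap 0 r '' Ioo (a k - s) (a k + s) := by
      have aux : ∀ i j : ℕ, i < j → Disjoint (Ioo (a i - s) (a i + s)) (Ioo (a j - s) (a j + s)) := by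
        intro i j hij
        rw [Set.disjoint_left]
        intro x hx hx'
        have h1 := hx.2
        have h2 := hx'.1
        simp only [ha] at h1 h2
        have h3 : (i : ℝ) + 1 ≤ j := by exact_mod_cast hij
        nlinarith
      intro i hi j hj hij
      refine Disjoint.image ?_ hinj (hcov i hi) (hcov j hj)
      rcases lt_or_gt_of_ne hij with h | h
      · exact aux i j h
      · exact (aux j i h).symm
    have hmeas : ∀ k ∈ Finset.range n,
        MeasurableSet (circleMap 0 r '' Ioo (a k - s) (a k + s)) := fun k hk =>
      measurableSet_Ioo.image_of_continuousOn_injOn (continuous_circleMap 0 r).continuousOn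
        (hinj.mono (hcov k hk))
    calc ENNReal.ofReal (2 * π * r - 2 * r * π ^ 3 / 6 * ((n : ℝ)⁻¹) ^ 2)
        ≤ ENNReal.ofReal (n * (2 * r * Real.sin s)) := by
          apply ENNReal.ofReal_le_ofReal
          have h := Real.sin_gt_sub_cube hs0
          have : n * (2 * r * (s - s ^ 3 / 6)) ≤ n * (2 * r * Real.sin s) := by gcongr
          refine le_trans (le_of_eq ?_) this
          rw [hs]; field_simp
      _ = ∑ k ∈ Finset.range n, ENNReal.ofReal (2 * r * Real.sin s) := by
          rw [Finset.sum_const, Finset.card_range, nsmul_eq_mul, ENNReal.ofReal_mul hn0.le,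
            ENNReal.ofReal_natCast]
      _ ≤ ∑ k ∈ Finset.range n, μH[1] (circleMap 0 r '' Ioo (a k - s) (a k + s)) :=
          Finset.sum_le_sum fun k _ => hausdorff_arc_ge hr (a k) hs0 hs2
      _ = μH[1] (⋃ k ∈ Finset.range n, circleMap 0 r '' Ioo (a k - s) (a k + s)) :=
          (measure_biUnion_finset hdisj hmeas).symm
      _ ≤ _ := by
          apply measure_mono
          simp only [iUnion_subset_iff]
          rintro k - _ ⟨x, -, rfl⟩
          exact circleMap_mem_sphere 0 hr.le x
  have hlim : Filter.Tendsto (fun n : ℕ =>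
      ENNReal.ofReal (2 * π * r - 2 * r * π ^ 3 / 6 * ((n : ℝ)⁻¹) ^ 2)) Filter.atTop
      (nhds (ENNReal.ofReal (2 * π * r))) := by
    apply ENNReal.tendsto_ofReal
    have := ((tendsto_inv_atTop_nhds_zero_nat (𝕜 := ℝ)).pow 2).const_mul (2 * r * π ^ 3 / 6)
    simpa using this.const_sub (2 * π * r)
  exact le_of_tendsto hlim (Filter.eventually_atTop.2 ⟨2, key⟩)

/-- Hausdorff measure on a circle is arc length. The upper bound holds for `E` and for `Eᶜ` because
`circleMap` is Lipschitz; since the total mass is at least `2πr`, both are equalities. -/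
lemma hausdorff_circle_inter {r : ℝ} (hr : 0 < r) {E : Set ℂ} (hE : MeasurableSet E) :
    μH[1] (Metric.sphere (0 : ℂ) r ∩ E) =
      ENNReal.ofReal r * volume (Ioo (-π) π ∩ circleMap 0 r ⁻¹' E) := by
  have hIoc : ∀ s : Set ℝ, volume (Ioo (-π) π ∩ s) = volume (Ioc (-π) π ∩ s) := fun s =>
    measure_congr (Ioo_ae_eq_Ioc.inter (Filter.EventuallyEq.refl _ s))
  rw [hIoc]
  have himg : ∀ E : Set ℂ, Metric.sphere (0 : ℂ) r ∩ E =
      circleMap 0 r '' (Ioc (-π) π ∩ circleMap 0 r ⁻¹' E) := by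
    intro E
    ext z
    constructor
    · rintro ⟨hz, hzE⟩
      have hz' : ‖z‖ = r := by simpa using hz
      have : circleMap 0 r z.arg = z := by
        rw [circleMap, zero_add, ← hz', Complex.norm_mul_exp_arg_mul_I]
      exact ⟨z.arg, ⟨Complex.arg_mem_Ioc z, by simpa [this] using hzE⟩, this⟩
    · rintro ⟨t, ⟨-, ht⟩, rfl⟩
      exact ⟨circleMap_mem_sphere 0 hr.le t, ht⟩
  have hle : ∀ E : Set ℂ, μH[1] (Metric.sphere (0 : ℂ) r ∩ E) ≤
      ENNReal.ofReal r * volume (Ioc (-π) π ∩ circleMap 0 r ⁻¹' E) := by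
    intro E
    rw [himg]
    have := (lipschitzWith_circleMap 0 r).hausdorffMeasure_image_le zero_le_one
      (Ioc (-π) π ∩ circleMap 0 r ⁻¹' E)
    rw [hausdorffMeasure_real] at this
    simpa [Real.nnabs_of_nonneg hr.le, ENNReal.ofReal] using this
  refine le_antisymm (hle E) ?_
  have h1 := hle Eᶜ
  have h2 := hausdorff_circle_ge hr
  rw [← measure_inter_add_sdiff _ hE] at h2
  have h3 : volume (Ioc (-π) π ∩ circleMap 0 r ⁻¹' E) +
      volume (Ioc (-π) π ∩ circleMap 0 r ⁻¹' Eᶜ) = ENNReal.ofReal (2 * π) := by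
    have hm : MeasurableSet (circleMap 0 r ⁻¹' E) := (continuous_circleMap 0 r).measurable hE
    have := measure_inter_add_sdiff (μ := volume) (Ioc (-π) π) hm
    rw [Real.volume_Ioc] at this
    rw [preimage_compl, ← sdiff_eq, this]
    congr 1; ring
  rw [sdiff_eq] at h2
  have hfin : ENNReal.ofReal r * volume (Ioc (-π) π ∩ circleMap 0 r ⁻¹' Eᶜ) ≠ ⊤ := by
    refine ENNReal.mul_ne_top ENNReal.ofReal_ne_top ?_
    exact ne_top_of_le_ne_top ENNReal.ofReal_ne_top (h3 ▸ le_add_self)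
  have h4 : ENNReal.ofReal r * volume (Ioc (-π) π ∩ circleMap 0 r ⁻¹' E) +
      ENNReal.ofReal r * volume (Ioc (-π) π ∩ circleMap 0 r ⁻¹' Eᶜ) ≤
      μH[1] (Metric.sphere (0 : ℂ) r ∩ E) +
      ENNReal.ofReal r * volume (Ioc (-π) π ∩ circleMap 0 r ⁻¹' Eᶜ) := by
    rw [← mul_add, h3, ← ENNReal.ofReal_mul hr.le, mul_comm r]
    exact h2.trans (by gcongr)
  exact (ENNReal.add_le_add_iff_right hfin).1 h4

/-! ### Polar coordinates and one-variable integrals -/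

lemma lintegral_polar {f : ℂ → ENNReal} (hf : Measurable f) :
    ∫⁻ w, f w = ∫⁻ r in Ioi (0 : ℝ), ENNReal.ofReal r *
      ∫⁻ θ in Ioo (-π) π, f (circleMap 0 r θ) := by
  rw [← Complex.lintegral_comp_polarCoord_symm, polarCoord_target, Measure.volume_eq_prod,
    setLIntegral_prod]
  · refine lintegral_congr fun r => ?_
    rw [← lintegral_const_mul]
    · refine lintegral_congr fun θ => ?_
      rw [Complex.polarCoord_symm_apply, circleMap, Complex.exp_mul_I]
      simp
    · exact hf.comp (continuous_circleMap 0 r).measurable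
  · refine Measurable.aemeasurable ?_
    have h : Measurable (Complex.polarCoord.symm) := by
      have : (Complex.polarCoord.symm : ℝ × ℝ → ℂ) =
        fun p => (p.1 : ℂ) * (Real.cos p.2 + Real.sin p.2 * Complex.I) := by
        funext p; exact Complex.polarCoord_symm_apply p
      rw [this]
      fun_prop
    exact (ENNReal.measurable_ofReal.comp measurable_fst).smul (hf.comp h)

lemma norm_one_sub_mul_exp_ge_angle {t θ : ℝ} (ht : 0 ≤ t) (hθ : |θ| ≤ π) :
    |θ| / π ≤ ‖1 - t * Complex.exp (θ * Complex.I)‖ := by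
  have hsq : ‖1 - t * Complex.exp (θ * Complex.I)‖ ^ 2 = 1 - 2 * t * Real.cos θ + t ^ 2 := by
    rw [← Complex.normSq_eq_norm_sq, Complex.normSq_apply]
    simp [Complex.exp_ofReal_mul_I_re, Complex.exp_ofReal_mul_I_im]
    nlinarith [Real.sin_sq_add_cos_sq θ]
  have h0 : 0 ≤ |θ| / π := by positivity
  refine le_of_sq_le_sq ?_ (norm_nonneg _)
  rw [hsq]
  have hle1 : |θ| / π ≤ 1 := (div_le_one Real.pi_pos).2 hθ
  rw [← Real.cos_abs θ]
  rcases le_total |θ| (π / 2) with h | h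
  · have hsin : |θ| / π ≤ Real.sin |θ| := by
      refine le_trans ?_ (Real.mul_le_sin (abs_nonneg θ) h)
      rw [div_mul_eq_mul_div]
      gcongr
      linarith [abs_nonneg θ]
    have h1 : (|θ| / π) ^ 2 ≤ Real.sin |θ| ^ 2 := by gcongr
    nlinarith [Real.sin_sq_add_cos_sq |θ|, sq_nonneg (t - Real.cos |θ|)]
  · have hcos : Real.cos |θ| ≤ 0 :=
      Real.cos_nonpos_of_pi_div_two_le_of_le h (by linarith [Real.pi_pos])
    have h1 : (|θ| / π) ^ 2 ≤ 1 := pow_le_one₀ h0 hle1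
    nlinarith [mul_nonneg ht (neg_nonneg.2 hcos), sq_nonneg t]

/-- Geometric mean of the bounds by `|1 - t|` and by `|θ| / π`. It splits the singularity of
`|1 - t e^{iθ}|⁻¹` into two factors, each integrable in its own variable. -/
lemma norm_one_sub_mul_exp_ge {t θ : ℝ} (ht : 0 ≤ t) (hθ : |θ| ≤ π) :
    √|1 - t| * √(|θ| / π) ≤ ‖1 - t * Complex.exp (θ * Complex.I)‖ := by
  have h1 := norm_one_sub_mul_exp_ge_angle ht hθ
  have h2 : |1 - t| ≤ ‖1 - t * Complex.exp (θ * Complex.I)‖ := by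
    have := abs_norm_sub_norm_le (1 : ℂ) (t * Complex.exp (θ * Complex.I))
    simpa [Complex.norm_exp_ofReal_mul_I, abs_of_nonneg ht] using this
  calc _ ≤ √‖1 - t * Complex.exp (θ * Complex.I)‖ * √‖1 - t * Complex.exp (θ * Complex.I)‖ := by
        gcongr
    _ = _ := Real.mul_self_sqrt (norm_nonneg _)

lemma integral_abs_rpow : IntervalIntegrable (fun θ : ℝ => |θ| ^ (-(1 / 2) : ℝ)) volume (-π) π ∧
    ∫ θ in (-π)..π, |θ| ^ (-(1 / 2) : ℝ) = 4 * √π := by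
  have h1 : IntervalIntegrable (fun θ : ℝ => |θ| ^ (-(1 / 2) : ℝ)) volume 0 π := by
    refine (intervalIntegral.intervalIntegrable_rpow' (by norm_num)).congr ?_ (f := fun θ : ℝ => θ ^ (-(1 / 2) : ℝ))
    intro x hx
    rw [uIoc_of_le Real.pi_pos.le] at hx
    simp [abs_of_pos hx.1]
  have h2 : IntervalIntegrable (fun θ : ℝ => |θ| ^ (-(1 / 2) : ℝ)) volume (-π) 0 := by
    have := h1.comp_sub_left 0
    simpa using this.symm
  have h3 : ∫ θ in (0 : ℝ)..π, |θ| ^ (-(1 / 2) : ℝ) = 2 * √π := by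
    have : ∫ θ in (0 : ℝ)..π, |θ| ^ (-(1 / 2) : ℝ) = ∫ θ in (0 : ℝ)..π, θ ^ (-(1 / 2) : ℝ) := by
      refine intervalIntegral.integral_congr fun x hx => ?_
      rw [uIcc_of_le Real.pi_pos.le] at hx
      simp [abs_of_nonneg hx.1]
    rw [this, integral_rpow (Or.inl (by norm_num)), Real.sqrt_eq_rpow]
    norm_num
    ring
  have h4 : ∫ θ in (-π)..0, |θ| ^ (-(1 / 2) : ℝ) = 2 * √π := by
    rw [← h3]
    have := intervalIntegral.integral_comp_neg (a := 0) (b := π) (fun θ : ℝ => |θ| ^ (-(1 / 2) : ℝ))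
    simpa using this.symm
  refine ⟨h2.trans h1, ?_⟩
  rw [← intervalIntegral.integral_add_adjacent_intervals h2 h1, h3, h4]
  ring

/-- Periodicity removes both the frequency `m` and the argument of `a`, so that only `‖a‖` enters. -/
lemma angular_integral_le {m : ℕ} (hm : 1 ≤ m) {a : ℂ} (ha : ‖a‖ ≠ 1) :
    ∫⁻ θ in Ioo (-π) π, ENNReal.ofReal (‖1 - a * Complex.exp ((m * θ : ℝ) * Complex.I)‖⁻¹) ≤
      ENNReal.ofReal (4 * π * (√|1 - ‖a‖|)⁻¹) := by
  set t := ‖a‖ with ht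
  have ht0 : 0 ≤ t := norm_nonneg _
  set G : ℝ → ℝ := fun θ => ‖1 - t * Complex.exp (θ * Complex.I)‖⁻¹ with hG
  have hne : ∀ θ : ℝ, ‖1 - t * Complex.exp (θ * Complex.I)‖ ≠ 0 := by
    intro θ h
    rw [norm_eq_zero, sub_eq_zero] at h
    have := congrArg norm h
    rw [norm_mul, Complex.norm_exp_ofReal_mul_I, Complex.norm_real, norm_one, mul_one,
      Real.norm_of_nonneg ht0] at this
    exact ha this.symm
  have hGc : Continuous G := by
    refine Continuous.inv₀ ?_ hne
    fun_prop
  have hGper : Function.Periodic G (2 * π) := by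
    intro θ
    simp only [hG]
    congr 3
    push_cast
    rw [add_mul, Complex.exp_periodic]
  have hGa : ∀ θ : ℝ, ‖1 - a * Complex.exp ((m * θ : ℝ) * Complex.I)‖⁻¹ = G (m * θ + a.arg) := by
    intro θ
    simp only [hG]
    congr 2
    conv_lhs => rw [← Complex.norm_mul_exp_arg_mul_I a]
    rw [mul_assoc, ← Complex.exp_add]
    congr 2
    push_cast; ring_nf
  have hm0 : (m : ℝ) ≠ 0 := by positivity
  have hInt : ∫ θ in (-π)..π, G (m * θ + a.arg) = ∫ θ in (-π)..π, G θ := by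
    rw [intervalIntegral.integral_comp_mul_add _ hm0]
    have h1 := hGper.intervalIntegral_add_zsmul_eq m (m * -π + a.arg)
      (fun _ _ => hGc.intervalIntegrable _ _)
    have e1 : (m * -π + a.arg : ℝ) + (m : ℤ) • (2 * π) = m * π + a.arg := by
      simp; ring
    rw [e1] at h1
    have h2 := hGper.intervalIntegral_add_eq (m * -π + a.arg) (-π)
    rw [show -π + 2 * π = π by ring] at h2
    rw [h1, h2]
    simp [hm0]
  have hpos : 0 < √|1 - t| := Real.sqrt_pos.2 (abs_pos.2 (sub_ne_zero.2 ha.symm))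
  have hbound : ∫ θ in (-π)..π, G θ ≤ 4 * π * (√|1 - t|)⁻¹ := by
    calc ∫ θ in (-π)..π, G θ
        ≤ ∫ θ in (-π)..π, ((√|1 - t|)⁻¹ * √π) * |θ| ^ (-(1 / 2) : ℝ) := by
          refine intervalIntegral.integral_mono_ae_restrict (by linarith [Real.pi_pos])
            (hGc.intervalIntegrable _ _) (integral_abs_rpow.1.const_mul _) ?_
          rw [Filter.EventuallyLE, ae_restrict_iff' measurableSet_Icc]
          filter_upwards [Measure.ae_ne volume (0 : ℝ)] with θ hθ0 hθ
          have hθ0' : 0 < |θ| := abs_pos.2 hθ0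
          have h1 := norm_one_sub_mul_exp_ge ht0 (abs_le.2 hθ)
          have h2 : 0 < √|θ| := Real.sqrt_pos.2 hθ0'
          have h3 : 0 < √π := Real.sqrt_pos.2 Real.pi_pos
          rw [Real.rpow_neg hθ0'.le, ← Real.sqrt_eq_rpow]
          rw [Real.sqrt_div hθ0'.le] at h1
          refine (inv_anti₀ (by positivity) h1).trans (le_of_eq ?_)
          field_simp
      _ = _ := by
          rw [intervalIntegral.integral_const_mul, integral_abs_rpow.2]
          have := Real.mul_self_sqrt Real.pi_pos.le
          linear_combination (4 * (√|1 - t|)⁻¹) * this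
  simp_rw [hGa]
  rw [← ofReal_integral_eq_lintegral_ofReal]
  · apply ENNReal.ofReal_le_ofReal
    rw [← integral_Ioc_eq_integral_Ioo, ← intervalIntegral.integral_of_le (by linarith [Real.pi_pos]), hInt]
    exact hbound
  · have : Continuous fun θ : ℝ => G (m * θ + a.arg) := by fun_prop
    exact (this.continuousOn.integrableOn_compact (isCompact_Icc (a := -π) (b := π))).mono_set Ioo_subset_Icc_self
  · exact Filter.Eventually.of_forall fun θ => inv_nonneg.2 (norm_nonneg _)

/-- The integrand has the primitive `-(2ρ/m) √(1 - (r/ρ)^m)`. The factor `1/m` of the theorem comes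
from here and from `radial_outer`. -/
lemma radial_inner {m : ℕ} (hm : 1 ≤ m) {ρ : ℝ} (hρ : 0 < ρ) :
    ∫⁻ r in Ioo 0 ρ, ENNReal.ofReal ((r / ρ) ^ (m - 1) * (√(1 - (r / ρ) ^ m))⁻¹) ≤
      ENNReal.ofReal (2 * ρ / m) := by
  have hm0 : (0 : ℝ) < m := by positivity
  set g : ℝ → ℝ := fun r => -(2 * ρ / m) * √(1 - (r / ρ) ^ m) with hg
  have hlt : ∀ r ∈ Ioo 0 ρ, 0 < 1 - (r / ρ) ^ m := by
    intro r hr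
    have : (r / ρ) ^ m < 1 := pow_lt_one₀ (div_nonneg hr.1.le hρ.le)
      ((div_lt_one hρ).2 hr.2) (by omega)
    linarith
  have hder : ∀ r ∈ Ioo 0 ρ,
      HasDerivAt g ((r / ρ) ^ (m - 1) * (√(1 - (r / ρ) ^ m))⁻¹) r := by
    intro r hr
    have h1 : HasDerivAt (fun r : ℝ => 1 - (r / ρ) ^ m)
        (-(m * (r / ρ) ^ (m - 1) * (1 / ρ))) r := by
      simpa using (((hasDerivAt_id r).div_const ρ).pow m).const_sub 1
    have h2 := (h1.sqrt (hlt r hr).ne').const_mul (-(2 * ρ / m))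
    refine h2.congr_deriv ?_
    have := Real.sqrt_pos.2 (hlt r hr)
    field_simp
  have hcont : ContinuousOn g (Icc 0 ρ) := by
    apply Continuous.continuousOn; fun_prop
  have hnn : ∀ r ∈ Ioo 0 ρ, 0 ≤ (r / ρ) ^ (m - 1) * (√(1 - (r / ρ) ^ m))⁻¹ := by
    intro r hr
    have := hr.1
    positivity
  have hInt := intervalIntegral.integrableOn_deriv_of_nonneg hcont hder hnn
  have hval := intervalIntegral.integral_eq_sub_of_hasDerivAt_of_le hρ.le hcont hder
    ((intervalIntegrable_iff_integrableOn_Ioc_of_le hρ.le).2 hInt)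
  rw [← ofReal_integral_eq_lintegral_ofReal (hInt.mono_set Ioo_subset_Ioc_self)
    ((ae_restrict_iff' measurableSet_Ioo).2 (Filter.Eventually.of_forall hnn)),
    ← integral_Ioc_eq_integral_Ioo, ← intervalIntegral.integral_of_le hρ.le, hval]
  apply ENNReal.ofReal_le_ofReal
  simp [hg, hρ.ne', show m ≠ 0 by omega]

/-- The integrand has the primitive `(2ρ/k) √(1 - (ρ/r)^k)`. It is used with `k = m - 2`, which is
where `m ≥ 3` is needed. -/
lemma radial_outer {k : ℕ} (hk : 1 ≤ k) {ρ : ℝ} (hρ : 0 < ρ) :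
    ∫⁻ r in Ioi ρ, ENNReal.ofReal ((ρ / r) ^ (k + 1) * (√(1 - (ρ / r) ^ k))⁻¹) ≤
      ENNReal.ofReal (2 * ρ / k) := by
  have hk0 : (0 : ℝ) < k := by positivity
  set g : ℝ → ℝ := fun r => (2 * ρ / k) * √(1 - (ρ / r) ^ k) with hg
  have hlt : ∀ r ∈ Ioi ρ, 0 < 1 - (ρ / r) ^ k := by
    intro r hr
    have hr0 : 0 < r := hρ.trans hr
    have : (ρ / r) ^ k < 1 := pow_lt_one₀ (div_nonneg hρ.le hr0.le)
      ((div_lt_one hr0).2 hr) (by omega)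
    linarith
  have hder : ∀ r ∈ Ioi ρ,
      HasDerivAt g ((ρ / r) ^ (k + 1) * (√(1 - (ρ / r) ^ k))⁻¹) r := by
    intro r hr
    have hr0 : 0 < r := hρ.trans hr
    have h0 : HasDerivAt (fun r : ℝ => ρ / r) (-ρ / r ^ 2) r := by
      simpa [div_eq_mul_inv] using (hasDerivAt_inv hr0.ne').const_mul ρ
    have h1 : HasDerivAt (fun r : ℝ => 1 - (ρ / r) ^ k)
        (-(k * (ρ / r) ^ (k - 1) * (-ρ / r ^ 2))) r := by
      simpa using (h0.pow k).const_sub 1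
    have h2 := (h1.sqrt (hlt r hr).ne').const_mul (2 * ρ / k)
    refine h2.congr_deriv ?_
    have := Real.sqrt_pos.2 (hlt r hr)
    obtain ⟨j, rfl⟩ : ∃ j, k = j + 1 := ⟨k - 1, by omega⟩
    rw [Nat.add_sub_cancel, pow_succ (ρ / r) (j + 1), pow_succ (ρ / r) j]
    field_simp
  have hcont : ContinuousWithinAt g (Ici ρ) ρ := by
    have : ContinuousAt (fun r : ℝ => ρ / r) ρ := continuousAt_const.div continuousAt_id hρ.ne'
    have : ContinuousAt g ρ := by
      simp only [hg]
      exact continuousAt_const.mul ((continuousAt_const.sub (this.pow k)).sqrt)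
    exact this.continuousWithinAt
  have hnn : ∀ r ∈ Ioi ρ, 0 ≤ (ρ / r) ^ (k + 1) * (√(1 - (ρ / r) ^ k))⁻¹ := by
    intro r hr
    have hr0 : 0 < r := hρ.trans hr
    positivity
  have hlim : Filter.Tendsto g Filter.atTop (nhds (2 * ρ / k)) := by
    have h1 : Filter.Tendsto (fun r : ℝ => ρ / r) Filter.atTop (nhds 0) :=
      Filter.tendsto_id.const_div_atTop ρ
    have h2 := (((h1.pow k).const_sub 1).sqrt).const_mul (2 * ρ / k)
    simpa [show k ≠ 0 by omega] using h2
  have hInt := integrableOn_Ioi_deriv_of_nonneg hcont hder hnn hlim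
  have hval := integral_Ioi_of_hasDerivAt_of_nonneg hcont hder hnn hlim
  rw [← ofReal_integral_eq_lintegral_ofReal hInt
    ((ae_restrict_iff' measurableSet_Ioi).2 (Filter.Eventually.of_forall hnn)), hval]
  apply ENNReal.ofReal_le_ofReal
  simp [hg, ne_of_gt hρ]

/-! ### The symmetrised Cauchy kernel -/

/-- After averaging over the rotations by `2π/m` and removing the circular mean, the Cauchy kernel
`(z - w)⁻¹` becomes this kernel. -/
def symKer (m : ℕ) (z w : ℂ) : ℂ :=
  if ‖w‖ < ‖z‖ then w ^ m / (z * (z ^ m - w ^ m)) else z ^ (m - 1) / (z ^ m - w ^ m)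

lemma measurable_symKer (m : ℕ) (z : ℂ) : Measurable (symKer m z) := by
  unfold symKer
  refine Measurable.ite ?_ ?_ ?_
  · exact measurableSet_lt measurable_norm measurable_const
  · fun_prop
  · fun_prop

lemma circleMap_pow_eq (r θ : ℝ) (m : ℕ) :
    circleMap 0 r θ ^ m = r ^ m * Complex.exp ((m * θ : ℝ) * Complex.I) := by
  rw [circleMap, zero_add, mul_pow, ← Complex.exp_nat_mul]
  push_cast
  ring_nf

lemma norm_symKer_inner {m : ℕ} {z : ℂ} (hz : z ≠ 0) {r : ℝ} (hr : 0 < r) (hrz : r < ‖z‖) (θ : ℝ) :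
    ‖symKer m z (circleMap 0 r θ)‖ = (r / ‖z‖) ^ m * ‖z‖⁻¹ *
      ‖1 - (r / z) ^ m * Complex.exp ((m * θ : ℝ) * Complex.I)‖⁻¹ := by
  have h1 : ‖circleMap 0 r θ‖ = r := by simp [abs_of_pos hr]
  rw [symKer, h1, if_pos hrz, norm_div, norm_pow, h1, norm_mul, circleMap_pow_eq]
  have h2 : z ^ m - r ^ m * Complex.exp ((m * θ : ℝ) * Complex.I) =
      z ^ m * (1 - (r / z) ^ m * Complex.exp ((m * θ : ℝ) * Complex.I)) := by
    rw [div_pow]; field_simp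
  rw [h2, norm_mul, norm_pow, div_pow]
  have : ‖z‖ ≠ 0 := norm_ne_zero_iff.2 hz
  simp only [div_eq_mul_inv, mul_inv]
  ring

/-- The conjugate puts the norm into the form `‖1 - a e^{imθ}‖⁻¹` treated by `angular_integral_le`. -/
lemma norm_symKer_outer {m : ℕ} {z : ℂ} {r : ℝ} (hr : 0 < r) (hrz : ‖z‖ < r)
    (θ : ℝ) :
    ‖symKer m z (circleMap 0 r θ)‖ = ‖z‖ ^ (m - 1) * (r ^ m)⁻¹ *
      ‖1 - (starRingEnd ℂ ((z / r) ^ m)) * Complex.exp ((m * θ : ℝ) * Complex.I)‖⁻¹ := by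
  have h1 : ‖circleMap 0 r θ‖ = r := by simp [abs_of_pos hr]
  have hr' : (r : ℂ) ≠ 0 := by exact_mod_cast hr.ne'
  rw [symKer, h1, if_neg hrz.not_gt, norm_div, norm_pow, circleMap_pow_eq]
  set E := Complex.exp ((m * θ : ℝ) * Complex.I) with hE
  have hE1 : ‖E‖ = 1 := Complex.norm_exp_ofReal_mul_I _
  have hEc : starRingEnd ℂ E = E⁻¹ := by
    rw [hE, ← Complex.exp_conj, ← Complex.exp_neg]
    congr 1
    simp
  have hE0 : E ≠ 0 := Complex.exp_ne_zero _
  have h2 : z ^ m - r ^ m * E = -(r ^ m * E) * (1 - (z / r) ^ m * E⁻¹) := by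
    rw [div_pow]; field_simp; ring
  have h3 : ‖1 - (z / r) ^ m * E⁻¹‖ = ‖1 - (starRingEnd ℂ ((z / r) ^ m)) * E‖ := by
    rw [← Complex.norm_conj, map_sub, map_one, map_mul, ← hEc, Complex.conj_conj]
  rw [h2, norm_mul, h3, norm_neg, norm_mul, hE1, mul_one, norm_pow, Complex.norm_real,
    Real.norm_of_nonneg hr.le]
  simp only [div_eq_mul_inv, mul_inv]
  ring

/-- The `L¹` bound carrying the decay in `m`: the symmetrised kernel has total mass `O(|z|/m)`. -/
lemma lintegral_symKer_le {m : ℕ} (hm : 3 ≤ m) {z : ℂ} (hz : z ≠ 0) :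
    ∫⁻ w, ENNReal.ofReal ‖symKer m z w‖ ≤ ENNReal.ofReal (32 * π * ‖z‖ / m) := by
  set ρ := ‖z‖ with hρ
  have hρ0 : 0 < ρ := norm_pos_iff.2 hz
  have hm0 : (0 : ℝ) < m := by positivity
  rw [lintegral_polar (by have := measurable_symKer m z; fun_prop)]
  have hin : ∫⁻ r in Ioo 0 ρ, ENNReal.ofReal r *
      ∫⁻ θ in Ioo (-π) π, ENNReal.ofReal ‖symKer m z (circleMap 0 r θ)‖ ≤
      ENNReal.ofReal (4 * π) * ENNReal.ofReal (2 * ρ / m) := by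
    refine le_trans ?_ (mul_le_mul_right (radial_inner (m := m) (by omega) hρ0) _)
    rw [← lintegral_const_mul _ (by fun_prop)]
    refine setLIntegral_mono (by fun_prop) fun r hr => ?_
    have hr0 := hr.1
    have hlt : (r / ρ) ^ m < 1 := pow_lt_one₀ (div_nonneg hr.1.le hρ0.le)
      ((div_lt_one hρ0).2 hr.2) (by omega)
    have ha : ‖((r : ℂ) / z) ^ m‖ = (r / ρ) ^ m := by
      rw [norm_pow, norm_div, Complex.norm_real, Real.norm_of_nonneg hr0.le]
    simp_rw [norm_symKer_inner hz hr0 hr.2, ← hρ]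
    have hc : 0 ≤ (r / ρ) ^ m * ρ⁻¹ := by positivity
    simp_rw [ENNReal.ofReal_mul hc]
    rw [lintegral_const_mul' _ _ ENNReal.ofReal_ne_top, ← mul_assoc, ← ENNReal.ofReal_mul hr0.le]
    refine (mul_le_mul_right (angular_integral_le (by omega) (by rw [ha]; exact hlt.ne)) _).trans ?_
    rw [ha, ← ENNReal.ofReal_mul (by positivity), ← ENNReal.ofReal_mul (by positivity)]
    apply ENNReal.ofReal_le_ofReal
    rw [abs_of_pos (by linarith)]
    have hle : r * ((r / ρ) ^ m * ρ⁻¹) ≤ (r / ρ) ^ (m - 1) := by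
      have : r * ((r / ρ) ^ m * ρ⁻¹) = (r / ρ) ^ (m + 1) := by
        rw [pow_succ]; field_simp
      rw [this]
      exact pow_le_pow_of_le_one (by positivity) ((div_lt_one hρ0).2 hr.2).le (by omega)
    calc _ ≤ (r / ρ) ^ (m - 1) * (4 * π * (√(1 - (r / ρ) ^ m))⁻¹) := by gcongr
      _ = _ := by ring
  have hout : ∫⁻ r in Ioi ρ, ENNReal.ofReal r *
      ∫⁻ θ in Ioo (-π) π, ENNReal.ofReal ‖symKer m z (circleMap 0 r θ)‖ ≤
      ENNReal.ofReal (4 * π) * ENNReal.ofReal (2 * ρ / (m - 2 : ℕ)) := by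
    refine le_trans ?_ (mul_le_mul_right (radial_outer (k := m - 2) (by omega) hρ0) _)
    rw [← lintegral_const_mul _ (by fun_prop)]
    refine setLIntegral_mono (by fun_prop) fun r hr => ?_
    have hr0 : 0 < r := hρ0.trans hr
    have hle1 : ρ / r < 1 := (div_lt_one hr0).2 hr
    have hlt : (ρ / r) ^ (m - 2) < 1 := pow_lt_one₀ (by positivity) hle1 (by omega)
    have hle2 : (ρ / r) ^ m ≤ (ρ / r) ^ (m - 2) :=
      pow_le_pow_of_le_one (by positivity) hle1.le (by omega)
    have ha : ‖starRingEnd ℂ ((z / (r : ℂ)) ^ m)‖ = (ρ / r) ^ m := by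
      rw [Complex.norm_conj, norm_pow, norm_div, Complex.norm_real, Real.norm_of_nonneg hr0.le]
    simp_rw [norm_symKer_outer hr0 hr, ← hρ]
    have hc : 0 ≤ ρ ^ (m - 1) * (r ^ m)⁻¹ := by positivity
    simp_rw [ENNReal.ofReal_mul hc]
    rw [lintegral_const_mul' _ _ ENNReal.ofReal_ne_top, ← mul_assoc, ← ENNReal.ofReal_mul hr0.le]
    refine (mul_le_mul_right (angular_integral_le (by omega)
      (by rw [ha]; exact (hle2.trans_lt hlt).ne)) _).trans ?_
    rw [ha, ← ENNReal.ofReal_mul (by positivity), ← ENNReal.ofReal_mul (by positivity)]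
    apply ENNReal.ofReal_le_ofReal
    rw [abs_of_pos (by linarith)]
    have hle : r * (ρ ^ (m - 1) * (r ^ m)⁻¹) = (ρ / r) ^ (m - 2 + 1) := by
      obtain ⟨j, rfl⟩ : ∃ j, m = j + 2 := ⟨m - 2, by omega⟩
      rw [show j + 2 - 1 = j + 1 by omega, show j + 2 - 2 + 1 = j + 1 by omega, div_pow,
        pow_succ r (j + 1)]
      field_simp
    rw [hle]
    have : (√(1 - (ρ / r) ^ m))⁻¹ ≤ (√(1 - (ρ / r) ^ (m - 2)))⁻¹ := by
      apply inv_anti₀ (Real.sqrt_pos.2 (by linarith))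
      apply Real.sqrt_le_sqrt
      linarith
    calc _ ≤ (ρ / r) ^ (m - 2 + 1) * (4 * π * (√(1 - (ρ / r) ^ (m - 2)))⁻¹) := by gcongr
      _ = _ := by ring
  rw [← Ioc_union_Ioi_eq_Ioi hρ0.le, lintegral_union measurableSet_Ioi
    (Set.disjoint_left.2 fun x hx hx' => not_lt.2 hx.2 hx'),
    ← Measure.restrict_congr_set Ioo_ae_eq_Ioc]
  refine (add_le_add hin hout).trans ?_
  rw [← ENNReal.ofReal_mul (by positivity), ← ENNReal.ofReal_mul (by positivity),
    ← ENNReal.ofReal_add (by positivity) (by positivity)]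
  apply ENNReal.ofReal_le_ofReal
  have hm3 : (3 : ℝ) ≤ m := by exact_mod_cast hm
  rw [Nat.cast_sub (by omega), Nat.cast_ofNat]
  have h2 : (0 : ℝ) < m - 2 := by linarith
  have h3 : 2 * ρ / (m - 2) ≤ 6 * ρ / m := by
    rw [div_le_div_iff₀ h2 hm0]
    nlinarith
  calc _ ≤ 4 * π * (2 * ρ / m) + 4 * π * (6 * ρ / m) := by gcongr
    _ = _ := by ring

/-! ### Local integrability of the Cauchy kernel -/

/-- The singularity `|z - w|⁻¹` is integrable on disks, with an explicit bound that is uniform in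
`z` on bounded sets. -/
lemma lintegral_inv_norm_ball_le (z : ℂ) {R : ℝ} (hR : 0 < R) :
    ∫⁻ w in Metric.ball (0 : ℂ) R, ENNReal.ofReal ‖z - w‖⁻¹ ≤
      ENNReal.ofReal (2 * π * (R + ‖z‖)) := by
  set R' := R + ‖z‖
  have hR' : 0 ≤ R' := by positivity
  set J : ℂ → ENNReal := (Metric.ball (0 : ℂ) R').indicator fun u => ENNReal.ofReal ‖u‖⁻¹ with hJ
  have hJm : Measurable J := Measurable.indicator (by fun_prop) measurableSet_ball
  calc ∫⁻ w in Metric.ball (0 : ℂ) R, ENNReal.ofReal ‖z - w‖⁻¹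
      ≤ ∫⁻ w in Metric.ball (0 : ℂ) R, J (z - w) := by
        refine setLIntegral_mono (by fun_prop) fun w hw => ?_
        have hw' : ‖w‖ < R := by simpa using hw
        have : z - w ∈ Metric.ball (0 : ℂ) R' := by
          rw [mem_ball_zero_iff]
          exact (norm_sub_le _ _).trans_lt (by simp only [R']; linarith)
        rw [hJ, indicator_of_mem this]
    _ ≤ ∫⁻ w, J (z - w) := setLIntegral_le_lintegral _ _
    _ = ∫⁻ w, J w := lintegral_sub_left_eq_self J z
    _ = ∫⁻ r in Ioi (0 : ℝ), ENNReal.ofReal r * ∫⁻ θ in Ioo (-π) π, J (circleMap 0 r θ) :=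
        lintegral_polar hJm
    _ ≤ ∫⁻ r in Ioi (0 : ℝ), (Ioo 0 R').indicator (fun _ => ENNReal.ofReal (2 * π)) r := by
        refine setLIntegral_mono (Measurable.indicator (by fun_prop) measurableSet_Ioo)
          fun r hr => ?_
        have hr0 : 0 < r := hr
        have h1 : ∀ θ, ‖circleMap 0 r θ‖ = r := fun θ => by simp [abs_of_pos hr0]
        by_cases h : r < R'
        · have h2 : ∀ θ, J (circleMap 0 r θ) = ENNReal.ofReal r⁻¹ := fun θ => by
            rw [hJ, indicator_of_mem (by rw [mem_ball_zero_iff, h1]; exact h), h1]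
          simp_rw [h2]
          rw [indicator_of_mem (show r ∈ Ioo 0 R' from ⟨hr0, h⟩), setLIntegral_const,
            Real.volume_Ioo, ← mul_assoc, ← ENNReal.ofReal_mul hr0.le, mul_inv_cancel₀ hr0.ne',
            ENNReal.ofReal_one, one_mul]
          exact le_of_eq (by congr 1; ring)
        · have h2 : ∀ θ, J (circleMap 0 r θ) = 0 := fun θ => by
            rw [hJ, indicator_of_notMem (by rw [mem_ball_zero_iff, h1]; exact h)]
          simp [h2]
    _ ≤ ∫⁻ r, (Ioo 0 R').indicator (fun _ => ENNReal.ofReal (2 * π)) r :=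
        setLIntegral_le_lintegral _ _
    _ = ENNReal.ofReal (2 * π * R') := by
        rw [lintegral_indicator measurableSet_Ioo, setLIntegral_const, Real.volume_Ioo,
          ← ENNReal.ofReal_mul (by positivity), sub_zero]

lemma integrableOn_inv_norm_ball (z : ℂ) {R : ℝ} (hR : 0 < R) :
    IntegrableOn (fun w => ‖z - w‖⁻¹) (Metric.ball (0 : ℂ) R) := by
  refine ⟨by fun_prop, ?_⟩
  rw [hasFiniteIntegral_iff_ofReal (Filter.Eventually.of_forall fun w => by positivity)]
  exact (lintegral_inv_norm_ball_le z hR).trans_lt ENNReal.ofReal_lt_top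

/-! ### Densities with rotational symmetry and zero means -/

/-- The properties of the density `1_D - g` that matter: it is measurable, bounded by `1`, supported
in the disk of radius `R`, invariant under the rotation by `2π/m`, and has mean zero on every disk
centred at the origin. -/
structure SymDensity (m : ℕ) (R : ℝ) (F : ℂ → ℝ) : Prop where
  meas : Measurable F
  bound : ∀ w, |F w| ≤ 1
  supp : ∀ w, R ≤ ‖w‖ → F w = 0
  rot : ∀ w, F (Complex.exp (2 * π * Complex.I / m) * w) = F w
  mean : ∀ ρ, ∫ w in Metric.ball (0 : ℂ) ρ, F w = 0

/-- Averaging the Cauchy kernel over the rotations by `2π/m` turns `(z - w)⁻¹` into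
`z^(m-1) / (z^m - w^m)`: expanding by the geometric sum, only the term of degree `0` in `w` survives
summation over the `m`-th roots of unity. -/
lemma sum_cauchy_rotations {m : ℕ} (hm : 1 ≤ m) {ζ z w : ℂ} (hζ : IsPrimitiveRoot ζ m)
    (hne : z ^ m ≠ w ^ m) :
    ∑ k ∈ Finset.range m, (z - ζ ^ k * w)⁻¹ = m * (z ^ (m - 1) / (z ^ m - w ^ m)) := by
  have hd : z ^ m - w ^ m ≠ 0 := sub_ne_zero.2 hne
  have h1 : ∀ k ∈ Finset.range m, (z - ζ ^ k * w)⁻¹ =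
      (∑ j ∈ Finset.range m, (ζ ^ k * w) ^ j * z ^ (m - 1 - j)) / (z ^ m - w ^ m) := by
    intro k _
    have hg := (Commute.all (ζ ^ k * w) z).geom_sum₂_mul m
    have hp : (ζ ^ k * w) ^ m = w ^ m := by
      rw [mul_pow, ← pow_mul, mul_comm k m, pow_mul, hζ.pow_eq_one, one_pow, one_mul]
    rw [hp] at hg
    have hne' : z - ζ ^ k * w ≠ 0 := by
      intro h0
      apply hd
      rw [← neg_sub, ← hg, ← neg_sub z, h0]; simp
    rw [inv_eq_one_div, div_eq_div_iff hne' hd]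
    linear_combination hg
  rw [Finset.sum_congr rfl h1, ← Finset.sum_div, ← mul_div_assoc]
  congr 1
  rw [Finset.sum_comm, ← Finset.sum_erase_add _ _ (Finset.mem_range.2 (show 0 < m by omega))]
  rw [Finset.sum_eq_zero]
  · simp
  · intro j hj
    have hj0 : j ≠ 0 := (Finset.mem_erase.1 hj).1
    have hjm : j < m := Finset.mem_range.1 (Finset.mem_erase.1 hj).2
    have hne1 : ζ ^ j ≠ 1 := hζ.pow_ne_one_of_pos_of_lt hj0 hjm
    have hs : ∑ k ∈ Finset.range m, (ζ ^ j) ^ k = 0 := by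
      rw [geom_sum_eq hne1, ← pow_mul, mul_comm, pow_mul, hζ.pow_eq_one]; simp
    calc ∑ k ∈ Finset.range m, (ζ ^ k * w) ^ j * z ^ (m - 1 - j)
        = (∑ k ∈ Finset.range m, (ζ ^ j) ^ k) * (w ^ j * z ^ (m - 1 - j)) := by
          rw [Finset.sum_mul]
          refine Finset.sum_congr rfl fun k _ => ?_
          rw [mul_pow, ← pow_mul, ← pow_mul, mul_comm k j]; ring
      _ = 0 := by rw [hs, zero_mul]

namespace SymDensity

variable {m : ℕ} {R : ℝ} {F : ℂ → ℝ}

lemma abs_le_indicator (hF : SymDensity m R F) (w : ℂ) :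
    |F w| ≤ (Metric.ball (0 : ℂ) R).indicator (fun _ => 1) w := by
  by_cases h : w ∈ Metric.ball (0 : ℂ) R
  · rw [indicator_of_mem h]; exact hF.bound w
  · rw [indicator_of_notMem h, hF.supp w (by simpa using h)]; simp

lemma integrable (hF : SymDensity m R F) : Integrable F := by
  refine Integrable.mono' (g := (Metric.ball (0 : ℂ) R).indicator (fun _ => 1)) ?_
    hF.meas.aestronglyMeasurable (Filter.Eventually.of_forall hF.abs_le_indicator)
  rw [integrable_indicator_iff measurableSet_ball]
  exact integrableOn_const (by exact measure_ball_lt_top.ne)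

lemma integrable_cauchy (hF : SymDensity m R F) (hR : 0 < R) (z : ℂ) :
    Integrable fun w => (F w : ℂ) * (z - w)⁻¹ := by
  have hm := hF.meas
  refine Integrable.mono'
    ((integrable_indicator_iff measurableSet_ball).2 (integrableOn_inv_norm_ball z hR))
    (by fun_prop) (Filter.Eventually.of_forall fun w => ?_)
  rw [norm_mul, norm_inv, Complex.norm_real, Real.norm_eq_abs]
  refine (mul_le_mul_of_nonneg_right (hF.abs_le_indicator w) (by positivity)).trans ?_
  by_cases h : w ∈ Metric.ball (0 : ℂ) R
  · simp [indicator_of_mem h]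
  · simp [indicator_of_notMem h]

lemma integrable_log (hF : SymDensity m R F) (hR : 0 < R) (z : ℂ) :
    Integrable fun w => F w * Real.log ‖z - w‖ := by
  have hm := hF.meas
  have hi : IntegrableOn (fun w => ‖z - w‖⁻¹ + (‖z‖ + R)) (Metric.ball (0 : ℂ) R) :=
    (integrableOn_inv_norm_ball z hR).add (integrableOn_const (by exact measure_ball_lt_top.ne))
  refine Integrable.mono' ((integrable_indicator_iff measurableSet_ball).2 hi)
    (Measurable.aestronglyMeasurable (by fun_prop)) (Filter.Eventually.of_forall fun w => ?_)
  rw [norm_mul, Real.norm_eq_abs, Real.norm_eq_abs]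
  refine (mul_le_mul_of_nonneg_right (hF.abs_le_indicator w) (abs_nonneg _)).trans ?_
  by_cases h : w ∈ Metric.ball (0 : ℂ) R
  · rw [indicator_of_mem h, indicator_of_mem h, one_mul]
    have hw : ‖w‖ < R := by simpa using h
    have h1 : ‖z - w‖ ≤ ‖z‖ + R := (norm_sub_le _ _).trans (by linarith)
    have h2 : 0 ≤ ‖z - w‖⁻¹ := by positivity
    -- `|log s| ≤ s + s⁻¹` for `s > 0`
    rcases (norm_nonneg (z - w)).eq_or_lt with h0 | h0
    · rw [← h0]; simp; positivity
    · rw [abs_le]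
      have h3 := Real.log_le_sub_one_of_pos h0
      have h4 := Real.log_le_sub_one_of_pos (inv_pos.2 h0)
      rw [Real.log_inv] at h4
      constructor <;> linarith
  · simp [indicator_of_notMem h]

/-- Rotational symmetry and zero means turn the Cauchy kernel into `symKer`. -/
lemma cauchy_eq_symKer (hF : SymDensity m R F) (hm : 1 ≤ m) (hR : 0 < R) {z : ℂ} (hz : z ≠ 0) :
    ∫ w, (F w : ℂ) * (z - w)⁻¹ = ∫ w, (F w : ℂ) * symKer m z w := by
  set ζ := Complex.exp (2 * π * Complex.I / m) with hζdef
  have hζ : IsPrimitiveRoot ζ m := Complex.isPrimitiveRoot_exp m (by omega)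
  have hm0 : (m : ℂ) ≠ 0 := by exact_mod_cast (show m ≠ 0 by omega)
  have hrotk : ∀ k : ℕ, ∀ w, F (ζ ^ k * w) = F w := by
    intro k
    induction k with
    | zero => simp
    | succ k ih => intro w; rw [pow_succ', mul_assoc, hF.rot, ih]
  have hnorm : ∀ k : ℕ, ‖ζ ^ k‖ = 1 := fun k => by
    rw [norm_pow, hζ.norm'_eq_one (by omega), one_pow]
  -- each rotation contributes the same integral
  have hpres : ∀ k : ℕ, ∃ e : ℂ ≃ₗᵢ[ℝ] ℂ, ∀ w, e w = ζ ^ k * w := fun k =>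
    ⟨rotation ⟨ζ ^ k, mem_sphere_zero_iff_norm.2 (hnorm k)⟩, fun w => rotation_apply _ w⟩
  have hI : ∀ k : ℕ, Integrable (fun w => (F w : ℂ) * (z - ζ ^ k * w)⁻¹) ∧
      ∫ w, (F w : ℂ) * (z - ζ ^ k * w)⁻¹ = ∫ w, (F w : ℂ) * (z - w)⁻¹ := by
    intro k
    obtain ⟨e, he⟩ := hpres k
    have hc : (fun w => (F w : ℂ) * (z - ζ ^ k * w)⁻¹) =
        (fun w => (F w : ℂ) * (z - w)⁻¹) ∘ e := by
      funext w; simp [he, hrotk]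
    rw [hc]
    refine ⟨e.measurePreserving.integrable_comp_of_integrable (hF.integrable_cauchy hR z), ?_⟩
    exact e.measurePreserving.integral_comp e.toHomeomorph.measurableEmbedding
      (fun w => (F w : ℂ) * (z - w)⁻¹)
  have hae : ∀ᵐ w : ℂ, z ^ m ≠ w ^ m := by
    have hfin : {w : ℂ | z ^ m = w ^ m}.Finite := by
      refine (Polynomial.nthRoots m (z ^ m)).toFinset.finite_toSet.subset fun w hw => ?_
      simp [Polynomial.mem_nthRoots (show 0 < m by omega)]
      exact hw.symm
    rw [ae_iff]
    simpa using hfin.measure_zero volume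
  have hsum : (fun w => ∑ k ∈ Finset.range m, (F w : ℂ) * (z - ζ ^ k * w)⁻¹) =ᵐ[volume]
      fun w => m * ((F w : ℂ) * (z ^ (m - 1) / (z ^ m - w ^ m))) := by
    filter_upwards [hae] with w hw
    rw [← Finset.mul_sum, sum_cauchy_rotations hm hζ hw]; ring
  have hint1 : Integrable fun w => (F w : ℂ) * (z ^ (m - 1) / (z ^ m - w ^ m)) := by
    have := (integrable_finsetSum (Finset.range m) fun k _ => (hI k).1).congr hsum
    have := this.const_mul ((m : ℂ)⁻¹)
    refine this.congr (Filter.Eventually.of_forall fun w => ?_)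
    simp only
    field_simp
  have hV : ∫ w, (F w : ℂ) * (z - w)⁻¹ = ∫ w, (F w : ℂ) * (z ^ (m - 1) / (z ^ m - w ^ m)) := by
    have h1 := integral_congr_ae hsum
    rw [integral_finsetSum _ fun k _ => (hI k).1, integral_const_mul,
      Finset.sum_congr rfl fun k _ => (hI k).2, Finset.sum_const, Finset.card_range,
      nsmul_eq_mul] at h1
    exact mul_left_cancel₀ hm0 h1
  -- the circular mean of the averaged kernel is `z⁻¹` inside the disk of radius `‖z‖`
  have hball : ∫ w, (Metric.ball (0 : ℂ) ‖z‖).indicator (fun w => (F w : ℂ) * z⁻¹) w = 0 := by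
    rw [integral_indicator measurableSet_ball, integral_mul_const, integral_complex_ofReal,
      hF.mean]
    simp
  have hint2 : Integrable ((Metric.ball (0 : ℂ) ‖z‖).indicator (fun w => (F w : ℂ) * z⁻¹)) :=
    (hF.integrable.ofReal.mul_const _).indicator measurableSet_ball
  rw [hV, ← sub_zero (∫ w, (F w : ℂ) * (z ^ (m - 1) / (z ^ m - w ^ m))), ← hball,
    ← integral_sub hint1 hint2]
  refine integral_congr_ae ?_
  filter_upwards [hae] with w hw
  have hd : z ^ m - w ^ m ≠ 0 := sub_ne_zero.2 hw
  unfold symKer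
  by_cases h : ‖w‖ < ‖z‖
  · rw [if_pos h, indicator_of_mem (by simpa using h), ← mul_sub]
    congr 1
    obtain ⟨j, rfl⟩ : ∃ j, m = j + 1 := ⟨m - 1, by omega⟩
    rw [Nat.add_sub_cancel]
    field_simp
    ring
  · rw [if_neg h, indicator_of_notMem (by simpa using h), sub_zero]

/-- The Cauchy transform of `F` is, up to conjugation and a constant, the gradient of its
logarithmic potential. -/
lemma norm_cauchy_le (hF : SymDensity m R F) (hm : 3 ≤ m) (hR : 0 < R) {z : ℂ} (hz : z ≠ 0) :
    ‖∫ w, (F w : ℂ) * (z - w)⁻¹‖ ≤ 32 * π * ‖z‖ / m := by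
  rw [hF.cauchy_eq_symKer (by omega) hR hz]
  have h1 := enorm_integral_le_lintegral_enorm (μ := volume) fun w => (F w : ℂ) * symKer m z w
  have h2 : ∫⁻ w, ‖(F w : ℂ) * symKer m z w‖ₑ ≤ ENNReal.ofReal (32 * π * ‖z‖ / m) := by
    refine le_trans (lintegral_mono fun w => ?_) (lintegral_symKer_le hm hz)
    rw [← ofReal_norm]
    apply ENNReal.ofReal_le_ofReal
    rw [norm_mul, Complex.norm_real, Real.norm_eq_abs]
    exact mul_le_of_le_one_left (norm_nonneg _) (hF.bound w)
  have h3 := h1.trans h2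
  rw [← ofReal_norm] at h3
  exact (ENNReal.ofReal_le_ofReal_iff (by positivity)).1 h3

end SymDensity

lemma log_norm_sub_eq_integral {p h : ℂ} (hp : ∀ t ∈ Icc (0 : ℝ) 1, p + t * h ≠ 0) :
    Real.log ‖p + h‖ - Real.log ‖p‖ = ∫ t in (0 : ℝ)..1, (h * (p + t * h)⁻¹).re := by
  have h01 : uIcc (0 : ℝ) 1 = Icc 0 1 := uIcc_of_le zero_le_one
  have hder : ∀ t ∈ uIcc (0 : ℝ) 1,
      HasDerivAt (fun t : ℝ => Real.log ‖p + t * h‖) ((h * (p + t * h)⁻¹).re) t := by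
    intro t ht
    rw [h01] at ht
    have hne := hp t ht
    have hN : ∀ t : ℝ, Complex.normSq (p + t * h) =
        (p.re + t * h.re) ^ 2 + (p.im + t * h.im) ^ 2 := by
      intro t; simp [Complex.normSq_apply]; ring
    have hfun : (fun t : ℝ => Real.log ‖p + t * h‖) = fun t : ℝ =>
        (1 / 2) * Real.log ((p.re + t * h.re) ^ 2 + (p.im + t * h.im) ^ 2) := by
      funext t
      rw [← hN, Complex.normSq_eq_norm_sq, Real.log_pow]; push_cast; ring
    rw [hfun]
    have hpos : (p.re + t * h.re) ^ 2 + (p.im + t * h.im) ^ 2 ≠ 0 := by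
      rw [← hN]; exact (Complex.normSq_pos.2 hne).ne'
    have h1 : HasDerivAt (fun t : ℝ => p.re + t * h.re) h.re t := by
      simpa using ((hasDerivAt_id t).mul_const h.re).const_add p.re
    have h2 : HasDerivAt (fun t : ℝ => p.im + t * h.im) h.im t := by
      simpa using ((hasDerivAt_id t).mul_const h.im).const_add p.im
    have h3 := (((h1.pow 2).add (h2.pow 2)).log hpos).const_mul (1 / 2)
    refine h3.congr_deriv ?_
    rw [Complex.mul_re, Complex.inv_re, Complex.inv_im, hN]
    simp
    field_simp
    ring
  have hcont : ContinuousOn (fun t : ℝ => (h * (p + t * h)⁻¹).re) (uIcc 0 1) := by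
    rw [h01]
    refine Complex.continuous_re.comp_continuousOn (continuousOn_const.mul ?_)
    exact ContinuousOn.inv₀ (by fun_prop) hp
  rw [intervalIntegral.integral_eq_sub_of_hasDerivAt hder hcont.intervalIntegrable]
  simp

/-- Almost every `w` lies off the segment from `z` to `z + h`, where `log ‖· - w‖` is singular. -/
lemma ae_not_mem_segment (z h : ℂ) : ∀ᵐ w : ℂ, ∀ t ∈ Icc (0 : ℝ) 1, (z - w) + t * h ≠ 0 := by
  have hne : AffineSubspace.mk' z (Submodule.span ℝ {h}) ≠ ⊤ := by
    intro htop
    have h1 : Submodule.span ℝ {h} = ⊤ := by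
      rw [← AffineSubspace.direction_mk' z (Submodule.span ℝ {h}), htop,
        AffineSubspace.direction_top]
    have h2 := finrank_span_le_card (R := ℝ) ({h} : Set ℂ)
    rw [h1, finrank_top, Complex.finrank_real_complex] at h2
    simp at h2
  have h0 := Measure.addHaar_affineSubspace (volume : Measure ℂ) _ hne
  rw [measure_eq_zero_iff_ae_notMem] at h0
  filter_upwards [h0] with w hw t _ h1
  apply hw
  rw [SetLike.mem_coe, AffineSubspace.mem_mk', vsub_eq_sub, Submodule.mem_span_singleton]
  refine ⟨t, ?_⟩
  rw [Complex.real_smul]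
  linear_combination h1

/-- Lipschitz-type bound for the logarithmic potential, obtained by integrating the Cauchy
transform along the segment from `z` to `z + h`. -/
lemma SymDensity.potential_sub_le {m : ℕ} {R : ℝ} {F : ℂ → ℝ} (hF : SymDensity m R F)
    (hm : 3 ≤ m) (hR : 0 < R) (z h : ℂ) :
    |(∫ w, F w * Real.log ‖z + h - w‖) - ∫ w, F w * Real.log ‖z - w‖| ≤
      32 * π * (‖z‖ + ‖h‖) / m * ‖h‖ := by
  have hFm := hF.meas
  rcases eq_or_ne h 0 with rfl | hh
  · simp
  set f : ℝ → ℂ → ℝ := fun t w => F w * (h * (z + t * h - w)⁻¹).re with hf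
  have hfC : ∀ t w, f t w = (h * ((F w : ℂ) * (z + t * h - w)⁻¹)).re := by
    intro t w
    simp only [hf]
    rw [mul_left_comm, Complex.re_ofReal_mul]
  have hfm : Measurable (Function.uncurry f) := by
    simp only [hf, Function.uncurry_def]
    fun_prop
  have hInt : Integrable (Function.uncurry f)
      ((volume.restrict (Ioc (0 : ℝ) 1)).prod (volume : Measure ℂ)) := by
    refine ⟨hfm.aestronglyMeasurable, ?_⟩
    rw [HasFiniteIntegral, lintegral_prod _ (by fun_prop)]
    have hb : ∀ t ∈ Ioc (0 : ℝ) 1, ∫⁻ w, ‖Function.uncurry f (t, w)‖ₑ ≤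
        ENNReal.ofReal ‖h‖ * ENNReal.ofReal (2 * π * (R + (‖z‖ + ‖h‖))) := by
      intro t ht
      have hzt : ‖z + t * h‖ ≤ ‖z‖ + ‖h‖ := by
        refine (norm_add_le _ _).trans ?_
        rw [norm_mul, Complex.norm_real, Real.norm_of_nonneg ht.1.le]
        gcongr
        exact mul_le_of_le_one_left (norm_nonneg _) ht.2
      calc ∫⁻ w, ‖Function.uncurry f (t, w)‖ₑ
          ≤ ∫⁻ w, ENNReal.ofReal ‖h‖ * (Metric.ball (0 : ℂ) R).indicator
              (fun w => ENNReal.ofReal ‖z + t * h - w‖⁻¹) w := by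
            refine lintegral_mono fun w => ?_
            simp only [Function.uncurry_apply_pair]
            by_cases hw : w ∈ Metric.ball (0 : ℂ) R
            · rw [indicator_of_mem hw, ← ENNReal.ofReal_mul (norm_nonneg _), ← ofReal_norm]
              apply ENNReal.ofReal_le_ofReal
              rw [Real.norm_eq_abs, hfC]
              refine (Complex.abs_re_le_norm _).trans ?_
              rw [norm_mul, norm_mul, norm_inv, Complex.norm_real, Real.norm_eq_abs]
              gcongr
              exact mul_le_of_le_one_left (by positivity) (hF.bound w)
            · simp [hf, hF.supp w (by simpa using hw)]
        _ = ENNReal.ofReal ‖h‖ * ∫⁻ w in Metric.ball (0 : ℂ) R,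
              ENNReal.ofReal ‖z + t * h - w‖⁻¹ := by
            rw [lintegral_const_mul' _ _ ENNReal.ofReal_ne_top,
              lintegral_indicator measurableSet_ball]
        _ ≤ _ := by
            refine mul_le_mul_right ((lintegral_inv_norm_ball_le _ hR).trans ?_) _
            apply ENNReal.ofReal_le_ofReal
            gcongr
    refine (setLIntegral_mono (by fun_prop) hb).trans_lt ?_
    rw [setLIntegral_const]
    simp [ENNReal.mul_lt_top_iff]
  have hdiff : (∫ w, F w * Real.log ‖z + h - w‖) - ∫ w, F w * Real.log ‖z - w‖ =
      ∫ w, ∫ t in Ioc (0 : ℝ) 1, f t w := by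
    rw [← integral_sub (hF.integrable_log hR _) (hF.integrable_log hR _)]
    refine integral_congr_ae ?_
    filter_upwards [ae_not_mem_segment z h] with w hw
    have h1 := log_norm_sub_eq_integral hw
    rw [← mul_sub, show z + h - w = z - w + h by ring, h1,
      intervalIntegral.integral_of_le zero_le_one, ← integral_const_mul]
    refine integral_congr_ae (Filter.Eventually.of_forall fun t => ?_)
    simp only [hf]
    rw [show z - w + t * h = z + t * h - w by ring]
  rw [hdiff, ← integral_integral_swap hInt, ← Real.norm_eq_abs]
  have hae : ∀ᵐ t : ℝ, z + t * h ≠ 0 := by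
    filter_upwards [Measure.ae_ne volume ((-z / h).re)] with t ht h0
    apply ht
    rw [show -z / h = (t : ℂ) by rw [div_eq_iff hh]; linear_combination -h0]
    simp
  have hb : ∀ᵐ t ∂(volume.restrict (Ioc (0 : ℝ) 1)),
      ‖∫ w, f t w‖ ≤ 32 * π * (‖z‖ + ‖h‖) / m * ‖h‖ := by
    rw [ae_restrict_iff' measurableSet_Ioc]
    filter_upwards [hae] with t ht ht01
    have hzt : ‖z + t * h‖ ≤ ‖z‖ + ‖h‖ := by
      refine (norm_add_le _ _).trans ?_
      rw [norm_mul, Complex.norm_real, Real.norm_of_nonneg ht01.1.le]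
      gcongr
      exact mul_le_of_le_one_left (norm_nonneg _) ht01.2
    have h1 : ∫ w, f t w = (h * ∫ w, (F w : ℂ) * (z + t * h - w)⁻¹).re := by
      simp_rw [hfC]
      rw [← integral_const_mul]
      exact integral_re ((hF.integrable_cauchy hR _).const_mul h)
    rw [h1, Real.norm_eq_abs]
    refine (Complex.abs_re_le_norm _).trans ?_
    rw [norm_mul, mul_comm]
    gcongr
    refine (hF.norm_cauchy_le hm hR ht).trans ?_
    gcongr
  have := norm_integral_le_of_norm_le_const hb
  simpa using this

/-! ### The density of a symmetric patch -/

/-- The isometric identification of the plane with `ℂ`. -/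
def toC : R2 ≃ₗᵢ[ℝ] ℂ := Complex.orthonormalBasisOneI.repr.symm

lemma toC_apply (x : R2) : toC x = x 0 + x 1 * Complex.I := by
  have := Complex.orthonormalBasisOneI.sum_repr_symm x
  rw [toC, ← this]
  simp [Fin.sum_univ_two]

lemma toC_rot (α : ℝ) (x : R2) : toC (rot α x) = Complex.exp (α * Complex.I) * toC x := by
  rw [toC_apply, toC_apply, rot, pt, Complex.exp_mul_I]
  apply Complex.ext
  · simp
  · simp; ring

/-- The angular measure of the circle of radius `r` inside `E`. -/
def angMeasure (E : Set ℂ) (r : ℝ) : ENNReal := volume (Ioo (-π) π ∩ circleMap 0 r ⁻¹' E)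

lemma angMeasure_le (E : Set ℂ) (r : ℝ) : angMeasure E r ≤ ENNReal.ofReal (2 * π) := by
  refine (measure_mono inter_subset_left).trans (le_of_eq ?_)
  rw [Real.volume_Ioo]; congr 1; ring

lemma measurable_angMeasure {E : Set ℂ} (hE : MeasurableSet E) : Measurable (angMeasure E) := by
  have hc : Measurable fun p : ℝ × ℝ => circleMap 0 p.1 p.2 := by
    unfold circleMap; fun_prop
  have hs : MeasurableSet {p : ℝ × ℝ | p.2 ∈ Ioo (-π) π ∧ circleMap 0 p.1 p.2 ∈ E} :=
    (measurable_snd measurableSet_Ioo).inter (hc hE)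
  exact measurable_measure_prodMk_left hs

lemma sliceg_eq {D : Set R2} (hD : MeasurableSet D) {w : ℂ} (hw : w ≠ 0) :
    sliceg D (toC.symm w) = (angMeasure (toC.symm ⁻¹' D) ‖w‖).toReal / (2 * π) := by
  have hw0 : 0 < ‖w‖ := norm_pos_iff.2 hw
  have hE : MeasurableSet (toC.symm ⁻¹' D) := toC.symm.continuous.measurable hD
  have h1 : μH[1] (Metric.sphere (0 : R2) ‖w‖ ∩ D) =
      μH[1] (Metric.sphere (0 : ℂ) ‖w‖ ∩ toC.symm ⁻¹' D) := by
    rw [← toC.symm.toIsometryEquiv.hausdorffMeasure_preimage]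
    congr 1
    ext y
    simp
  rw [sliceg, LinearIsometryEquiv.norm_map, h1, hausdorff_circle_inter hw0 hE, ENNReal.toReal_mul,
    ENNReal.toReal_ofReal hw0.le, angMeasure]
  field_simp

lemma sliceg_zero (D : Set R2) : sliceg D 0 = 0 := by simp [sliceg]

lemma sliceg_mem_Icc {D : Set R2} (hD : MeasurableSet D) (w : ℂ) :
    sliceg D (toC.symm w) ∈ Icc (0 : ℝ) 1 := by
  rcases eq_or_ne w 0 with rfl | hw
  · simp [sliceg_zero]
  · rw [sliceg_eq hD hw]
    have h := ENNReal.toReal_le_of_le_ofReal (by positivity)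
      (angMeasure_le (toC.symm ⁻¹' D) ‖w‖)
    exact ⟨by positivity, (div_le_one (by positivity)).2 h⟩

lemma measurable_sliceg {D : Set R2} (hD : MeasurableSet D) :
    Measurable fun w => sliceg D (toC.symm w) := by
  have hE : MeasurableSet (toC.symm ⁻¹' D) := toC.symm.continuous.measurable hD
  have h : (fun w => sliceg D (toC.symm w)) = fun w => if w = 0 then 0 else
      (angMeasure (toC.symm ⁻¹' D) ‖w‖).toReal / (2 * π) := by
    funext w
    split_ifs with hw
    · simp [hw, sliceg_zero]
    · exact sliceg_eq hD hw
  rw [h]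
  have := measurable_angMeasure hE
  exact Measurable.ite (measurableSet_singleton 0) measurable_const (by fun_prop)

/-- The slice function `g` has the same integral as `1_D` over each centred disk. -/
lemma integral_ball_sliceg {D : Set R2} (hD : MeasurableSet D) (ρ : ℝ) :
    ∫ w in Metric.ball (0 : ℂ) ρ, sliceg D (toC.symm w) =
      ∫ w in Metric.ball (0 : ℂ) ρ, D.indicator (fun _ => (1 : ℝ)) (toC.symm w) := by
  have hE : MeasurableSet (toC.symm ⁻¹' D) := toC.symm.continuous.measurable hD
  have hgm := measurable_sliceg hD
  have him : Measurable fun w => D.indicator (fun _ => (1 : ℝ)) (toC.symm w) :=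
    (measurable_const.indicator hD).comp toC.symm.continuous.measurable
  rw [integral_eq_lintegral_of_nonneg_ae
      (Filter.Eventually.of_forall fun w => (sliceg_mem_Icc hD w).1) hgm.aestronglyMeasurable,
    integral_eq_lintegral_of_nonneg_ae
      (Filter.Eventually.of_forall fun w => indicator_nonneg (fun _ _ => zero_le_one) _)
      him.aestronglyMeasurable]
  congr 1
  rw [← lintegral_indicator measurableSet_ball, ← lintegral_indicator measurableSet_ball,
    lintegral_polar (Measurable.indicator (by fun_prop) measurableSet_ball),
    lintegral_polar (Measurable.indicator (by fun_prop) measurableSet_ball)]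
  refine setLIntegral_congr_fun measurableSet_Ioi fun r hr => ?_
  have hr0 : 0 < r := hr
  have hn : ∀ θ, ‖circleMap 0 r θ‖ = r := fun θ => by simp [abs_of_pos hr0]
  congr 1
  by_cases h : r < ρ
  · have hmem : ∀ θ, circleMap 0 r θ ∈ Metric.ball (0 : ℂ) ρ := fun θ => by
      rw [mem_ball_zero_iff, hn]; exact h
    have h1 : ∀ θ, sliceg D (toC.symm (circleMap 0 r θ)) =
        (angMeasure (toC.symm ⁻¹' D) r).toReal / (2 * π) := fun θ => by
      rw [sliceg_eq hD (norm_pos_iff.1 (by rw [hn]; exact hr0)), hn]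
    have h2 : ∀ θ, ENNReal.ofReal (D.indicator (fun _ => (1 : ℝ)) (toC.symm (circleMap 0 r θ))) =
        (circleMap 0 r ⁻¹' (toC.symm ⁻¹' D)).indicator (fun _ => (1 : ENNReal)) θ := by
      intro θ
      by_cases hθ : toC.symm (circleMap 0 r θ) ∈ D
      · rw [indicator_of_mem hθ, indicator_of_mem (by exact hθ), ENNReal.ofReal_one]
      · rw [indicator_of_notMem hθ, indicator_of_notMem (by exact hθ), ENNReal.ofReal_zero]
    have hm : MeasurableSet (circleMap 0 r ⁻¹' (toC.symm ⁻¹' D)) :=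
      (continuous_circleMap 0 r).measurable hE
    simp_rw [indicator_of_mem (hmem _), h1, h2]
    rw [setLIntegral_const, lintegral_indicator hm, setLIntegral_one, Measure.restrict_apply hm,
      Real.volume_Ioo, ← ENNReal.ofReal_mul (by positivity), inter_comm, ← angMeasure,
      show (angMeasure (toC.symm ⁻¹' D) r).toReal / (2 * π) * (π - -π) =
        (angMeasure (toC.symm ⁻¹' D) r).toReal by field_simp; ring,
      ENNReal.ofReal_toReal (ne_top_of_le_ne_top ENNReal.ofReal_ne_top (angMeasure_le _ _))]
  · have hmem : ∀ θ, circleMap 0 r θ ∉ Metric.ball (0 : ℂ) ρ := fun θ => by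
      rw [mem_ball_zero_iff, hn]; exact h
    simp_rw [indicator_of_notMem (hmem _)]

/-- The density `1_D - g`, transported to `ℂ`, satisfies all the requirements of `SymDensity`. -/
lemma symDensity_patch {m : ℕ} {D : Set R2} (hD : IsOpen D)
    (hsym : MFoldSymmetric m D) {R : ℝ} (hR : D ⊆ Metric.ball 0 R) :
    SymDensity m R fun w =>
      D.indicator (fun _ => (1 : ℝ)) (toC.symm w) - sliceg D (toC.symm w) where
  meas := ((measurable_const.indicator hD.measurableSet).comp
    toC.symm.continuous.measurable).sub (measurable_sliceg hD.measurableSet)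
  bound w := by
    have h1 := sliceg_mem_Icc hD.measurableSet w
    rw [abs_le]
    by_cases h : toC.symm w ∈ D
    · rw [indicator_of_mem h]; constructor <;> linarith [h1.1, h1.2]
    · rw [indicator_of_notMem h]; constructor <;> linarith [h1.1, h1.2]
  supp w hw := by
    have h1 : toC.symm w ∉ D := fun h => by
      have := hR h
      rw [mem_ball_zero_iff, LinearIsometryEquiv.norm_map] at this
      linarith
    have h2 : Metric.sphere (0 : R2) ‖toC.symm w‖ ∩ D = ∅ := by
      ext y
      simp only [mem_inter_iff, mem_sphere_zero_iff_norm, LinearIsometryEquiv.norm_map,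
        mem_empty_iff_false, iff_false, not_and]
      intro hy hyD
      have := hR hyD
      rw [mem_ball_zero_iff] at this
      linarith
    rw [indicator_of_notMem h1, sliceg, h2]
    simp
  rot w := by
    have hrot : toC.symm (Complex.exp (2 * π * Complex.I / m) * w) =
        rot (2 * π / m) (toC.symm w) := by
      rw [LinearIsometryEquiv.symm_apply_eq, toC_rot, LinearIsometryEquiv.apply_symm_apply]
      congr 2
      push_cast; ring
    have hinj : Function.Injective (rot (2 * π / m)) := by
      intro x y hxy
      have h := congrArg toC hxy
      rw [toC_rot, toC_rot] at h
      exact toC.injective (mul_left_cancel₀ (Complex.exp_ne_zero _) h)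
    have hmem : rot (2 * π / m) (toC.symm w) ∈ D ↔ toC.symm w ∈ D := by
      conv_lhs => rw [← show rot (2 * π / m) '' D = D from hsym]
      exact hinj.mem_set_image
    have hnorm : ‖rot (2 * π / m) (toC.symm w)‖ = ‖toC.symm w‖ := by
      rw [← toC.norm_map, toC_rot, norm_mul, Complex.norm_exp_ofReal_mul_I, one_mul, toC.norm_map]
    have hg : sliceg D (rot (2 * π / m) (toC.symm w)) = sliceg D (toC.symm w) := by
      rw [sliceg, sliceg, hnorm]
    rw [hrot, hg]
    by_cases h : toC.symm w ∈ D
    · rw [indicator_of_mem h, indicator_of_mem (hmem.2 h)]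
    · rw [indicator_of_notMem h, indicator_of_notMem (mt hmem.1 h)]
  mean ρ := by
    have hfin : (volume (Metric.ball (0 : ℂ) ρ)) ≠ ⊤ := measure_ball_lt_top.ne
    have him : Measurable fun w => D.indicator (fun _ => (1 : ℝ)) (toC.symm w) :=
      (measurable_const.indicator hD.measurableSet).comp toC.symm.continuous.measurable
    rw [integral_sub, integral_ball_sliceg hD.measurableSet, sub_self]
    · refine Measure.integrableOn_of_bounded (M := 1) hfin him.aestronglyMeasurable
        (Filter.Eventually.of_forall fun w => ?_)
      by_cases h : toC.symm w ∈ D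
      · simp [indicator_of_mem h]
      · simp [indicator_of_notMem h]
    · refine Measure.integrableOn_of_bounded (M := 1) hfin
        (measurable_sliceg hD.measurableSet).aestronglyMeasurable
        (Filter.Eventually.of_forall fun w => ?_)
      have h1 := sliceg_mem_Icc hD.measurableSet w
      rw [Real.norm_of_nonneg h1.1]
      exact h1.2

/-- The Newtonian potential as an integral over `ℂ`, which `SymDensity.potential_sub_le` bounds. -/
lemma convN_eq (f : R2 → ℝ) (x : R2) :
    convN f x = 1 / (2 * π) * ∫ w, f (toC.symm w) * Real.log ‖toC x - w‖ := by
  rw [convN, ← toC.symm.measurePreserving.integral_comp toC.symm.toHomeomorph.measurableEmbedding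
    (fun y => f y * nker (x - y)), ← integral_const_mul]
  refine integral_congr_ae (Filter.Eventually.of_forall fun w => ?_)
  simp only [nker]
  rw [← toC.norm_map, map_sub, LinearIsometryEquiv.apply_symm_apply]
  ring

/-- For `m`-fold symmetric `D`, the non-radial part
`φ_m = (1_D − g) * N` of the stream function satisfies `|∇φ_m(x)| ≤ C|x|/m`. -/
theorem mfold_stream_gradient_bound :
    ∃ C > (0 : ℝ), ∀ m : ℕ, 3 ≤ m → ∀ D : Set R2,
      IsOpen D → IsBounded D → MFoldSymmetric m D →
      ∀ x : R2,
        ‖gradient (convN (fun y => D.indicator (fun _ => (1 : ℝ)) y - sliceg D y)) x‖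
          ≤ C * ‖x‖ / m := by
  refine ⟨16, by norm_num, fun m hm D hD hbd hsym x => ?_⟩
  obtain ⟨R, hR0, hR⟩ : ∃ R : ℝ, 0 < R ∧ D ⊆ Metric.ball 0 R := by
    obtain ⟨R, hR⟩ := hbd.subset_ball 0
    exact ⟨max R 1, by positivity, hR.trans (Metric.ball_subset_ball (le_max_left _ _))⟩
  have hm0 : (0 : ℝ) < m := by positivity
  have hF := symDensity_patch hD hsym hR
  set φ := convN (fun y => D.indicator (fun _ => (1 : ℝ)) y - sliceg D y) with hφ
  have hlip : ∀ y : R2, ‖φ y - φ x‖ ≤ 16 * (‖x‖ + ‖y - x‖) / m * ‖y - x‖ := by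
    intro y
    have h := hF.potential_sub_le hm hR0 (toC x) (toC (y - x))
    rw [← map_add, add_sub_cancel, toC.norm_map, toC.norm_map] at h
    rw [hφ, convN_eq, convN_eq, ← mul_sub, norm_mul, Real.norm_eq_abs, Real.norm_eq_abs,
      abs_of_pos (by positivity)]
    refine (mul_le_mul_of_nonneg_left h (by positivity)).trans (le_of_eq ?_)
    field_simp
    ring
  -- where `φ` is not differentiable the gradient is zero by convention
  by_cases hd : DifferentiableAt ℝ φ x
  · have hg : ‖gradient φ x‖ = ‖fderiv ℝ φ x‖ := by
      rw [gradient, LinearIsometryEquiv.norm_map]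
    rw [hg]
    refine le_of_forall_pos_le_add fun ε hε => ?_
    refine hd.hasFDerivAt.le_of_lip' (by positivity) ?_
    have hball : Metric.ball x (ε * m / 16) ∈ nhds x := Metric.ball_mem_nhds x (by positivity)
    filter_upwards [hball] with y hy
    refine (hlip y).trans ?_
    rw [mem_ball_iff_norm] at hy
    have : 16 * (‖x‖ + ‖y - x‖) / m ≤ 16 * ‖x‖ / m + ε := by
      rw [div_add' _ _ _ hm0.ne']
      gcongr
      linarith
    gcongr
  · rw [gradient, fderiv_zero_of_not_differentiableAt hd, map_zero, norm_zero]
    positivity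
end
end

section
/- There exist constants c₁, c₂ > 0 and an integer m₁ ≥ 3 such that the following holds: if (D, Ω) is a solution of the rotating patch equation with |D| = π, D is m-fold symmetric for some integer m ≥ m₁, and 1/2 − Ω > c₁/m, then D is star-shaped about the origin: there exists a C¹ function u : 𝕋 → (−1, ∞) with ∂D = {(1 + u(θ))(cos θ, sin θ) : θ ∈ 𝕋} and ‖u‖_{L∞(𝕋)} < c₂/m; in particular sup_{x ∈ ∂D}|x| − inf_{x ∈ ∂D}|x| < c₂/m. -/
/-!
The plane is identified with `ℂ`. The proof compares values of the stream function `Ψ` at two radii.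

**Symmetrisation.** If `E` is invariant under the `m`-th roots of unity, then
`∫_E log |x - y| dy = (1/m) ∫_E log |x^m - y^m| dy` (`logPot_symm`), and
`log |x^m - y^m| = m log max(|x|, |y|) + k(x, y)`, where the non-radial part `k = angKer` has the form
`log |1 - t w|` with `t = (min/max)^m` and `w` on the unit circle. Since `log |1 - t w|` has mean zero
in `w` and grows in `t` at rate at most one, `k` satisfies `‖k(x, ·)‖_{L¹} ≤ 12 π |x|² / m`
(`lintegral_angKer_le`), and along a ray `‖k(r₂ e, ·) - k(r₁ e, ·)‖_{L¹} ≤ 28 π (r₂² - r₁²)`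
(`lintegral_angKer_radial_le`).

**Growth.** Let `r₀` be the least distance of `∂E` from the origin. The origin lies in `E`
(`zero_mem_of_symm`), so the disk of radius `r₀` lies in `E` and makes the radial part of the
potential grow at almost the rate `1/4` in `|x|²`. As `Ω < 1/2 - 200/m`, this beats the rotation term
by a multiple of `1/m`, and beats the loss from `k` as well. Consequently `Ψ` is strictly larger on
the circle of radius `r₀ (1 + 1/m)` than on the circle of radius `r₀` (`PatchHyp.ring_growth`), and in
the annulus it increases along every ray at a definite rate (`PatchHyp.radial_growth`).

**Conclusion.** `∂E` is connected, touches the inner circle, and `Ψ` is constant on it; so it never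
reaches the outer circle. The area constraint places the unit circle in the annulus. Each ray meets
`∂E` exactly once, by radial monotonicity. As `Ψ` is Lipschitz, the boundary curve is nowhere tangent
to a ray (`PatchHyp.not_radial`), so the inverse function theorem makes the radius a `C¹` function of
the angle (`contDiffAt_radius`).
-/

open MeasureTheory Set Real Bornology

noncomputable section

/-! ### The non-radial part of the symmetrised kernel -/

/-- The ratio `(min(r,s)/max(r,s))^m` of two radii, raised to the `m`-th power. -/
def radRatio (m : ℕ) (r s : ℝ) : ℝ := (min r s / max r s) ^ m

/-- The non-radial part of the `m`-fold symmetrised logarithmic kernel: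
`log |x^m - y^m| - m log max(|x|,|y|)`. -/
def angKer (m : ℕ) (x y : ℂ) : ℝ := Real.log ‖x ^ m - y ^ m‖ - m * Real.log (max ‖x‖ ‖y‖)

lemma radRatio_nonneg {m : ℕ} {r s : ℝ} (hr : 0 ≤ r) (hs : 0 < s) : 0 ≤ radRatio m r s := by
  unfold radRatio; positivity

lemma radRatio_le_one {m : ℕ} {r s : ℝ} (hr : 0 ≤ r) (hs : 0 < s) : radRatio m r s ≤ 1 := by
  unfold radRatio
  apply pow_le_one₀ (by positivity)
  exact div_le_one_of_le₀ (min_le_max) (by positivity)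

lemma radRatio_lt_one {m : ℕ} (hm : m ≠ 0) {r s : ℝ} (hr : 0 ≤ r) (hs : 0 < s) (hrs : r ≠ s) :
    radRatio m r s < 1 := by
  unfold radRatio
  apply pow_lt_one₀ (by positivity) _ hm
  rw [div_lt_one (by positivity)]
  exact min_lt_max.2 hrs

lemma one_sub_ne_zero_of_lt {t : ℝ} {w : ℂ} (h0 : 0 ≤ t) (h1 : t < 1) (hw : ‖w‖ ≤ 1) :
    1 - (t : ℂ) * w ≠ 0 := by
  intro h
  have h2 : (t : ℂ) * w = 1 := (sub_eq_zero.1 h).symm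
  have h3 : ‖(t : ℂ) * w‖ = 1 := by rw [h2]; simp
  rw [norm_mul, Complex.norm_of_nonneg h0] at h3
  nlinarith [norm_nonneg w]

/-- In polar form the non-radial kernel is `log |1 - t w|`, with `t` the power of the ratio of the radii
and `w` on the unit circle. -/
lemma angKer_polar {m : ℕ} (hm : m ≠ 0) {r s : ℝ} (hr : 0 ≤ r) (hs : 0 < s) (hrs : r ≠ s)
    {e v : ℂ} (he : ‖e‖ = 1) (hv : ‖v‖ = 1) :
    angKer m (r * e) (s * v) =
      Real.log ‖1 - (radRatio m r s : ℂ) * (v * (starRingEnd ℂ) e) ^ m‖ := by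
  have hee : e * (starRingEnd ℂ) e = 1 := by
    rw [Complex.mul_conj, Complex.normSq_eq_norm_sq, he]; simp
  have hvv : v * (starRingEnd ℂ) v = 1 := by
    rw [Complex.mul_conj, Complex.normSq_eq_norm_sq, hv]; simp
  have hw : ‖(v * (starRingEnd ℂ) e) ^ m‖ ≤ 1 := by simp [he, hv]
  have hne := one_sub_ne_zero_of_lt (radRatio_nonneg hr hs) (radRatio_lt_one hm hr hs hrs) hw
  have hn1 : ‖(r : ℂ) * e‖ = r := by rw [norm_mul, he, Complex.norm_of_nonneg hr, mul_one]
  have hn2 : ‖(s : ℂ) * v‖ = s := by rw [norm_mul, hv, Complex.norm_of_nonneg hs.le, mul_one]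
  unfold angKer
  rw [hn1, hn2]
  rcases lt_or_gt_of_ne hrs with h | h
  · have key : ‖((r : ℂ) * e) ^ m - (s * v) ^ m‖ =
        s ^ m * ‖1 - (radRatio m r s : ℂ) * (v * (starRingEnd ℂ) e) ^ m‖ := by
      have h1 : ((r : ℂ) * e) ^ m - (s * v) ^ m =
          -((s * v) ^ m * (starRingEnd ℂ)
            (1 - (radRatio m r s : ℂ) * (v * (starRingEnd ℂ) e) ^ m)) := by
        have hs' : (s : ℂ) ≠ 0 := by exact_mod_cast hs.ne'
        simp only [radRatio, min_eq_left h.le, max_eq_right h.le, map_sub, map_mul, map_pow,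
          map_one, Complex.conj_conj, Complex.ofReal_pow, Complex.ofReal_div, map_div₀,
          Complex.conj_ofReal]
        have : ((s : ℂ) * v) ^ m * ((r / s : ℂ) ^ m * ((starRingEnd ℂ) v * e) ^ m) =
            ((r : ℂ) * e) ^ m := by
          rw [← mul_pow, ← mul_pow]
          congr 1
          field_simp
          linear_combination (r * e : ℂ) * hvv
        rw [mul_sub, this]; ring
      rw [h1, norm_neg, norm_mul, norm_pow, hn2, RCLike.norm_conj]
    rw [key, Real.log_mul (by positivity) (by simpa using hne), Real.log_pow, max_eq_right h.le]
    ring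
  · have hr' : 0 < r := hs.trans h
    have key : ‖((r : ℂ) * e) ^ m - (s * v) ^ m‖ =
        r ^ m * ‖1 - (radRatio m r s : ℂ) * (v * (starRingEnd ℂ) e) ^ m‖ := by
      have h1 : ((r : ℂ) * e) ^ m - (s * v) ^ m =
          ((r * e) ^ m *
            (1 - (radRatio m r s : ℂ) * (v * (starRingEnd ℂ) e) ^ m)) := by
        have hs' : (r : ℂ) ≠ 0 := by exact_mod_cast hr'.ne'
        simp only [radRatio, min_eq_right h.le, max_eq_left h.le,
          Complex.ofReal_pow, Complex.ofReal_div]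
        have : ((r : ℂ) * e) ^ m * ((s / r : ℂ) ^ m * (v * (starRingEnd ℂ) e) ^ m) =
            ((s : ℂ) * v) ^ m := by
          rw [← mul_pow, ← mul_pow]
          congr 1
          field_simp
          linear_combination (s * v : ℂ) * hee
        rw [mul_sub, this]; ring
      rw [h1, norm_mul, norm_pow, hn1]
    rw [key, Real.log_mul (by positivity) (by simpa using hne), Real.log_pow, max_eq_left h.le]
    ring

/-- Mean value property of `log |1 - t z^m|` on the unit circle. -/
lemma integral_log_circle {m : ℕ} (hm : m ≠ 0) {t : ℝ} (h0 : 0 ≤ t) (h1 : t < 1) {c : ℂ}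
    (hc : ‖c‖ = 1) :
    ∫ θ in (-π)..π, Real.log ‖1 - (t : ℂ) * (Complex.exp (θ * Complex.I) * c) ^ m‖ = 0 := by
  have hne : ∀ z ∈ Metric.closedBall (0 : ℂ) |1|, (1 - (t : ℂ) * (z * c) ^ m) ≠ 0 := by
    intro z hz
    apply one_sub_ne_zero_of_lt h0 h1
    rw [norm_pow, norm_mul, hc, mul_one]
    simp at hz
    exact pow_le_one₀ (norm_nonneg _) hz
  have han : AnalyticOnNhd ℂ (fun z : ℂ => 1 - (t : ℂ) * (z * c) ^ m)
      (Metric.closedBall 0 |1|) := fun z _ => by fun_prop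
  have := AnalyticOnNhd.circleAverage_log_norm_of_ne_zero han hne
  simp only [Real.circleAverage, circleMap, zero_mul, zero_pow hm, mul_zero, sub_zero, norm_one,
    Real.log_one, smul_eq_mul, Complex.ofReal_one, one_mul, zero_add] at this
  have h2 : ∫ θ in (0 : ℝ)..2 * π,
      Real.log ‖1 - (t : ℂ) * (Complex.exp (θ * Complex.I) * c) ^ m‖ = 0 := by
    rcases mul_eq_zero.1 this with h | h
    · exfalso; have : (2 * π)⁻¹ > 0 := by positivity
      linarith
    · exact h
  have hper : Function.Periodic
      (fun θ : ℝ => Real.log ‖1 - (t : ℂ) * (Complex.exp (θ * Complex.I) * c) ^ m‖) (2 * π) := by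
    intro θ
    simp only
    have : Complex.exp (((θ + 2 * π : ℝ) : ℂ) * Complex.I) = Complex.exp (θ * Complex.I) := by
      push_cast
      rw [add_mul, Complex.exp_add, Complex.exp_two_pi_mul_I, mul_one]
    rw [this]
  have h3 := hper.intervalIntegral_add_eq (-π) 0
  rw [show -π + 2 * π = π by ring, zero_add] at h3
  rw [h3, h2]

/-- Along a ray `log |1 - t w|` grows in `t` at rate at most one, because `|1 - t w| / (1 + t)` is
nonincreasing on `[0, 1]`. -/
lemma log_norm_sub_le {t₁ t₂ : ℝ} (h0 : 0 ≤ t₁) (h12 : t₁ ≤ t₂) (h1 : t₂ < 1) {w : ℂ}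
    (hw : ‖w‖ = 1) :
    Real.log ‖1 - (t₂ : ℂ) * w‖ - Real.log ‖1 - (t₁ : ℂ) * w‖ ≤ t₂ - t₁ := by
  have p2 : 0 < ‖1 - (t₂ : ℂ) * w‖ :=
    norm_pos_iff.2 (one_sub_ne_zero_of_lt (h0.trans h12) h1 hw.le)
  have p1 : 0 < ‖1 - (t₁ : ℂ) * w‖ :=
    norm_pos_iff.2 (one_sub_ne_zero_of_lt h0 (h12.trans_lt h1) hw.le)
  have hsq : ∀ t : ℝ, ‖1 - (t : ℂ) * w‖ ^ 2 = 1 - 2 * t * w.re + t ^ 2 := by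
    intro t
    have hw2 : w.re ^ 2 + w.im ^ 2 = 1 := by
      have := Complex.normSq_eq_norm_sq w
      rw [hw, Complex.normSq_apply] at this; linarith
    rw [← Complex.normSq_eq_norm_sq, Complex.normSq_apply]
    simp
    linear_combination t ^ 2 * hw2
  have hre : -1 ≤ w.re := by
    have := (abs_le.1 ((Complex.abs_re_le_norm w).trans hw.le)).1
    exact this
  have hmain : (1 + t₁) * ‖1 - (t₂ : ℂ) * w‖ ≤ (1 + t₂) * ‖1 - (t₁ : ℂ) * w‖ := by
    have ht2 : 0 ≤ t₂ := h0.trans h12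
    apply le_of_sq_le_sq _ (by positivity)
    rw [mul_pow, mul_pow, hsq, hsq]
    have h3 : 0 ≤ (1 + w.re) * ((t₂ - t₁) * (1 - t₁ * t₂)) := by
      apply mul_nonneg (by linarith) (mul_nonneg (by linarith) _)
      nlinarith
    nlinarith
  rw [← Real.log_div p2.ne' p1.ne']
  have h4 : ‖1 - (t₂ : ℂ) * w‖ / ‖1 - (t₁ : ℂ) * w‖ ≤ 1 + (t₂ - t₁) := by
    rw [div_le_iff₀ p1]
    have : (1 + t₂) * ‖1 - (t₁ : ℂ) * w‖ ≤
        (1 + t₁) * ((1 + (t₂ - t₁)) * ‖1 - (t₁ : ℂ) * w‖) := by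
      nlinarith [mul_nonneg h0 (sub_nonneg.2 h12)]
    exact le_of_mul_le_mul_left (hmain.trans this) (by linarith)
  have := Real.log_le_sub_one_of_pos (div_pos p2 p1)
  linarith

/-- The difference of `log |1 - t w|` at two values of `t` has mean zero on the circle and is bounded
above by `|t₂ - t₁|`, hence is controlled in `L¹`. -/
lemma integral_abs_log_sub_le {m : ℕ} (hm : m ≠ 0) {t₁ t₂ : ℝ} (h01 : 0 ≤ t₁) (h11 : t₁ < 1)
    (h02 : 0 ≤ t₂) (h12 : t₂ < 1) {c : ℂ} (hc : ‖c‖ = 1) :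
    ∫⁻ θ in Ioo (-π) π, ‖Real.log ‖1 - (t₂ : ℂ) * (Complex.exp (θ * Complex.I) * c) ^ m‖ -
        Real.log ‖1 - (t₁ : ℂ) * (Complex.exp (θ * Complex.I) * c) ^ m‖‖ₑ
      ≤ ENNReal.ofReal (4 * π * |t₂ - t₁|) := by
  wlog h : t₁ ≤ t₂ generalizing t₁ t₂
  · have := this h02 h12 h01 h11 (le_of_not_ge h)
    rw [abs_sub_comm] at this
    refine le_trans (le_of_eq ?_) this
    congr 1
    ext θ
    rw [← enorm_neg, neg_sub]
  have hcont : ∀ t : ℝ, 0 ≤ t → t < 1 → Continuous fun θ : ℝ =>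
      Real.log ‖1 - (t : ℂ) * (Complex.exp (θ * Complex.I) * c) ^ m‖ := by
    intro t ht0 ht1
    refine Continuous.log (by fun_prop) fun θ => ?_
    rw [norm_ne_zero_iff]
    apply one_sub_ne_zero_of_lt ht0 ht1
    rw [norm_pow, norm_mul, hc, Complex.norm_exp_ofReal_mul_I]; simp
  have c1 := hcont t₁ h01 h11
  have c2 := hcont t₂ h02 h12
  have hle : (-π : ℝ) ≤ π := by linarith [Real.pi_pos]
  rw [abs_of_nonneg (sub_nonneg.2 h), restrict_Ioo_eq_restrict_Ioc]
  have hint : Integrable (fun θ : ℝ =>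
      Real.log ‖1 - (t₂ : ℂ) * (Complex.exp (θ * Complex.I) * c) ^ m‖ -
        Real.log ‖1 - (t₁ : ℂ) * (Complex.exp (θ * Complex.I) * c) ^ m‖)
      (volume.restrict (Ioc (-π) π)) :=
    ((intervalIntegrable_iff_integrableOn_Ioc_of_le hle).1 ((c2.sub c1).intervalIntegrable _ _))
  rw [← ofReal_integral_norm_eq_lintegral_enorm hint]
  apply ENNReal.ofReal_le_ofReal
  rw [← intervalIntegral.integral_of_le hle]
  calc ∫ θ in (-π)..π, ‖Real.log ‖1 - (t₂ : ℂ) * (Complex.exp (θ * Complex.I) * c) ^ m‖ -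
        Real.log ‖1 - (t₁ : ℂ) * (Complex.exp (θ * Complex.I) * c) ^ m‖‖
      ≤ ∫ θ in (-π)..π, (2 * (t₂ - t₁) -
        (Real.log ‖1 - (t₂ : ℂ) * (Complex.exp (θ * Complex.I) * c) ^ m‖ -
        Real.log ‖1 - (t₁ : ℂ) * (Complex.exp (θ * Complex.I) * c) ^ m‖)) := by
        apply intervalIntegral.integral_mono_on hle
        · exact (c2.sub c1).norm.intervalIntegrable _ _
        · exact (continuous_const.sub (c2.sub c1)).intervalIntegrable _ _
        · intro θ _
          have hw : ‖(Complex.exp (θ * Complex.I) * c) ^ m‖ = 1 := by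
            rw [norm_pow, norm_mul, hc, Complex.norm_exp_ofReal_mul_I]; simp
          have := log_norm_sub_le h01 h h12 hw
          rw [Real.norm_eq_abs, abs_le]
          constructor <;> linarith
    _ = 4 * π * (t₂ - t₁) := by
        have hsub : IntervalIntegrable (fun θ : ℝ =>
            Real.log ‖1 - (t₂ : ℂ) * (Complex.exp (θ * Complex.I) * c) ^ m‖ -
            Real.log ‖1 - (t₁ : ℂ) * (Complex.exp (θ * Complex.I) * c) ^ m‖) volume (-π) π :=
          (c2.sub c1).intervalIntegrable _ _
        rw [intervalIntegral.integral_sub (by simp) hsub,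
          intervalIntegral.integral_sub (c2.intervalIntegrable _ _) (c1.intervalIntegrable _ _),
          integral_log_circle hm h01 h11 hc, integral_log_circle hm h02 h12 hc]
        simp; ring

lemma measurable_angKer (m : ℕ) (x : ℂ) : Measurable (angKer m x) := by
  unfold angKer; fun_prop

lemma measurable_radRatio (m : ℕ) (r : ℝ) : Measurable (radRatio m r) := by
  unfold radRatio; fun_prop

/-- Polar coordinates in `y` combined with the circle estimate: for `x` moving along a ray, the change
of the kernel in `L¹` is controlled by the change of `radRatio`. -/
lemma lintegral_angKer_sub_le {m : ℕ} (hm : m ≠ 0) {r₁ r₂ : ℝ} (h1 : 0 ≤ r₁) (h2 : 0 ≤ r₂)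
    {e : ℂ} (he : ‖e‖ = 1) :
    ∫⁻ y : ℂ, ‖angKer m (r₂ * e) y - angKer m (r₁ * e) y‖ₑ ≤
      ∫⁻ s in Ioi (0 : ℝ), ENNReal.ofReal
        (4 * π * (s * |radRatio m r₂ s - radRatio m r₁ s|)) := by
  have hmeas : Measurable fun y : ℂ => ‖angKer m (r₂ * e) y - angKer m (r₁ * e) y‖ₑ :=
    ((measurable_angKer m _).sub (measurable_angKer m _)).enorm
  have hsymm : Measurable fun p : ℝ × ℝ => Complex.polarCoord.symm p := by
    simp only [Complex.polarCoord_symm_apply]; fun_prop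
  rw [← Complex.lintegral_comp_polarCoord_symm, polarCoord_target,
    Measure.volume_eq_prod, ← Measure.prod_restrict, lintegral_prod]
  · apply lintegral_mono_ae
    have hae : ∀ᵐ s : ℝ ∂(volume.restrict (Ioi (0 : ℝ))), s ≠ r₁ ∧ s ≠ r₂ := by
      apply ae_restrict_of_ae
      filter_upwards [(measure_eq_zero_iff_ae_notMem.1 (Real.volume_singleton (a := r₁))),
        (measure_eq_zero_iff_ae_notMem.1 (Real.volume_singleton (a := r₂)))] with s a b
      exact ⟨a, b⟩
    filter_upwards [hae, ae_restrict_mem measurableSet_Ioi] with s hs hs0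
    rw [mem_Ioi] at hs0
    have hc : ‖(starRingEnd ℂ) e‖ = 1 := by simpa using he
    have := integral_abs_log_sub_le hm (radRatio_nonneg h1 hs0)
      (radRatio_lt_one hm h1 hs0 hs.1.symm) (radRatio_nonneg h2 hs0)
      (radRatio_lt_one hm h2 hs0 hs.2.symm) hc
    calc ∫⁻ θ in Ioo (-π) π, ENNReal.ofReal s • ‖angKer m (r₂ * e) (Complex.polarCoord.symm (s, θ))
          - angKer m (r₁ * e) (Complex.polarCoord.symm (s, θ))‖ₑ
        = ENNReal.ofReal s * ∫⁻ θ in Ioo (-π) π,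
          ‖Real.log ‖1 - (radRatio m r₂ s : ℂ) *
              (Complex.exp (θ * Complex.I) * (starRingEnd ℂ) e) ^ m‖ -
        Real.log ‖1 - (radRatio m r₁ s : ℂ) *
              (Complex.exp (θ * Complex.I) * (starRingEnd ℂ) e) ^ m‖‖ₑ := by
          rw [← lintegral_const_mul' _ _ ENNReal.ofReal_ne_top]
          congr 1
          ext θ
          have : Complex.polarCoord.symm (s, θ) = s * Complex.exp (θ * Complex.I) := by
            simp [Complex.polarCoord_symm_apply, Complex.exp_mul_I]
          rw [this, angKer_polar hm h1 hs0 hs.1.symm he (Complex.norm_exp_ofReal_mul_I θ),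
            angKer_polar hm h2 hs0 hs.2.symm he (Complex.norm_exp_ofReal_mul_I θ), smul_eq_mul]
      _ ≤ ENNReal.ofReal s * ENNReal.ofReal (4 * π * |radRatio m r₂ s - radRatio m r₁ s|) := by
          gcongr
      _ = _ := by
          rw [← ENNReal.ofReal_mul hs0.le]
          congr 1; ring
  · apply Measurable.aemeasurable
    exact (by fun_prop : Measurable fun p : ℝ × ℝ => ENNReal.ofReal p.1).smul (hmeas.comp hsymm)

/-- The integral equals `r² / (m + 2) + r² / (m - 2)`, the contributions of `s ≤ r` and `s > r`. -/
lemma lintegral_radRatio_le {m : ℕ} (hm : 6 ≤ m) {r : ℝ} (hr : 0 ≤ r) :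
    ∫⁻ s in Ioi (0 : ℝ), ENNReal.ofReal (s * radRatio m r s) ≤ ENNReal.ofReal (3 * r ^ 2 / m) := by
  have hm' : (6 : ℝ) ≤ m := by exact_mod_cast hm
  rcases hr.eq_or_lt with rfl | hr
  · have : ∀ s ∈ Ioi (0 : ℝ), ENNReal.ofReal (s * radRatio m 0 s) = 0 := by
      intro s hs
      have hs' : (0 : ℝ) < s := hs
      simp [radRatio, min_eq_left hs'.le, show m ≠ 0 by lia]
    rw [setLIntegral_congr_fun measurableSet_Ioi this]
    simp
  rw [← Ioc_union_Ioi_eq_Ioi hr.le,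
    lintegral_union measurableSet_Ioi (Ioc_disjoint_Ioi le_rfl)]
  have e1 : ∫⁻ s in Ioc (0 : ℝ) r, ENNReal.ofReal (s * radRatio m r s) =
      ENNReal.ofReal (r ^ 2 / (m + 2)) := by
    have h1 : ∀ s ∈ Ioc (0 : ℝ) r, ENNReal.ofReal (s * radRatio m r s) =
        ENNReal.ofReal (s ^ (m + 1) / r ^ m) := by
      intro s hs
      congr 1
      rw [radRatio, min_eq_right hs.2, max_eq_left hs.2, div_pow]; ring
    rw [setLIntegral_congr_fun measurableSet_Ioc h1, ← ofReal_integral_eq_lintegral_ofReal]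
    · congr 1
      rw [← intervalIntegral.integral_of_le hr.le, intervalIntegral.integral_div, integral_pow]
      push_cast
      field_simp
      simp; ring
    · exact (intervalIntegrable_iff_integrableOn_Ioc_of_le hr.le).1
        ((by fun_prop : Continuous fun s : ℝ => s ^ (m + 1) / r ^ m).intervalIntegrable _ _)
    · filter_upwards [ae_restrict_mem measurableSet_Ioc] with s hs
      have := hs.1
      positivity
  have e2 : ∫⁻ s in Ioi r, ENNReal.ofReal (s * radRatio m r s) =
      ENNReal.ofReal (r ^ 2 / (m - 2)) := by
    have h1 : ∀ s ∈ Ioi r, ENNReal.ofReal (s * radRatio m r s) =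
        ENNReal.ofReal (r ^ m * s ^ (1 - m : ℝ)) := by
      intro s hs
      have hs' : r < s := hs
      have hs0 : 0 < s := hr.trans hs'
      congr 1
      rw [radRatio, min_eq_left hs'.le, max_eq_right hs'.le, div_pow, Real.rpow_sub hs0,
        Real.rpow_one, Real.rpow_natCast]; ring
    have hneg : (1 - m : ℝ) < -1 := by linarith
    rw [setLIntegral_congr_fun measurableSet_Ioi h1, ← ofReal_integral_eq_lintegral_ofReal]
    · congr 1
      rw [integral_const_mul, integral_Ioi_rpow_of_lt hneg hr,
        show (1 - m + 1 : ℝ) = 2 - m by ring, Real.rpow_sub hr, Real.rpow_natCast]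
      have : (2 - m : ℝ) ≠ 0 := by linarith
      have : (m - 2 : ℝ) ≠ 0 := by linarith
      norm_num
      field_simp
      ring
    · exact (integrableOn_Ioi_rpow_of_lt hneg hr).const_mul _
    · filter_upwards [ae_restrict_mem measurableSet_Ioi] with s hs
      have hs0 : 0 < s := hr.trans hs
      positivity
  rw [e1, e2, ← ENNReal.ofReal_add (by positivity) (div_nonneg (by positivity) (by linarith))]
  apply ENNReal.ofReal_le_ofReal
  have h2 : (0 : ℝ) < m - 2 := by linarith
  rw [div_add_div _ _ (by positivity) h2.ne', div_le_div_iff₀ (by positivity) (by positivity)]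
  have : 0 < r ^ 2 := by positivity
  nlinarith [mul_nonneg this.le (show (0 : ℝ) ≤ m ^ 2 - 12 by nlinarith)]

/-- The non-radial kernel is of size `O(|x|² / m)` in `L¹`: it vanishes at `x = 0`, from which `x` is
reached along a ray. -/
lemma lintegral_angKer_le {m : ℕ} (hm : 6 ≤ m) (x : ℂ) :
    ∫⁻ y : ℂ, ‖angKer m x y‖ₑ ≤ ENNReal.ofReal (12 * π * ‖x‖ ^ 2 / m) := by
  obtain ⟨e, he, hx⟩ : ∃ e : ℂ, ‖e‖ = 1 ∧ x = (‖x‖ : ℂ) * e := by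
    refine ⟨Complex.exp (x.arg * Complex.I), Complex.norm_exp_ofReal_mul_I _, ?_⟩
    exact (Complex.norm_mul_exp_arg_mul_I x).symm
  have hm0 : m ≠ 0 := by lia
  have key := lintegral_angKer_sub_le hm0 le_rfl (norm_nonneg x) he
  have hz : ∀ y : ℂ, angKer m ((0 : ℝ) * e) y = 0 := by
    intro y
    simp [angKer, hm0]
  simp only [hz, sub_zero, ← hx] at key
  refine key.trans ?_
  have h1 : ∀ s ∈ Ioi (0 : ℝ), ENNReal.ofReal
        (4 * π * (s * |radRatio m ‖x‖ s - radRatio m 0 s|)) =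
        ENNReal.ofReal (4 * π) * ENNReal.ofReal (s * radRatio m ‖x‖ s) := by
    intro s hs
    have hs' : (0 : ℝ) < s := hs
    rw [← ENNReal.ofReal_mul (by positivity)]
    have : radRatio m 0 s = 0 := by simp [radRatio, min_eq_left hs'.le, hm0]
    rw [this, sub_zero, abs_of_nonneg (radRatio_nonneg (norm_nonneg _) hs')]
  rw [setLIntegral_congr_fun measurableSet_Ioi h1, lintegral_const_mul' _ _ ENNReal.ofReal_ne_top]
  calc _ ≤ ENNReal.ofReal (4 * π) * ENNReal.ofReal (3 * ‖x‖ ^ 2 / m) := by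
        gcongr
        exact lintegral_radRatio_le hm (norm_nonneg x)
    _ = _ := by
        rw [← ENNReal.ofReal_mul (by positivity)]
        congr 1; ring

/-- Outside `(r₁, r₂]` the two ratios differ by the factor `(r₁ / r₂) ^ m`, and Bernoulli's inequality
applies; on `(r₁, r₂]` the trivial bound `1` is used. -/
lemma abs_radRatio_sub_le {m : ℕ} {r₁ r₂ s : ℝ} (h1 : 0 ≤ r₁) (h12 : r₁ ≤ r₂)
    (h2 : 0 < r₂) (hs : 0 < s) :
    |radRatio m r₂ s - radRatio m r₁ s| ≤
      m * (1 - r₁ / r₂) * (radRatio m r₁ s + radRatio m r₂ s) +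
        (Ioc r₁ r₂).indicator (fun _ => (1 : ℝ)) s := by
  have n1 := radRatio_nonneg (m := m) h1 hs
  have n2 := radRatio_nonneg (m := m) h2.le hs
  have l1 := radRatio_le_one (m := m) h1 hs
  have l2 := radRatio_le_one (m := m) h2.le hs
  have hq0 : 0 ≤ r₁ / r₂ := by positivity
  have hq1 : r₁ / r₂ ≤ 1 := div_le_one_of_le₀ h12 h2.le
  have hb : 1 - (r₁ / r₂) ^ m ≤ m * (1 - r₁ / r₂) := by
    have := one_add_mul_le_pow (show (-2 : ℝ) ≤ r₁ / r₂ - 1 by linarith) m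
    simp only [add_sub_cancel] at this
    linarith
  have hp1 : (r₁ / r₂) ^ m ≤ 1 := pow_le_one₀ hq0 hq1
  have hc0 : 0 ≤ m * (1 - r₁ / r₂) := by
    have : (0 : ℝ) ≤ 1 - r₁ / r₂ := by linarith
    positivity
  by_cases hmem : s ∈ Ioc r₁ r₂
  · rw [indicator_of_mem hmem]
    have : 0 ≤ m * (1 - r₁ / r₂) * (radRatio m r₁ s + radRatio m r₂ s) := by positivity
    rw [abs_le]
    constructor <;> linarith
  · rw [indicator_of_notMem hmem, add_zero]
    rcases le_or_gt s r₁ with h | h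
    · have hr1 : 0 < r₁ := hs.trans_le h
      have e : radRatio m r₂ s = radRatio m r₁ s * (r₁ / r₂) ^ m := by
        rw [radRatio, radRatio, min_eq_right h, max_eq_left h, min_eq_right (h.trans h12),
          max_eq_left (h.trans h12), ← mul_pow]
        congr 1; field_simp
      rw [abs_sub_comm, abs_of_nonneg (by rw [e]; nlinarith)]
      have : radRatio m r₁ s - radRatio m r₂ s = (1 - (r₁ / r₂) ^ m) * radRatio m r₁ s := by
        rw [e]; ring
      rw [this]
      nlinarith [mul_nonneg hc0 n2, mul_le_mul_of_nonneg_right hb n1]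
    · have h3 : r₂ < s := by
        by_contra hcon
        exact hmem ⟨h, not_lt.1 hcon⟩
      have e : radRatio m r₁ s = radRatio m r₂ s * (r₁ / r₂) ^ m := by
        rw [radRatio, radRatio, min_eq_left h.le, max_eq_right h.le, min_eq_left h3.le,
          max_eq_right h3.le, ← mul_pow]
        congr 1; field_simp
      rw [abs_of_nonneg (by rw [e]; nlinarith)]
      have : radRatio m r₂ s - radRatio m r₁ s = (1 - (r₁ / r₂) ^ m) * radRatio m r₂ s := by
        rw [e]; ring
      rw [this]
      nlinarith [mul_nonneg hc0 n1, mul_le_mul_of_nonneg_right hb n2]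

/-- Along a ray the non-radial kernel is Lipschitz in `L¹` with respect to the squared radius, with a
constant independent of `m`. -/
lemma lintegral_angKer_radial_le {m : ℕ} (hm : 6 ≤ m) {r₁ r₂ : ℝ} (h1 : 0 ≤ r₁)
    (h12 : r₁ ≤ r₂) (h2 : 0 < r₂) {e : ℂ} (he : ‖e‖ = 1) :
    ∫⁻ y : ℂ, ‖angKer m (r₂ * e) y - angKer m (r₁ * e) y‖ₑ ≤
      ENNReal.ofReal (28 * π * (r₂ ^ 2 - r₁ ^ 2)) := by
  have hm0 : m ≠ 0 := by lia
  have hmR : (0 : ℝ) < m := by positivity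
  have hq1 : r₁ / r₂ ≤ 1 := div_le_one_of_le₀ h12 h2.le
  set A : ℝ := 4 * π * (m * (1 - r₁ / r₂)) with hA
  have hA0 : 0 ≤ A := by
    have : (0 : ℝ) ≤ 1 - r₁ / r₂ := by linarith
    positivity
  have hind : ∫⁻ s in Ioi (0 : ℝ), ENNReal.ofReal
      (4 * π * r₂ * (Ioc r₁ r₂).indicator (fun _ => (1 : ℝ)) s) ≤
        ENNReal.ofReal (4 * π * r₂ * (r₂ - r₁)) := by
    calc _ ≤ ∫⁻ s, (Ioc r₁ r₂).indicator (fun _ => ENNReal.ofReal (4 * π * r₂)) s := by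
          refine (setLIntegral_le_lintegral _ _).trans (lintegral_mono fun s => ?_)
          by_cases hs : s ∈ Ioc r₁ r₂ <;> simp [hs]
      _ = _ := by
          rw [lintegral_indicator measurableSet_Ioc, setLIntegral_const, Real.volume_Ioc,
            ← ENNReal.ofReal_mul (by positivity)]
  calc _ ≤ _ := lintegral_angKer_sub_le hm0 h1 h2.le he
    _ ≤ ∫⁻ s in Ioi (0 : ℝ), (ENNReal.ofReal A * ENNReal.ofReal (s * radRatio m r₁ s) +
          ENNReal.ofReal A * ENNReal.ofReal (s * radRatio m r₂ s) +
          ENNReal.ofReal (4 * π * r₂ * (Ioc r₁ r₂).indicator (fun _ => (1 : ℝ)) s)) := by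
        apply setLIntegral_mono' measurableSet_Ioi
        intro s hs
        have hs' : (0 : ℝ) < s := hs
        have n1 := radRatio_nonneg (m := m) h1 hs'
        have n2 := radRatio_nonneg (m := m) h2.le hs'
        have ni : 0 ≤ (Ioc r₁ r₂).indicator (fun _ => (1 : ℝ)) s :=
          indicator_nonneg (fun _ _ => zero_le_one) s
        rw [← ENNReal.ofReal_mul hA0, ← ENNReal.ofReal_mul hA0,
          ← ENNReal.ofReal_add (by positivity) (by positivity),
          ← ENNReal.ofReal_add (by positivity) (by positivity)]
        apply ENNReal.ofReal_le_ofReal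
        have hk := abs_radRatio_sub_le (m := m) h1 h12 h2 hs'
        have hs2 : s * (Ioc r₁ r₂).indicator (fun _ => (1 : ℝ)) s ≤
            r₂ * (Ioc r₁ r₂).indicator (fun _ => (1 : ℝ)) s := by
          by_cases hmem : s ∈ Ioc r₁ r₂
          · simpa [hmem] using hmem.2
          · simp [hmem]
        calc 4 * π * (s * |radRatio m r₂ s - radRatio m r₁ s|)
            ≤ 4 * π * (s * (m * (1 - r₁ / r₂) * (radRatio m r₁ s + radRatio m r₂ s) +
        (Ioc r₁ r₂).indicator (fun _ => (1 : ℝ)) s)) := by gcongr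
          _ = A * (s * radRatio m r₁ s) + A * (s * radRatio m r₂ s) +
              4 * π * (s * (Ioc r₁ r₂).indicator (fun _ => (1 : ℝ)) s) := by rw [hA]; ring
          _ ≤ A * (s * radRatio m r₁ s) + A * (s * radRatio m r₂ s) +
              4 * π * (r₂ * (Ioc r₁ r₂).indicator (fun _ => (1 : ℝ)) s) := by gcongr
          _ = _ := by ring
    _ ≤ ENNReal.ofReal A * ENNReal.ofReal (3 * r₁ ^ 2 / m) +
          ENNReal.ofReal A * ENNReal.ofReal (3 * r₂ ^ 2 / m) +
          ENNReal.ofReal (4 * π * r₂ * (r₂ - r₁)) := by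
        have ma : ∀ r, Measurable fun s : ℝ => ENNReal.ofReal (s * radRatio m r s) := fun r =>
          (measurable_id.mul (measurable_radRatio m r)).ennreal_ofReal
        have mab : Measurable fun s : ℝ =>
            ENNReal.ofReal A * ENNReal.ofReal (s * radRatio m r₁ s) +
              ENNReal.ofReal A * ENNReal.ofReal (s * radRatio m r₂ s) :=
          ((ma r₁).const_mul _).add ((ma r₂).const_mul _)
        rw [lintegral_add_left mab,
          lintegral_add_left ((ma r₁).const_mul _), lintegral_const_mul _ (ma r₁),
          lintegral_const_mul _ (ma r₂)]
        gcongr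
        · exact lintegral_radRatio_le hm h1
        · exact lintegral_radRatio_le hm h2.le
    _ ≤ _ := by
        have hd : 0 ≤ r₂ - r₁ := by linarith
        rw [← ENNReal.ofReal_mul hA0, ← ENNReal.ofReal_mul hA0,
          ← ENNReal.ofReal_add (by positivity) (by positivity),
          ← ENNReal.ofReal_add (by positivity) (by positivity)]
        apply ENNReal.ofReal_le_ofReal
        have e1 : A * (3 * r₁ ^ 2 / m) + A * (3 * r₂ ^ 2 / m) =
            12 * π * ((r₂ - r₁) / r₂ * (r₁ ^ 2 + r₂ ^ 2)) := by
          rw [hA]; field_simp; ring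
        have e2 : (r₂ - r₁) / r₂ * (r₁ ^ 2 + r₂ ^ 2) ≤ 2 * (r₂ * (r₂ - r₁)) := by
          have : r₁ ^ 2 ≤ r₂ ^ 2 := by gcongr
          calc (r₂ - r₁) / r₂ * (r₁ ^ 2 + r₂ ^ 2) ≤ (r₂ - r₁) / r₂ * (r₂ ^ 2 + r₂ ^ 2) := by gcongr
            _ = _ := by field_simp; ring
        rw [e1]
        have e3 : r₂ * (r₂ - r₁) ≤ r₂ ^ 2 - r₁ ^ 2 := by nlinarith
        have := Real.pi_pos
        nlinarith [mul_le_mul_of_nonneg_left e2 this.le, mul_le_mul_of_nonneg_left e3 this.le]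

/-! ### The logarithmic potential -/

/-- The logarithmic potential `∫_E log |x - y| dy` of a planar set `E`, that is `2π (1_E * N)(x)`. -/
def logPot (E : Set ℂ) (x : ℂ) : ℝ := ∫ y in E, Real.log ‖x - y‖

lemma lintegral_inv_norm_ball :
    ∫⁻ z in Metric.ball (0 : ℂ) 1, ENNReal.ofReal ‖z‖⁻¹ ≤ ENNReal.ofReal (2 * π) := by
  rw [← lintegral_indicator Metric.isOpen_ball.measurableSet, ← Complex.lintegral_comp_polarCoord_symm,
    polarCoord_target]
  have hmt : MeasurableSet (Ioi (0 : ℝ) ×ˢ Ioo (-π) π) := measurableSet_Ioi.prod measurableSet_Ioo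
  have hms : MeasurableSet (Ioo (0 : ℝ) 1 ×ˢ Ioo (-π) π) := measurableSet_Ioo.prod measurableSet_Ioo
  calc _ ≤ ∫⁻ p in Ioi (0 : ℝ) ×ˢ Ioo (-π) π,
        (Ioo (0 : ℝ) 1 ×ˢ Ioo (-π) π).indicator (fun _ => (1 : ENNReal)) p := by
        apply setLIntegral_mono' hmt
        rintro ⟨s, θ⟩ ⟨hs, hθ⟩
        have hs' : (0 : ℝ) < s := hs
        by_cases h : s < 1
        · have h1 : ((s, θ) : ℝ × ℝ) ∈ Ioo (0 : ℝ) 1 ×ˢ Ioo (-π) π := ⟨⟨hs', h⟩, hθ⟩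
          have h2 : Complex.polarCoord.symm (s, θ) ∈ Metric.ball (0 : ℂ) 1 := by
            rw [mem_ball_zero_iff, Complex.norm_polarCoord_symm, abs_of_pos hs']; exact h
          rw [indicator_of_mem h1, indicator_of_mem h2, Complex.norm_polarCoord_symm,
            abs_of_pos hs', smul_eq_mul, ← ENNReal.ofReal_mul hs'.le, mul_inv_cancel₀ hs'.ne']
          simp
        · have h2 : Complex.polarCoord.symm (s, θ) ∉ Metric.ball (0 : ℂ) 1 := by
            rw [mem_ball_zero_iff, Complex.norm_polarCoord_symm, abs_of_pos hs']; exact h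
          rw [indicator_of_notMem h2]
          simp
    _ ≤ ∫⁻ p, (Ioo (0 : ℝ) 1 ×ˢ Ioo (-π) π).indicator (fun _ => (1 : ENNReal)) p :=
        setLIntegral_le_lintegral _ _
    _ = _ := by
        rw [lintegral_indicator hms, setLIntegral_one, Measure.volume_eq_prod,
          Measure.prod_prod, Real.volume_Ioo, Real.volume_Ioo]
        rw [← ENNReal.ofReal_mul (by norm_num)]
        congr 1; ring

/-- The kernel `1 / |x - y|` is at most its part on the unit disk around `x`, of integral `2π`, plus
`1`. -/
lemma lintegral_inv_norm_le (E : Set ℂ) (x : ℂ) :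
    ∫⁻ y in E, ENNReal.ofReal ‖x - y‖⁻¹ ≤ ENNReal.ofReal (2 * π) + volume E := by
  have hmp : MeasurePreserving (fun y : ℂ => x - y) volume volume :=
    Measure.measurePreserving_sub_left volume x
  have hpt : ∀ y : ℂ, ENNReal.ofReal ‖x - y‖⁻¹ ≤
      (Metric.ball (0 : ℂ) 1).indicator (fun z => ENNReal.ofReal ‖z‖⁻¹) (x - y) + 1 := by
    intro y
    by_cases h : x - y ∈ Metric.ball (0 : ℂ) 1
    · rw [indicator_of_mem h]; exact le_self_add
    · rw [indicator_of_notMem h, zero_add, ← ENNReal.ofReal_one]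
      apply ENNReal.ofReal_le_ofReal
      rw [mem_ball_zero_iff, not_lt] at h
      exact inv_le_one_of_one_le₀ h
  have hmeas : Measurable ((Metric.ball (0 : ℂ) 1).indicator (fun z => ENNReal.ofReal ‖z‖⁻¹)) :=
    (by fun_prop : Measurable fun z : ℂ => ENNReal.ofReal ‖z‖⁻¹).indicator
      Metric.isOpen_ball.measurableSet
  calc _ ≤ ∫⁻ y in E, ((Metric.ball (0 : ℂ) 1).indicator (fun z => ENNReal.ofReal ‖z‖⁻¹) (x - y) + 1) :=
        lintegral_mono hpt
    _ = (∫⁻ y in E, (Metric.ball (0 : ℂ) 1).indicator (fun z => ENNReal.ofReal ‖z‖⁻¹) (x - y)) +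
          volume E := by
        rw [lintegral_add_right _ measurable_const, setLIntegral_one]
    _ ≤ (∫⁻ y, (Metric.ball (0 : ℂ) 1).indicator (fun z => ENNReal.ofReal ‖z‖⁻¹) (x - y)) +
          volume E := 
        add_le_add (setLIntegral_le_lintegral _ _) le_rfl
    _ ≤ _ := by
        rw [hmp.lintegral_comp hmeas, lintegral_indicator Metric.isOpen_ball.measurableSet]
        gcongr
        exact lintegral_inv_norm_ball

lemma integrableOn_inv_norm {E : Set ℂ} (hE : volume E ≠ ⊤) (x : ℂ) :
    IntegrableOn (fun y => ‖x - y‖⁻¹) E := by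
  refine ⟨(by fun_prop : Measurable fun y : ℂ => ‖x - y‖⁻¹).aestronglyMeasurable, ?_⟩
  rw [hasFiniteIntegral_iff_ofReal (Filter.Eventually.of_forall fun y => by positivity)]
  exact (lintegral_inv_norm_le E x).trans_lt (ENNReal.add_lt_top.2 ⟨ENNReal.ofReal_lt_top, hE.lt_top⟩)

lemma integral_inv_norm_le {E : Set ℂ} (hE : volume E ≠ ⊤) (x : ℂ) :
    ∫ y in E, ‖x - y‖⁻¹ ≤ 2 * π + (volume E).toReal := by
  rw [integral_eq_lintegral_of_nonneg_ae (Filter.Eventually.of_forall fun y => by positivity)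
    (by fun_prop : Measurable fun y : ℂ => ‖x - y‖⁻¹).aestronglyMeasurable]
  have := ENNReal.toReal_mono (ENNReal.add_ne_top.2 ⟨ENNReal.ofReal_ne_top, hE⟩)
    (lintegral_inv_norm_le E x)
  rwa [ENNReal.toReal_add ENNReal.ofReal_ne_top hE, ENNReal.toReal_ofReal (by positivity)] at this

lemma abs_log_le_add_inv {a : ℝ} (ha : 0 ≤ a) : |Real.log a| ≤ a + a⁻¹ := by
  rcases ha.eq_or_lt with rfl | ha
  · simp
  have h1 := Real.log_le_sub_one_of_pos ha
  have h2 := Real.log_le_sub_one_of_pos (inv_pos.2 ha)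
  rw [Real.log_inv] at h2
  have : 0 < a⁻¹ := inv_pos.2 ha
  rw [abs_le]; constructor <;> linarith

lemma volume_ne_top_of_isBounded {E : Set ℂ} (hE : IsBounded E) : volume E ≠ ⊤ :=
  hE.measure_lt_top.ne

lemma integrableOn_log {E : Set ℂ} (hm : MeasurableSet E) (hE : IsBounded E) (x : ℂ) :
    IntegrableOn (fun y => Real.log ‖x - y‖) E := by
  obtain ⟨R, hR⟩ := hE.exists_norm_le
  have hv := volume_ne_top_of_isBounded hE
  have h1 : IntegrableOn (fun y => (‖x‖ + R) + ‖x - y‖⁻¹) E :=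
    (integrableOn_const hv).add (integrableOn_inv_norm hv x)
  refine Integrable.mono' h1
    (by fun_prop : Measurable fun y : ℂ => Real.log ‖x - y‖).aestronglyMeasurable ?_
  filter_upwards [ae_restrict_mem hm] with y hy
  refine (abs_log_le_add_inv (norm_nonneg _)).trans ?_
  gcongr
  exact (norm_sub_le _ _).trans (by gcongr; exact hR y hy)

lemma abs_log_sub_log_le {a b : ℝ} (ha : 0 < a) (hb : 0 < b) :
    |Real.log a - Real.log b| ≤ |a - b| * (a⁻¹ + b⁻¹) := by
  have h1 := Real.log_le_sub_one_of_pos (div_pos ha hb)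
  have h2 := Real.log_le_sub_one_of_pos (div_pos hb ha)
  rw [Real.log_div ha.ne' hb.ne'] at h1
  rw [Real.log_div hb.ne' ha.ne'] at h2
  have e1 : a / b - 1 = (a - b) * b⁻¹ := by field_simp
  have e2 : b / a - 1 = -(a - b) * a⁻¹ := by field_simp; ring
  rw [e1] at h1
  rw [e2] at h2
  have p1 := inv_pos.2 ha
  have p2 := inv_pos.2 hb
  have q1 := le_abs_self (a - b)
  have q2 := neg_le_abs (a - b)
  have q0 := abs_nonneg (a - b)
  rw [abs_le]; constructor <;> nlinarith

/-- The logarithmic potential of a bounded set is Lipschitz. -/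
lemma logPot_lipschitz {E : Set ℂ} (hm : MeasurableSet E) (hE : IsBounded E) (x x' : ℂ) :
    |logPot E x - logPot E x'| ≤ 2 * (2 * π + (volume E).toReal) * ‖x - x'‖ := by
  have hv := volume_ne_top_of_isBounded hE
  unfold logPot
  rw [← integral_sub (integrableOn_log hm hE x) (integrableOn_log hm hE x')]
  have hI := (integrableOn_inv_norm hv x).add (integrableOn_inv_norm hv x')
  have hne : ∀ z : ℂ, ∀ᵐ y : ℂ ∂(volume.restrict E), y ≠ z := fun z =>
    ae_restrict_of_ae (measure_eq_zero_iff_ae_notMem.1 (measure_singleton z))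
  calc |∫ y in E, (Real.log ‖x - y‖ - Real.log ‖x' - y‖)|
      ≤ ∫ y in E, ‖x - x'‖ * (‖x - y‖⁻¹ + ‖x' - y‖⁻¹) := by
        rw [← Real.norm_eq_abs]
        apply norm_integral_le_of_norm_le (hI.const_mul _)
        filter_upwards [hne x, hne x'] with y h1 h2
        have p1 : 0 < ‖x - y‖ := norm_pos_iff.2 (sub_ne_zero.2 h1.symm)
        have p2 : 0 < ‖x' - y‖ := norm_pos_iff.2 (sub_ne_zero.2 h2.symm)
        refine (abs_log_sub_log_le p1 p2).trans ?_
        simp only [Pi.add_apply]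
        gcongr
        have := abs_norm_sub_norm_le (x - y) (x' - y)
        simpa using this
    _ = ‖x - x'‖ * ((∫ y in E, ‖x - y‖⁻¹) + ∫ y in E, ‖x' - y‖⁻¹) := by
        rw [integral_const_mul, integral_add (integrableOn_inv_norm hv x)
          (integrableOn_inv_norm hv x')]
    _ ≤ ‖x - x'‖ * ((2 * π + (volume E).toReal) + (2 * π + (volume E).toReal)) := by
        gcongr <;> exact integral_inv_norm_le hv _
    _ = _ := by ring

/-- For `m`-fold symmetric `E`, averaging the kernel over the `m`-th roots of unity replaces
`log |x - y|` by `log |x^m - y^m| / m`. -/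
lemma logPot_symm {m : ℕ} (hm : m ≠ 0) {E : Set ℂ} (hEm : MeasurableSet E) (hE : IsBounded E)
    (hsym : ∀ ω : ℂ, ω ^ m = 1 → (fun y => ω * y) ⁻¹' E = E) (x : ℂ) :
    IntegrableOn (fun y => Real.log ‖x ^ m - y ^ m‖) E ∧
      m * logPot E x = ∫ y in E, Real.log ‖x ^ m - y ^ m‖ := by
  set S := Polynomial.nthRootsFinset m (1 : ℂ) with hS
  have hmem : ∀ ω ∈ S, ω ^ m = 1 := fun ω hω =>
    (Polynomial.mem_nthRootsFinset (Nat.pos_of_ne_zero hm) 1).1 hω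
  have hrot : ∀ ω ∈ S, IntegrableOn (fun y => Real.log ‖x - ω * y‖) E ∧
      ∫ y in E, Real.log ‖x - ω * y‖ = logPot E x := by
    intro ω hω
    have h1 := hmem ω hω
    have hn : ‖ω‖ = 1 := Complex.norm_eq_one_of_pow_eq_one h1 hm
    let a : Circle := ⟨ω, mem_sphere_zero_iff_norm.2 hn⟩
    have hmp : MeasurePreserving (rotation a) volume volume := (rotation a).measurePreserving
    have hemb : MeasurableEmbedding (rotation a) :=
      (rotation a).toHomeomorph.measurableEmbedding
    have hpre : (rotation a) ⁻¹' E = E := hsym ω h1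
    have hi := (hmp.integrableOn_comp_preimage hemb (s := E)).2 (integrableOn_log hEm hE x)
    have hj := hmp.setIntegral_preimage_emb hemb (fun y => Real.log ‖x - y‖) E
    rw [hpre] at hi hj
    exact ⟨hi, hj⟩
  have hae : ∀ᵐ y : ℂ ∂(volume.restrict E),
      Real.log ‖x ^ m - y ^ m‖ = ∑ ω ∈ S, Real.log ‖x - ω * y‖ := by
    have hne : ∀ᵐ y : ℂ ∂(volume.restrict E), ∀ ω ∈ S, y ≠ ω⁻¹ * x := by
      refine (ae_ball_iff S.countable_toSet).2 fun ω _ => ?_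
      exact ae_restrict_of_ae (measure_eq_zero_iff_ae_notMem.1 (measure_singleton (ω⁻¹ * x)))
    filter_upwards [hne] with y hy
    rw [(Complex.isPrimitiveRoot_exp m hm).pow_sub_pow_eq_prod_sub_mul x y
      (Nat.pos_of_ne_zero hm), norm_prod, Real.log_prod]
    intro ω hω h0
    rw [norm_eq_zero, sub_eq_zero] at h0
    have hω0 : ω ≠ 0 := by
      rintro rfl
      have := hmem 0 hω
      simp [hm] at this
    exact hy ω hω (by rw [h0]; field_simp)
  have hint : IntegrableOn (fun y => ∑ ω ∈ S, Real.log ‖x - ω * y‖) E :=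
    integrable_finsetSum S fun ω hω => (hrot ω hω).1
  refine ⟨hint.congr (hae.mono fun y hy => hy.symm), ?_⟩
  rw [integral_congr_ae hae, integral_finsetSum S fun ω hω => (hrot ω hω).1,
    Finset.sum_congr rfl fun ω hω => (hrot ω hω).2, Finset.sum_const,
    (Complex.isPrimitiveRoot_exp m hm).card_nthRootsFinset, nsmul_eq_mul]

/-- Lower bound for radial growth of the potential: the disk of radius `r₀` inside `E` contributes
`π r₀² log(|x₂|/|x₁|)`, and the non-radial part of the kernel costs at most `K / m`. -/
lemma logPot_sub_ge {m : ℕ} (hm : m ≠ 0) {E : Set ℂ} (hEm : MeasurableSet E) (hE : IsBounded E)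
    (hsym : ∀ ω : ℂ, ω ^ m = 1 → (fun y => ω * y) ⁻¹' E = E) {r₀ : ℝ} (h0 : 0 < r₀)
    (hball : Metric.ball 0 r₀ ⊆ E) {x₁ x₂ : ℂ} (h1 : r₀ ≤ ‖x₁‖) (h12 : ‖x₁‖ ≤ ‖x₂‖) {K : ℝ}
    (hK0 : 0 ≤ K)
    (hK : ∫⁻ y : ℂ, ‖angKer m x₂ y - angKer m x₁ y‖ₑ ≤ ENNReal.ofReal K) :
    π * r₀ ^ 2 * Real.log (‖x₂‖ / ‖x₁‖) - K / m ≤ logPot E x₂ - logPot E x₁ := by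
  have hv := volume_ne_top_of_isBounded hE
  have hmR : (0 : ℝ) < m := by positivity
  have p1 : 0 < ‖x₁‖ := h0.trans_le h1
  have p2 : 0 < ‖x₂‖ := p1.trans_le h12
  have hmax : ∀ x : ℂ, 0 < ‖x‖ → IntegrableOn (fun y => Real.log (max ‖x‖ ‖y‖)) E := by
    intro x hx
    have hc : Continuous fun y : ℂ => Real.log (max ‖x‖ ‖y‖) :=
      Continuous.log (by fun_prop) fun y => (lt_max_of_lt_left hx).ne'
    exact (hc.locallyIntegrable.integrableOn_isCompact hE.isCompact_closure).mono_set subset_closure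
  obtain ⟨i1, e1⟩ := logPot_symm hm hEm hE hsym x₁
  obtain ⟨i2, e2⟩ := logPot_symm hm hEm hE hsym x₂
  have j1 := hmax x₁ p1
  have j2 := hmax x₂ p2
  have k1 : IntegrableOn (angKer m x₁) E := i1.sub (j1.const_mul _)
  have k2 : IntegrableOn (angKer m x₂) E := i2.sub (j2.const_mul _)
  have hdecomp : m * (logPot E x₂ - logPot E x₁) =
      m * (∫ y in E, (Real.log (max ‖x₂‖ ‖y‖) - Real.log (max ‖x₁‖ ‖y‖))) +
        ∫ y in E, (angKer m x₂ y - angKer m x₁ y) := by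
    have a1 : IntegrableOn (fun y => m * (Real.log (max ‖x₂‖ ‖y‖) - Real.log (max ‖x₁‖ ‖y‖))) E :=
      (j2.sub j1).const_mul _
    have a2 : IntegrableOn (fun y => angKer m x₂ y - angKer m x₁ y) E := k2.sub k1
    rw [mul_sub, e1, e2, ← integral_sub i2 i1, ← integral_const_mul, ← integral_add a1 a2]
    congr 1
    ext y
    simp only [angKer]
    ring
  have hang : -K ≤ ∫ y in E, (angKer m x₂ y - angKer m x₁ y) := by
    have hn : ‖∫ y in E, (angKer m x₂ y - angKer m x₁ y)‖ₑ ≤ ENNReal.ofReal K :=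
      (enorm_integral_le_lintegral_enorm _).trans ((setLIntegral_le_lintegral _ _).trans hK)
    rw [← ofReal_norm, ENNReal.ofReal_le_ofReal_iff hK0, Real.norm_eq_abs] at hn
    exact (abs_le.1 hn).1
  have hrad : π * r₀ ^ 2 * Real.log (‖x₂‖ / ‖x₁‖) ≤
      ∫ y in E, (Real.log (max ‖x₂‖ ‖y‖) - Real.log (max ‖x₁‖ ‖y‖)) := by
    have hball_eq : ∫ y in Metric.ball (0 : ℂ) r₀,
        (Real.log (max ‖x₂‖ ‖y‖) - Real.log (max ‖x₁‖ ‖y‖)) =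
        π * r₀ ^ 2 * Real.log (‖x₂‖ / ‖x₁‖) := by
      have : ∀ y ∈ Metric.ball (0 : ℂ) r₀,
          Real.log (max ‖x₂‖ ‖y‖) - Real.log (max ‖x₁‖ ‖y‖) = Real.log (‖x₂‖ / ‖x₁‖) := by
        intro y hy
        rw [mem_ball_zero_iff] at hy
        rw [max_eq_left (by linarith), max_eq_left (by linarith), Real.log_div p2.ne' p1.ne']
      rw [setIntegral_congr_fun Metric.isOpen_ball.measurableSet this, setIntegral_const,
        Measure.real, Complex.volume_ball]
      simp only [ENNReal.toReal_mul, ENNReal.toReal_pow, ENNReal.toReal_ofReal h0.le, smul_eq_mul,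
        ENNReal.coe_toReal, NNReal.coe_real_pi]
      ring
    rw [← hball_eq]
    apply setIntegral_mono_set (j2.sub j1) _ hball.eventuallyLE
    refine Filter.Eventually.of_forall fun y => ?_
    have : Real.log (max ‖x₁‖ ‖y‖) ≤ Real.log (max ‖x₂‖ ‖y‖) :=
      Real.log_le_log (lt_max_of_lt_left p1) (max_le_max_right _ h12)
    simpa using this
  have hfin : m * (π * r₀ ^ 2 * Real.log (‖x₂‖ / ‖x₁‖) - K / m) ≤
      m * (logPot E x₂ - logPot E x₁) := by
    rw [hdecomp, mul_sub, mul_div_cancel₀ _ hmR.ne']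
    have := mul_le_mul_of_nonneg_left hrad hmR.le
    linarith
  exact le_of_mul_le_mul_left hfin hmR

/-! ### Growth of the stream function -/

/-- The relative stream function on `ℂ`, written with the logarithmic potential. -/
def psi (E : Set ℂ) (Ω : ℝ) (x : ℂ) : ℝ := logPot E x / (2 * π) - Ω / 2 * ‖x‖ ^ 2

/-- The standing hypotheses on the patch, transported to `ℂ`: `E` is a bounded open set invariant
under all `m`-th roots of unity, `r₀` is the radius of a disk contained in `E`, and `Ω` lies below
`1/2` by more than `200 / m`. -/
structure PatchHyp (m : ℕ) (E : Set ℂ) (Ω r₀ : ℝ) : Prop where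
  hm : 6 ≤ m
  isOpen : IsOpen E
  bdd : IsBounded E
  sym : ∀ ω : ℂ, ω ^ m = 1 → (fun y => ω * y) ⁻¹' E = E
  pos : 0 < r₀
  ball : Metric.ball 0 r₀ ⊆ E
  gap : 200 / m < 1 / 2 - Ω

/-- Growth of `psi` across the annulus, up to the loss `K` from the non-radial kernel. The disk of
radius `r₀` gives at least `(1/4 - 1/m) (|x₂|² - |x₁|²)`, and the rotation term takes away
`Ω/2 (|x₂|² - |x₁|²)`. -/
lemma PatchHyp.growth {m : ℕ} {E : Set ℂ} {Ω r₀ : ℝ} (H : PatchHyp m E Ω r₀) {x₁ x₂ : ℂ}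
    (h1 : r₀ ≤ ‖x₁‖) (h12 : ‖x₁‖ ≤ ‖x₂‖) (h2 : ‖x₂‖ ≤ r₀ * (1 + 2 / m)) {K : ℝ} (hK0 : 0 ≤ K)
    (hK : ∫⁻ y : ℂ, ‖angKer m x₂ y - angKer m x₁ y‖ₑ ≤ ENNReal.ofReal K) :
    99 / m * (‖x₂‖ ^ 2 - ‖x₁‖ ^ 2) - K / (2 * π * m) ≤ psi E Ω x₂ - psi E Ω x₁ := by
  have hm0 : m ≠ 0 := by have := H.hm; omega
  have hmR : (0 : ℝ) < m := by positivity
  have hpos := H.pos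
  have hlow := logPot_sub_ge hm0 H.isOpen.measurableSet H.bdd H.sym H.pos H.ball h1 h12 hK0 hK
  generalize hρ₁ : ‖x₁‖ = ρ₁ at *
  generalize hρ₂ : ‖x₂‖ = ρ₂ at *
  have p1 : 0 < ρ₁ := by linarith
  have p2 : 0 < ρ₂ := by linarith
  have hlog : (ρ₂ ^ 2 - ρ₁ ^ 2) / (2 * ρ₂ ^ 2) ≤ Real.log (ρ₂ / ρ₁) := by
    have h := Real.log_le_sub_one_of_pos (show 0 < (ρ₁ / ρ₂) ^ 2 by positivity)
    rw [Real.log_pow, ← inv_div ρ₂ ρ₁, Real.log_inv] at h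
    have e : (ρ₂ ^ 2 - ρ₁ ^ 2) / (2 * ρ₂ ^ 2) = (1 - ((ρ₂ / ρ₁)⁻¹) ^ 2) / 2 := by field_simp
    rw [e]; push_cast at h; linarith
  have hd : 0 ≤ ρ₂ ^ 2 - ρ₁ ^ 2 := by nlinarith
  have hcoef : 1 - 4 / m ≤ r₀ ^ 2 / ρ₂ ^ 2 := by
    rw [le_div_iff₀ (by positivity)]
    set t : ℝ := 2 / m with ht
    have ht0 : 0 ≤ t := by positivity
    have e : (4 : ℝ) / m = 2 * t := by rw [ht]; ring
    rw [e]
    have hsq : ρ₂ ^ 2 ≤ r₀ ^ 2 * (1 + t) ^ 2 := by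
      rw [← mul_pow]; exact pow_le_pow_left₀ p2.le h2 2
    rcases le_or_gt 0 (1 - 2 * t) with hc | hc
    · have : (1 - 2 * t) * (1 + t) ^ 2 ≤ 1 := by nlinarith [pow_nonneg ht0 3, pow_nonneg ht0 2]
      calc (1 - 2 * t) * ρ₂ ^ 2 ≤ (1 - 2 * t) * (r₀ ^ 2 * (1 + t) ^ 2) := by gcongr
        _ = r₀ ^ 2 * ((1 - 2 * t) * (1 + t) ^ 2) := by ring
        _ ≤ r₀ ^ 2 * 1 := by gcongr
        _ = _ := mul_one _
    · nlinarith [sq_nonneg ρ₂, sq_nonneg r₀]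
  have hmain : (ρ₂ ^ 2 - ρ₁ ^ 2) * (1 / 4 - 1 / m) - K / (2 * π * m) ≤
      (logPot E x₂ - logPot E x₁) / (2 * π) := by
    rw [le_div_iff₀ (by positivity)]
    have e : ((ρ₂ ^ 2 - ρ₁ ^ 2) * (1 / 4 - 1 / m) - K / (2 * π * m)) * (2 * π) =
        π * ((ρ₂ ^ 2 - ρ₁ ^ 2) / 2) * (1 - 4 / m) - K / m := by field_simp; ring
    rw [e]
    have : π * ((ρ₂ ^ 2 - ρ₁ ^ 2) / 2) * (1 - 4 / m) ≤ π * r₀ ^ 2 * Real.log (ρ₂ / ρ₁) := by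
      calc _ ≤ π * ((ρ₂ ^ 2 - ρ₁ ^ 2) / 2) * (r₀ ^ 2 / ρ₂ ^ 2) := by gcongr
        _ = π * r₀ ^ 2 * ((ρ₂ ^ 2 - ρ₁ ^ 2) / (2 * ρ₂ ^ 2)) := by field_simp
        _ ≤ _ := by gcongr
    linarith
  have hg := H.gap
  have e3 : psi E Ω x₂ - psi E Ω x₁ =
      (logPot E x₂ - logPot E x₁) / (2 * π) - Ω / 2 * (ρ₂ ^ 2 - ρ₁ ^ 2) := by
    simp only [psi, hρ₁, hρ₂]; ring
  have h4 : 99 / m * (ρ₂ ^ 2 - ρ₁ ^ 2) ≤ (1 / 4 - 1 / m - Ω / 2) * (ρ₂ ^ 2 - ρ₁ ^ 2) := by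
    gcongr
    have e1 : (99 : ℝ) / m = (200 / m) / 2 - 1 / m := by ring
    rw [e1]; linarith
  rw [e3]
  linarith

/-- Along a ray the loss from the angular part of the kernel is itself proportional to the radial
increment, so `psi` increases at a definite rate. -/
lemma PatchHyp.radial_growth {m : ℕ} {E : Set ℂ} {Ω r₀ : ℝ} (H : PatchHyp m E Ω r₀) {ρ₁ ρ₂ : ℝ}
    {e : ℂ} (he : ‖e‖ = 1) (h1 : r₀ ≤ ρ₁) (h12 : ρ₁ ≤ ρ₂) (h2 : ρ₂ ≤ r₀ * (1 + 2 / m)) :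
    85 / m * (ρ₂ ^ 2 - ρ₁ ^ 2) ≤ psi E Ω (ρ₂ * e) - psi E Ω (ρ₁ * e) := by
  have hm0 : m ≠ 0 := by have := H.hm; omega
  have hpos := H.pos
  have p1 : 0 < ρ₁ := by linarith
  have p2 : 0 < ρ₂ := by linarith
  have n1 : ‖(ρ₁ : ℂ) * e‖ = ρ₁ := by simp [he, abs_of_pos p1]
  have n2 : ‖(ρ₂ : ℂ) * e‖ = ρ₂ := by simp [he, abs_of_pos p2]
  have hd : 0 ≤ ρ₂ ^ 2 - ρ₁ ^ 2 := by nlinarith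
  have := H.growth (x₁ := ρ₁ * e) (x₂ := ρ₂ * e) (by rwa [n1]) (by rwa [n1, n2]) (by rwa [n2])
    (by positivity) (lintegral_angKer_radial_le H.hm p1.le h12 p2 he)
  rw [n1, n2] at this
  refine le_trans (le_of_eq ?_) this
  field_simp
  ring

/-- From the circle of radius `r₀` to the circle of radius `r₀ (1 + 1/m)` the function `psi`
increases strictly, whatever the two directions. -/
lemma PatchHyp.ring_growth {m : ℕ} {E : Set ℂ} {Ω r₀ : ℝ} (H : PatchHyp m E Ω r₀) {x₁ x₂ : ℂ}
    (h1 : ‖x₁‖ = r₀) (h2 : ‖x₂‖ = r₀ * (1 + 1 / m)) : psi E Ω x₁ < psi E Ω x₂ := by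
  have hm0 : m ≠ 0 := by have := H.hm; omega
  have hmR : (0 : ℝ) < m := by positivity
  have hpos := H.pos
  have hi : (0 : ℝ) < 1 / m := by positivity
  have hi1 : (1 : ℝ) / m ≤ 1 := by
    rw [div_le_one hmR]; exact_mod_cast Nat.one_le_iff_ne_zero.2 hm0
  have hK : ∫⁻ y : ℂ, ‖angKer m x₂ y - angKer m x₁ y‖ₑ ≤
      ENNReal.ofReal (12 * π * ‖x₂‖ ^ 2 / m + 12 * π * ‖x₁‖ ^ 2 / m) := by
    rw [ENNReal.ofReal_add (by positivity) (by positivity)]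
    refine le_trans ?_ (add_le_add (lintegral_angKer_le H.hm x₂) (lintegral_angKer_le H.hm x₁))
    rw [← lintegral_add_left (measurable_angKer m x₂).enorm]
    exact lintegral_mono fun y => enorm_sub_le
  have hg := H.growth (x₁ := x₁) (x₂ := x₂) h1.ge (by rw [h1, h2]; nlinarith)
    (by rw [h2, show (2 : ℝ) / m = 2 * (1 / m) by ring]; nlinarith) (by positivity) hK
  have e : 99 / (m : ℝ) * (‖x₂‖ ^ 2 - ‖x₁‖ ^ 2) -
      (12 * π * ‖x₂‖ ^ 2 / m + 12 * π * ‖x₁‖ ^ 2 / m) / (2 * π * m) =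
      (r₀ / m) ^ 2 * (99 * (2 + 1 / m) - 6 * (1 + (1 + 1 / m) ^ 2)) := by
    rw [h1, h2]; field_simp; ring
  have : 0 < (r₀ / m) ^ 2 * (99 * (2 + 1 / m) - 6 * (1 + (1 + 1 / m) ^ 2)) := by
    apply mul_pos (by positivity)
    nlinarith
  linarith

/-! ### Topology of the boundary -/

/-- An `m`-fold symmetric simply connected open set contains the origin. Otherwise it carries a
branch `L` of the logarithm; `L (ζ z) - L z` equals `2πi/m + 2πik` with a constant integer `k`, and
summing over a full turn gives `1 + m k = 0`. -/
lemma zero_mem_of_symm {m : ℕ} (hm : 2 ≤ m) {E : Set ℂ} (hE : IsOpen E) (hs : IsSimplyConnected E)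
    (hsym : ∀ ω : ℂ, ω ^ m = 1 → (fun y => ω * y) ⁻¹' E = E) : (0 : ℂ) ∈ E := by
  by_contra h0
  have hmC : (m : ℂ) ≠ 0 := by
    have : m ≠ 0 := by omega
    exact_mod_cast this
  obtain ⟨L, hLc, hL⟩ := Complex.exists_continuousOn_eqOn_exp_comp hs hE (g := fun z => z)
    continuousOn_id (by simpa using h0)
  set ζ : ℂ := Complex.exp (2 * π * Complex.I / m) with hζ
  have hζm : ζ ^ m = 1 := by
    rw [hζ, ← Complex.exp_nat_mul, mul_div_cancel₀ _ hmC, Complex.exp_two_pi_mul_I]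
  have hmap : ∀ z ∈ E, ζ * z ∈ E := fun z hz => by
    have := hsym ζ hζm
    rw [← this] at hz
    exact hz
  have hk : ∀ z ∈ E, ∃ k : ℤ, L (ζ * z) = L z + 2 * π * Complex.I / m + k * (2 * π * Complex.I) := by
    intro z hz
    have h1 : Complex.exp (L (ζ * z)) = ζ * z := hL (hmap z hz)
    have h2 : Complex.exp (L z) = z := hL hz
    have h3 : Complex.exp (L (ζ * z)) = Complex.exp (L z + 2 * π * Complex.I / m) := by
      rw [Complex.exp_add, h1, h2, mul_comm]
    exact Complex.exp_eq_exp_iff_exists_int.1 h3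
  choose! k hk using hk
  have hconst : ∀ z ∈ E, ∀ w ∈ E, k z = k w := by
    have hf : ContinuousOn (fun z => ((L (ζ * z) - L z - 2 * π * Complex.I / m) /
        (2 * π * Complex.I)).re) E := by
      refine Complex.continuous_re.comp_continuousOn (ContinuousOn.div_const ?_ _)
      exact ((hLc.comp (by fun_prop) hmap).sub hLc).sub continuousOn_const
    have hval : ∀ z ∈ E, ((L (ζ * z) - L z - 2 * π * Complex.I / m) /
        (2 * π * Complex.I)).re = k z := by
      intro z hz
      rw [hk z hz, show L z + 2 * π * Complex.I / m + k z * (2 * π * Complex.I) - L z -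
        2 * π * Complex.I / m = k z * (2 * π * Complex.I) by ring,
        mul_div_cancel_right₀ _ Complex.two_pi_I_ne_zero]
      simp
    have hpre := hs.isPathConnected.isConnected.isPreconnected.image _ hf
    have key : ∀ z ∈ E, ∀ w ∈ E, ¬ k z < k w := by
      intro z hz w hw hlt
      obtain ⟨v, hv, hv'⟩ := hpre.ordConnected.out ⟨z, hz, hval z hz⟩ ⟨w, hw, hval w hw⟩
        (show (k z : ℝ) + 1 / 2 ∈ Icc (k z : ℝ) (k w) from ⟨by linarith, by
          have : (k z : ℝ) + 1 ≤ k w := by exact_mod_cast hlt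
          linarith⟩)
      simp only at hv'
      rw [hval v hv] at hv'
      have h2 : (2 * k v : ℝ) = 2 * k z + 1 := by linarith
      have h3 : 2 * k v = 2 * k z + 1 := by exact_mod_cast h2
      omega
    intro z hz w hw
    exact le_antisymm (not_lt.1 (key w hw z hz)) (not_lt.1 (key z hz w hw))
  obtain ⟨z, hz⟩ := hs.nonempty
  have horb : ∀ j : ℕ, ζ ^ j * z ∈ E ∧
      L (ζ ^ j * z) = L z + j * (2 * π * Complex.I / m + k z * (2 * π * Complex.I)) := by
    intro j
    induction j with
    | zero => simp [hz]
    | succ j ih =>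
      obtain ⟨i1, i2⟩ := ih
      have e : ζ ^ (j + 1) * z = ζ * (ζ ^ j * z) := by ring
      rw [e]
      refine ⟨hmap _ i1, ?_⟩
      rw [hk _ i1, i2, hconst _ i1 _ hz]
      push_cast; ring
  have hfin := (horb m).2
  rw [hζm, one_mul] at hfin
  have h1 : (2 * π * Complex.I) * (1 + m * k z) = 0 := by
    have : (m : ℂ) * (2 * π * Complex.I / m + k z * (2 * π * Complex.I)) =
      (2 * π * Complex.I) * (1 + m * k z) := by field_simp
    rw [← this]
    linear_combination -hfin
  rcases mul_eq_zero.1 h1 with h | h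
  · exact Complex.two_pi_I_ne_zero h
  · have h' : (1 : ℤ) + m * k z = 0 := by exact_mod_cast h
    have hdvd : (m : ℤ) ∣ 1 := ⟨-k z, by linarith⟩
    have := Int.le_of_dvd one_pos hdvd
    omega

lemma IsPreconnected.subset_of_disjoint_frontier {X : Type*} [TopologicalSpace X] {T U : Set X}
    (hT : IsPreconnected T) (hU : IsOpen U) (hne : (T ∩ U).Nonempty) (hd : Disjoint T (frontier U)) :
    T ⊆ U := by
  refine hT.subset_left_of_subset_union hU isClosed_closure.isOpen_compl
    (disjoint_compl_right.mono_left subset_closure) ?_ hne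
  intro x hx
  by_cases h : x ∈ closure U
  · left
    by_contra h'
    exact disjoint_left.1 hd hx ⟨h, by rwa [hU.interior_eq]⟩
  · exact Or.inr h

/-- The half-line issued outwards from a point of a bounded open set meets the boundary. -/
lemma exists_frontier_on_ray {E : Set ℂ} (hE : IsOpen E) (hb : IsBounded E) {x e : ℂ} (hx : x ∈ E)
    (he : e ≠ 0) : ∃ t : ℝ, 0 < t ∧ x + t * e ∈ frontier E := by
  by_contra! hcon
  have hcont : Continuous fun t : ℝ => x + t * e := by fun_prop
  have hpre : IsPreconnected ((fun t : ℝ => x + t * e) '' Ici 0) :=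
    isPreconnected_Ici.image _ hcont.continuousOn
  have hsub := hpre.subset_of_disjoint_frontier hE ⟨x, ⟨0, by simp, by simp⟩, hx⟩ (by
    rw [disjoint_left]
    rintro _ ⟨t, ht, rfl⟩ hf
    rcases (show (0 : ℝ) ≤ t from ht).eq_or_lt with rfl | ht'
    · simp only [Complex.ofReal_zero, zero_mul, add_zero] at hf
      exact hf.2 (by rwa [hE.interior_eq])
    · exact hcon t ht' hf)
  obtain ⟨R, hR⟩ := hb.exists_norm_le
  have hep : 0 < ‖e‖ := norm_pos_iff.2 he
  have hR0 : 0 ≤ R := (norm_nonneg x).trans (hR x hx)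
  set t : ℝ := (2 * R + 1) / ‖e‖ with ht
  have ht0 : 0 ≤ t := by positivity
  have h1 := hR _ (hsub ⟨t, ht0, rfl⟩)
  have h2 : ‖(t : ℂ) * e‖ = 2 * R + 1 := by
    rw [norm_mul, Complex.norm_real, Real.norm_eq_abs, abs_of_nonneg ht0, ht]
    field_simp
  have h3 := norm_sub_norm_le ((t : ℂ) * e) (-x)
  rw [norm_neg, sub_neg_eq_add, add_comm ((t : ℂ) * e)] at h3
  have := hR x hx
  simp only at h1
  linarith

lemma ball_subset_of_frontier {E : Set ℂ} (hE : IsOpen E) (h0 : (0 : ℂ) ∈ E) {r : ℝ} (hr : 0 < r)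
    (hF : ∀ x ∈ frontier E, r ≤ ‖x‖) : Metric.ball 0 r ⊆ E := by
  refine (convex_ball (0 : ℂ) r).isPreconnected.subset_of_disjoint_frontier hE
    ⟨0, Metric.mem_ball_self hr, h0⟩ ?_
  rw [disjoint_left]
  intro x hx hx'
  have := hF x hx'
  rw [mem_ball_zero_iff] at hx
  linarith

lemma subset_closedBall_of_frontier {E : Set ℂ} (hE : IsOpen E) (hb : IsBounded E) {R : ℝ}
    (hR : 0 ≤ R) (hF : ∀ x ∈ frontier E, ‖x‖ ≤ R) : E ⊆ Metric.closedBall 0 R := by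
  intro x hx
  rw [mem_closedBall_zero_iff]
  rcases eq_or_ne x 0 with rfl | hx0
  · simpa using hR
  obtain ⟨t, ht, hf⟩ := exists_frontier_on_ray hE hb hx hx0
  have h1 := hF _ hf
  have e : x + (t : ℂ) * x = ((1 + t : ℝ) : ℂ) * x := by push_cast; ring
  rw [e, norm_mul, Complex.norm_real, Real.norm_eq_abs, abs_of_pos (by linarith)] at h1
  nlinarith [norm_nonneg x]

/-- If `E` has area `π`, its boundary meets both the closed unit disk and the closed exterior of
the unit disk: bounds `r ≤ |x| ≤ R` on the boundary force `r ≤ 1 ≤ R`. -/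
lemma radii_of_area {E : Set ℂ} (hE : IsOpen E) (hb : IsBounded E) (h0 : (0 : ℂ) ∈ E)
    (hv : volume E = ENNReal.ofReal π) {r R : ℝ} (hr : 0 < r) (hR : 0 ≤ R)
    (hF : ∀ x ∈ frontier E, r ≤ ‖x‖ ∧ ‖x‖ ≤ R) : r ≤ 1 ∧ 1 ≤ R := by
  have hπ := Real.pi_pos
  have vol : ∀ s : ℝ, 0 ≤ s → ENNReal.ofReal s ^ 2 * (NNReal.pi : ENNReal) =
      ENNReal.ofReal (π * s ^ 2) := by
    intro s hs
    rw [mul_comm, ENNReal.ofReal_mul hπ.le, ENNReal.ofReal_pow hs]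
    congr 1
    rw [← NNReal.coe_real_pi, ENNReal.ofReal_coe_nnreal]
  have h1 := measure_mono (μ := volume) (ball_subset_of_frontier hE h0 hr fun x hx => (hF x hx).1)
  have h2 := measure_mono (μ := volume)
    (subset_closedBall_of_frontier hE hb hR fun x hx => (hF x hx).2)
  rw [hv, Complex.volume_ball, vol r hr.le, ENNReal.ofReal_le_ofReal_iff hπ.le] at h1
  rw [hv, Complex.volume_closedBall, vol R hR,
    ENNReal.ofReal_le_ofReal_iff (by positivity)] at h2
  constructor
  · have : r ^ 2 ≤ 1 := by
      by_contra! h; nlinarith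
    nlinarith
  · have : 1 ≤ R ^ 2 := by
      by_contra! h; nlinarith
    nlinarith

/-! ### Regularity of the polar graph -/

lemma psi_lipschitz {E : Set ℂ} (hE : IsOpen E) (hb : IsBounded E) (Ω : ℝ) {M : ℝ} {x y : ℂ}
    (hx : ‖x‖ ≤ M) (hy : ‖y‖ ≤ M) :
    |psi E Ω x - psi E Ω y| ≤
      (2 * (2 * π + (volume E).toReal) / (2 * π) + |Ω| * M) * ‖x - y‖ := by
  have h1 := logPot_lipschitz hE.measurableSet hb x y
  have e : psi E Ω x - psi E Ω y =
      (logPot E x - logPot E y) / (2 * π) - Ω * ((‖x‖ - ‖y‖) * ((‖x‖ + ‖y‖) / 2)) := by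
    simp only [psi]; ring
  have h2 := abs_norm_sub_norm_le x y
  rw [e, add_mul]
  refine (abs_sub _ _).trans (add_le_add ?_ ?_)
  · rw [abs_div, abs_of_pos (by positivity : 0 < 2 * π), div_mul_eq_mul_div]
    gcongr
  · rw [abs_mul, abs_mul, abs_of_nonneg (by positivity : 0 ≤ (‖x‖ + ‖y‖) / 2), mul_assoc]
    have : (‖x‖ + ‖y‖) / 2 ≤ M := by linarith
    rw [mul_comm M]
    gcongr

/-- A curve in the annulus on which `psi` is constant is never tangent to the radial direction: in
that direction `psi` grows at a definite rate, while it is Lipschitz. -/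
lemma PatchHyp.not_radial {m : ℕ} {E : Set ℂ} {Ω r₀ : ℝ} (H : PatchHyp m E Ω r₀) {γ : ℝ → ℂ}
    {t₀ c σ : ℝ} {d e : ℂ} (hγ : HasDerivAt γ d t₀)
    (hF : ∀ t, r₀ ≤ ‖γ t‖ ∧ ‖γ t‖ ≤ r₀ * (1 + 1 / m)) (hc : ∀ t, psi E Ω (γ t) = c)
    (he : ‖e‖ = 1) (h0 : γ t₀ = ‖γ t₀‖ * e) (hd : d = σ * e) : σ = 0 := by
  by_contra hσ
  have hm0 : m ≠ 0 := by have := H.hm; omega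
  have hmR : (0 : ℝ) < m := by positivity
  have hpos := H.pos
  set ρ := ‖γ t₀‖ with hρ
  have hρ0 : 0 < ρ := hpos.trans_le (hF t₀).1
  have hσa : 0 < |σ| := abs_pos.2 hσ
  set M := r₀ * (1 + 2 / m) with hM
  have hM1 : r₀ * (1 + 1 / m) < M := by rw [hM]; gcongr; norm_num
  have hM0 : 0 < M := by positivity
  set C := 2 * (2 * π + (volume E).toReal) / (2 * π) + |Ω| * M with hC
  have hC0 : 0 ≤ C := by positivity
  set κ : ℝ := 85 / m * (2 * ρ) with hκ
  have hκ0 : 0 < κ := by positivity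
  have hε : 0 < κ * |σ| / (C + 1) := by positivity
  have hlit := (hasDerivAt_iff_isLittleO_nhds_zero.1 hγ).def hε
  have htend : Filter.Tendsto (fun τ : ℝ => τ * σ) (nhdsWithin 0 (Ioi 0)) (nhds 0) := by
    have : Filter.Tendsto (fun τ : ℝ => τ * σ) (nhds 0) (nhds (0 * σ)) :=
      (continuous_id.mul continuous_const).tendsto 0
    rw [zero_mul] at this
    exact this.mono_left nhdsWithin_le_nhds
  have htend2 : Filter.Tendsto (fun τ : ℝ => ρ + τ * σ ^ 2) (nhdsWithin 0 (Ioi 0)) (nhds ρ) := by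
    have : Filter.Tendsto (fun τ : ℝ => ρ + τ * σ ^ 2) (nhds 0) (nhds (ρ + 0 * σ ^ 2)) :=
      (by fun_prop : Continuous fun τ : ℝ => ρ + τ * σ ^ 2).tendsto 0
    rw [zero_mul, add_zero] at this
    exact this.mono_left nhdsWithin_le_nhds
  obtain ⟨τ, hτ1, hτ2, hτ3⟩ := ((htend.eventually hlit).and
    ((htend2.eventually (gt_mem_nhds ((hF t₀).2.trans_lt hM1))).and
      self_mem_nhdsWithin)).exists
  have hτ : 0 < τ := hτ3
  set y : ℂ := ((ρ + τ * σ ^ 2 : ℝ) : ℂ) * e with hy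
  have hyn : ‖y‖ = ρ + τ * σ ^ 2 := by
    rw [hy, norm_mul, he, mul_one, Complex.norm_real, Real.norm_eq_abs, abs_of_pos (by positivity)]
  have hgrow := H.radial_growth he (hF t₀).1
    (show ρ ≤ ρ + τ * σ ^ 2 by nlinarith [sq_nonneg σ]) hτ2.le
  rw [← hy, ← h0, hc] at hgrow
  have hlip := psi_lipschitz H.isOpen H.bdd Ω (x := y) (y := γ (t₀ + τ * σ)) (M := M)
    (by rw [hyn]; exact hτ2.le) ((hF _).2.trans hM1.le)
  rw [hc, ← hC] at hlip
  have hdist : ‖y - γ (t₀ + τ * σ)‖ ≤ κ * |σ| / (C + 1) * (τ * |σ|) := by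
    have e1 : y - γ (t₀ + τ * σ) = -(γ (t₀ + τ * σ) - γ t₀ - (τ * σ) • d) := by
      rw [hy, hd, h0, Complex.real_smul]; push_cast; ring
    rw [e1, norm_neg]
    refine hτ1.trans (le_of_eq ?_)
    rw [Real.norm_eq_abs, abs_mul, abs_of_pos hτ]
  have h1 : κ * (τ * |σ| ^ 2) ≤ C * (κ * |σ| / (C + 1) * (τ * |σ|)) := by
    calc κ * (τ * |σ| ^ 2) ≤ 85 / m * ((ρ + τ * σ ^ 2) ^ 2 - ρ ^ 2) := by
          rw [sq_abs, hκ, mul_assoc]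
          gcongr
          nlinarith [sq_nonneg (τ * σ ^ 2)]
      _ ≤ C * ‖y - γ (t₀ + τ * σ)‖ := hgrow.trans ((le_abs_self _).trans hlip)
      _ ≤ _ := by gcongr
  have h2 : C * (κ * |σ| / (C + 1) * (τ * |σ|)) = κ * (τ * |σ| ^ 2) * (C / (C + 1)) := by ring
  have h3 : C / (C + 1) < 1 := by rw [div_lt_one (by positivity)]; linarith
  have h4 : 0 < κ * (τ * |σ| ^ 2) := by positivity
  nlinarith

/-- Near a point where the curve crosses its ray transversally, the polar angle is a local `C¹`
coordinate on the curve, so the radius is a `C¹` function of the angle. -/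
lemma contDiffAt_radius {γ : ℝ → ℂ} (hγ : ContDiff ℝ 1 γ) {ρ : ℝ → ℝ}
    (hρ : ∀ t θ : ℝ, γ t = ‖γ t‖ * Complex.exp (θ * Complex.I) → ρ θ = ‖γ t‖) {t₀ θ₀ : ℝ}
    (h0 : γ t₀ = ‖γ t₀‖ * Complex.exp (θ₀ * Complex.I)) (hne : γ t₀ ≠ 0)
    (htr : (deriv γ t₀ * Complex.exp (-(θ₀ * Complex.I))).im ≠ 0) : ContDiffAt ℝ 1 ρ θ₀ := by
  set w : ℂ := Complex.exp (-(θ₀ * Complex.I)) with hw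
  have hwe : Complex.exp (θ₀ * Complex.I) * w = 1 := by rw [hw, ← Complex.exp_add]; simp
  have hn0 : 0 < ‖γ t₀‖ := norm_pos_iff.2 hne
  have hg0 : γ t₀ * w = (‖γ t₀‖ : ℝ) := by
    conv_lhs => rw [h0]
    rw [mul_assoc, hwe, mul_one]
  have hslit : γ t₀ * w ∈ Complex.slitPlane := by
    rw [hg0]; exact Complex.ofReal_mem_slitPlane.2 hn0
  set a : ℝ → ℝ := fun t => (Complex.log (γ t * w)).im with ha
  have hac : ContDiffAt ℝ 1 a t₀ := by
    have h1 : ContDiffAt ℝ 1 (fun t => γ t * w) t₀ := hγ.contDiffAt.mul contDiffAt_const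
    have h2 : ContDiffAt ℝ 1 Complex.log (γ t₀ * w) :=
      (Complex.contDiffAt_log hslit).restrict_scalars ℝ
    have h3 : ContDiffAt ℝ 1 (fun t => Complex.log (γ t * w)) t₀ :=
      ContDiffAt.comp t₀ (g := Complex.log) h2 h1
    exact Complex.imCLM.contDiff.contDiffAt.comp t₀ h3
  have hd : HasDerivAt γ (deriv γ t₀) t₀ :=
    (hγ.differentiable one_ne_zero).differentiableAt.hasDerivAt
  set δ : ℝ := (deriv γ t₀ * w / (γ t₀ * w)).im with hδ
  have had : HasDerivAt a δ t₀ := by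
    have h1 := (hd.mul_const w).clog_real hslit
    exact (Complex.imCLM.hasFDerivAt.comp_hasDerivAt t₀ h1)
  have hδ0 : δ ≠ 0 := by
    rw [hδ, hg0, Complex.div_ofReal_im]
    exact div_ne_zero htr hn0.ne'
  have hfd : HasFDerivAt a
      ((ContinuousLinearEquiv.unitsEquivAut ℝ (Units.mk0 δ hδ0) : ℝ ≃L[ℝ] ℝ) : ℝ →L[ℝ] ℝ) t₀ := by
    convert! had.hasFDerivAt using 1
  have hst := hac.hasStrictFDerivAt' hfd one_ne_zero
  have hb := hac.to_localInverse hfd one_ne_zero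
  set b := hac.localInverse hfd one_ne_zero with hb'
  have hb0 : b (a t₀) = t₀ := hac.localInverse_apply_image hfd one_ne_zero
  have hbr : ∀ᶠ s in nhds (a t₀), a (b s) = s := hst.eventually_right_inverse
  have ha0 : a t₀ = 0 := by
    simp only [ha, hg0, Complex.log_im, Complex.arg_ofReal_of_nonneg hn0.le]
  rw [ha0] at hb hbr hb0
  have hsub : Filter.Tendsto (fun θ : ℝ => θ - θ₀) (nhds θ₀) (nhds 0) := by
    have := (by fun_prop : Continuous fun θ : ℝ => θ - θ₀).tendsto θ₀
    rwa [sub_self] at this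
  have heq : ρ =ᶠ[nhds θ₀] fun θ => ‖γ (b (θ - θ₀))‖ := by
    filter_upwards [hsub.eventually hbr] with θ hθ
    apply hρ
    set t := b (θ - θ₀) with ht
    have harg : (γ t * w).arg = θ - θ₀ := by rw [← hθ]; simp [ha, Complex.log_im]
    have h1 := Complex.norm_mul_exp_arg_mul_I (γ t * w)
    have hwn : ‖w‖ = 1 := by
      rw [hw, show -(θ₀ * Complex.I) = ((-θ₀ : ℝ) : ℂ) * Complex.I by push_cast; ring]
      exact Complex.norm_exp_ofReal_mul_I _
    rw [harg, norm_mul, hwn, mul_one] at h1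
    have h2 : Complex.exp (θ * Complex.I) =
        Complex.exp (((θ - θ₀ : ℝ) : ℂ) * Complex.I) * Complex.exp (θ₀ * Complex.I) := by
      rw [← Complex.exp_add]; congr 1; push_cast; ring
    rw [h2, ← mul_assoc, h1, mul_assoc, mul_comm w, hwe, mul_one]
  refine ContDiffAt.congr_of_eventuallyEq ?_ heq
  have hb2 : ContDiffAt ℝ 1 (fun θ : ℝ => b (θ - θ₀)) θ₀ := by
    refine ContDiffAt.comp θ₀ (g := b) (by simpa using hb) (by fun_prop)
  have h3 : ContDiffAt ℝ 1 (fun θ : ℝ => γ (b (θ - θ₀))) θ₀ :=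
    hγ.contDiffAt.comp θ₀ hb2
  exact h3.norm ℝ (by rw [sub_self, hb0]; exact hne)

/-! ### The result in the complex plane -/

/-- The result for a patch in `ℂ`: the boundary lies in an annulus of width at most `1 / m` around
the unit circle, and is a `C¹` polar graph. -/
lemma complex_starshaped {m : ℕ} (hm : 6 ≤ m) {E : Set ℂ} {Ω c : ℝ} (hE : IsOpen E)
    (hb : IsBounded E) (hs : IsSimplyConnected E)
    (hsym : ∀ ω : ℂ, ω ^ m = 1 → (fun y => ω * y) ⁻¹' E = E) (hv : volume E = ENNReal.ofReal π)
    (hgap : 200 / m < 1 / 2 - Ω) {γ : ℝ → ℂ} (hγ : ContDiff ℝ 1 γ) (hγ' : ∀ t, deriv γ t ≠ 0)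
    (hr : range γ = frontier E) (hc : ∀ x ∈ frontier E, psi E Ω x = c) :
    (∃ r : ℝ, ∀ x ∈ frontier E, r ≤ ‖x‖ ∧ ‖x‖ ≤ r + 1 / m) ∧
    ∃ ρ : ℝ → ℝ, ContDiff ℝ 1 ρ ∧ Function.Periodic ρ (2 * π) ∧
      (∀ θ, 0 < ρ θ ∧ |ρ θ - 1| ≤ 1 / m) ∧
      ∀ x, x ∈ frontier E ↔ ∃ θ : ℝ, x = ρ θ * Complex.exp (θ * Complex.I) := by
  have hm0 : m ≠ 0 := by omega
  have hmR : (0 : ℝ) < m := by positivity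
  have h0 := zero_mem_of_symm (by omega) hE hs hsym
  have hcomp : IsCompact (frontier E) :=
    hb.isCompact_closure.of_isClosed_subset isClosed_frontier frontier_subset_closure
  have hne : (frontier E).Nonempty := hr ▸ range_nonempty γ
  obtain ⟨x₀, hx₀, hmin⟩ := hcomp.exists_isMinOn hne continuous_norm.continuousOn
  have hmin' : ∀ x ∈ frontier E, ‖x₀‖ ≤ ‖x‖ := fun x hx => hmin hx
  have hr0 : 0 < ‖x₀‖ := by
    rw [norm_pos_iff]
    rintro rfl
    exact hx₀.2 (by rwa [hE.interior_eq])
  set r₀ := ‖x₀‖ with hr₀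
  have H : PatchHyp m E Ω r₀ :=
    ⟨hm, hE, hb, hsym, hr0, ball_subset_of_frontier hE h0 hr0 hmin', hgap⟩
  have hmax : ∀ x ∈ frontier E, ‖x‖ ≤ r₀ * (1 + 1 / m) := by
    intro x hx
    by_contra! hlt
    have hpre : IsPreconnected (frontier E) := by
      rw [← hr]; exact isPreconnected_range hγ.continuous
    obtain ⟨y, hy, hy'⟩ := (hpre.image _ continuous_norm.continuousOn).ordConnected.out
      ⟨x₀, hx₀, rfl⟩ ⟨x, hx, rfl⟩ (show r₀ * (1 + 1 / m) ∈ Icc ‖x₀‖ ‖x‖ from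
        ⟨by rw [← hr₀]; have : (0 : ℝ) < 1 / m := by positivity
            nlinarith, hlt.le⟩)
    have := H.ring_growth hr₀.symm hy'
    rw [hc _ hx₀, hc _ hy] at this
    exact lt_irrefl _ this
  obtain ⟨hr1, hR1⟩ := radii_of_area hE hb h0 hv hr0 (by positivity : 0 ≤ r₀ * (1 + 1 / m))
    fun x hx => ⟨hmin' x hx, hmax x hx⟩
  have hwidth : r₀ * (1 + 1 / m) ≤ r₀ + 1 / m := by
    have : (0 : ℝ) < 1 / m := by positivity
    nlinarith
  refine ⟨⟨r₀, fun x hx => ⟨hmin' x hx, (hmax x hx).trans hwidth⟩⟩, ?_⟩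
  have hexp : ∀ θ : ℝ, ‖Complex.exp (θ * Complex.I)‖ = 1 := Complex.norm_exp_ofReal_mul_I
  have hnorm : ∀ (r θ : ℝ), 0 < r → ‖(r : ℂ) * Complex.exp (θ * Complex.I)‖ = r := by
    intro r θ h
    rw [norm_mul, hexp, mul_one, Complex.norm_real, Real.norm_eq_abs, abs_of_pos h]
  -- Strict radial monotonicity of `psi`: a ray meets the boundary at most once.
  have huniq_lt : ∀ (e : ℂ) (a b : ℝ), ‖e‖ = 1 → 0 < a → (a : ℂ) * e ∈ frontier E →
      (b : ℂ) * e ∈ frontier E → ¬ a < b := by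
    intro e a b he ha h1 h2 hlt
    have na : ‖(a : ℂ) * e‖ = a := by simp [he, abs_of_pos ha]
    have nb : ‖(b : ℂ) * e‖ = b := by simp [he, abs_of_pos (ha.trans hlt)]
    have b1 := hmin' _ h1
    have b2 := hmax _ h2
    rw [na] at b1
    rw [nb] at b2
    have hg := H.radial_growth he b1 hlt.le (b2.trans (by gcongr; norm_num))
    rw [hc _ h1, hc _ h2, sub_self] at hg
    have : 0 < 85 / (m : ℝ) * (b ^ 2 - a ^ 2) := mul_pos (by positivity) (by nlinarith)
    linarith
  have huniq : ∀ (e : ℂ) (a b : ℝ), ‖e‖ = 1 → 0 < a → 0 < b → (a : ℂ) * e ∈ frontier E →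
      (b : ℂ) * e ∈ frontier E → a = b := fun e a b he ha hb' h1 h2 =>
    le_antisymm (not_lt.1 (huniq_lt e b a he hb' h2 h1)) (not_lt.1 (huniq_lt e a b he ha h1 h2))
  have hex : ∀ θ : ℝ, ∃ t : ℝ, 0 < t ∧ (t : ℂ) * Complex.exp (θ * Complex.I) ∈ frontier E := by
    intro θ
    obtain ⟨t, ht, hf⟩ := exists_frontier_on_ray hE hb h0 (Complex.exp_ne_zero (θ * Complex.I))
    exact ⟨t, ht, by simpa using hf⟩
  choose ρ hρ0 hρF using hex
  have hpolar : ∀ x ∈ frontier E, ∀ θ : ℝ, x = ‖x‖ * Complex.exp (θ * Complex.I) → ρ θ = ‖x‖ := by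
    intro x hx θ hθ
    exact huniq _ _ _ (hexp θ) (hρ0 θ) (hr0.trans_le (hmin' x hx)) (hρF θ) (hθ ▸ hx)
  have hγF : ∀ t, γ t ∈ frontier E := fun t => hr ▸ mem_range_self t
  refine ⟨ρ, ?_, ?_, ?_, ?_⟩
  · rw [contDiff_iff_contDiffAt]
    intro θ
    obtain ⟨t, ht⟩ : ∃ t, γ t = ρ θ * Complex.exp (θ * Complex.I) := by
      have := hρF θ
      rwa [← hr] at this
    have hn : ‖γ t‖ = ρ θ := by rw [ht]; exact hnorm _ _ (hρ0 θ)
    have ht' : γ t = ‖γ t‖ * Complex.exp (θ * Complex.I) := by rw [hn]; exact ht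
    refine contDiffAt_radius hγ (fun s θ' h => hpolar _ (hγF s) θ' h) ht' ?_ ?_
    · rw [← norm_pos_iff, hn]; exact hρ0 θ
    · intro him
      set w : ℂ := deriv γ t * Complex.exp (-(θ * Complex.I)) with hw
      have hwr : w = (w.re : ℂ) := Complex.ext (by simp) (by simp [him])
      have hd : deriv γ t = w.re * Complex.exp (θ * Complex.I) := by
        rw [← hwr, hw, mul_assoc, ← Complex.exp_add]; simp
      have hz := H.not_radial (hγ.differentiable one_ne_zero).differentiableAt.hasDerivAt
        (fun s => ⟨hmin' _ (hγF s), hmax _ (hγF s)⟩) (fun s => hc _ (hγF s)) (hexp θ) ht' hd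
      rw [hz] at hd
      exact hγ' t (by simpa using hd)
  · intro θ
    have e : Complex.exp (((θ + 2 * π : ℝ) : ℂ) * Complex.I) = Complex.exp (θ * Complex.I) := by
      push_cast
      rw [add_mul]
      exact Complex.exp_periodic _
    have := hρF (θ + 2 * π)
    rw [e] at this
    exact huniq _ _ _ (hexp θ) (hρ0 _) (hρ0 θ) this (hρF θ)
  · intro θ
    refine ⟨hρ0 θ, ?_⟩
    have h1 := hmin' _ (hρF θ)
    have h2 := hmax _ (hρF θ)
    rw [hnorm _ _ (hρ0 θ)] at h1 h2
    rw [abs_le]; constructor <;> linarith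
  · intro x
    constructor
    · intro hx
      have hp : x = ‖x‖ * Complex.exp (x.arg * Complex.I) :=
        (Complex.norm_mul_exp_arg_mul_I x).symm
      exact ⟨x.arg, by rw [hpolar x hx _ hp]; exact hp⟩
    · rintro ⟨θ, rfl⟩
      exact hρF θ

/-! ### Transfer to the Euclidean plane -/

/-- The standard isometric identification of `ℂ` with `ℝ²`. -/
def toR2 : ℂ ≃ₗᵢ[ℝ] R2 := Complex.orthonormalBasisOneI.repr

lemma toR2_eq_pt (z : ℂ) : toR2 z = pt z.re z.im := by
  ext i
  fin_cases i <;> simp [toR2, pt, Complex.orthonormalBasisOneI_repr_apply]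

lemma toR2_polar (r θ : ℝ) : toR2 (r * Complex.exp (θ * Complex.I)) = polar r θ := by
  rw [toR2_eq_pt, polar]
  congr 1 <;> simp [Complex.exp_re, Complex.exp_im]

lemma toR2_rot (α : ℝ) (z : ℂ) :
    toR2 (Complex.exp (α * Complex.I) * z) = rot α (toR2 z) := by
  rw [toR2_eq_pt, toR2_eq_pt, rot]
  congr 1 <;> simp [Complex.exp_re, Complex.exp_im, pt] <;> ring

lemma streamFun_toR2 (D : Set R2) (Ω : ℝ) (z : ℂ) :
    streamFun D Ω (toR2 z) = psi (toR2 ⁻¹' D) Ω z := by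
  have hmp : MeasurePreserving toR2 volume volume := toR2.measurePreserving
  have hemb : MeasurableEmbedding toR2 := toR2.toHomeomorph.measurableEmbedding
  unfold streamFun patchConv psi logPot
  rw [← hmp.setIntegral_preimage_emb hemb, toR2.norm_map]
  simp only [nker, ← map_sub, toR2.norm_map]
  rw [integral_const_mul]
  ring

lemma preimage_mul_root {m : ℕ} (hm : m ≠ 0) {D : Set R2} (hD : MFoldSymmetric m D) (ω : ℂ)
    (hω : ω ^ m = 1) : (fun y => ω * y) ⁻¹' (toR2 ⁻¹' D) = toR2 ⁻¹' D := by
  have : NeZero m := ⟨hm⟩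
  have hprim := Complex.isPrimitiveRoot_exp m hm
  obtain ⟨i, -, rfl⟩ := hprim.eq_pow_of_pow_eq_one hω
  have hζ : Complex.exp (2 * π * Complex.I / m) =
      Complex.exp (((2 * π / m : ℝ) : ℂ) * Complex.I) := by
    congr 1; push_cast; ring
  rw [hζ]
  clear hω
  set ζ := Complex.exp (((2 * π / m : ℝ) : ℂ) * Complex.I) with hζ'
  have hζ0 : ζ ≠ 0 := Complex.exp_ne_zero _
  have hone : ∀ y : ℂ, toR2 (ζ * y) ∈ D ↔ toR2 y ∈ D := by
    intro y
    rw [toR2_rot]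
    constructor
    · intro h
      rw [← hD] at h
      obtain ⟨x, hx, hxy⟩ := h
      obtain ⟨z, rfl⟩ := toR2.surjective x
      rw [← toR2_rot, ← toR2_rot] at hxy
      have := mul_left_cancel₀ hζ0 (toR2.injective hxy)
      rwa [← this]
    · intro h
      rw [← hD]
      exact ⟨_, h, rfl⟩
  induction i with
  | zero => ext y; simp
  | succ i ih =>
    ext y
    have h1 := hone (ζ ^ i * y)
    have h2 : toR2 (ζ ^ i * y) ∈ D ↔ toR2 y ∈ D := Set.ext_iff.1 ih y
    rw [← mul_assoc, ← pow_succ'] at h1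
    exact h1.trans h2

/-- If `1/2 − Ω > c₁/m` for an `m`-fold symmetric patch with `m ≥ m₁`,
then `D` is star-shaped with polar graph boundary `1 + u`, `‖u‖_{L∞} < c₂/m`, and in
particular the radial oscillation of `∂D` is less than `c₂/m`. -/
theorem large_lambda_starshaped :
    ∃ c₁ > (0 : ℝ), ∃ c₂ > (0 : ℝ), ∃ m₁ : ℕ, 3 ≤ m₁ ∧
      ∀ (m : ℕ), m₁ ≤ m → ∀ (D : Set R2) (Ω : ℝ),
        IsPatchSolution D Ω → volume D = ENNReal.ofReal π →
        MFoldSymmetric m D → 1/2 - Ω > c₁ / m →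
        (∃ u : ℝ → ℝ, ContDiff ℝ 1 u ∧ Function.Periodic u (2 * π) ∧
            (∀ θ : ℝ, -1 < u θ) ∧ frontier D = polarGraph u ∧
            ∀ θ : ℝ, |u θ| < c₂ / m) ∧
        sSup ((fun x : R2 => ‖x‖) '' frontier D)
            - sInf ((fun x : R2 => ‖x‖) '' frontier D) < c₂ / m := by
  refine ⟨200, by norm_num, 2, by norm_num, 6, by norm_num, ?_⟩
  rintro m hm D Ω ⟨hDo, hDb, hDs, ⟨γ, hγ, -, -, hγ', hr⟩, c, hc⟩ hv hsym hgap
  have hm0 : m ≠ 0 := by omega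
  have hmR : (0 : ℝ) < m := by positivity
  have hlt : (1 : ℝ) / m < 2 / m := by gcongr; norm_num
  have hFr : toR2 ⁻¹' frontier D = frontier (toR2 ⁻¹' D) := toR2.toHomeomorph.preimage_frontier D
  have hmemF : ∀ x, x ∈ frontier (toR2 ⁻¹' D) ↔ toR2 x ∈ frontier D := fun x => by
    rw [← hFr]; rfl
  have hbE : IsBounded (toR2 ⁻¹' D) := by
    have := toR2.symm.lipschitz.isBounded_image hDb
    rwa [LinearIsometryEquiv.image_eq_preimage_symm, LinearIsometryEquiv.symm_symm] at this
  have hvE : volume (toR2 ⁻¹' D) = ENNReal.ofReal π := by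
    rw [toR2.measurePreserving.measure_preimage hDo.measurableSet.nullMeasurableSet, hv]
  have hderiv : ∀ t, deriv (fun t => toR2.symm (γ t)) t = toR2.symm (deriv γ t) := fun t =>
    ((toR2.symm.toContinuousLinearEquiv : R2 →L[ℝ] ℂ).hasFDerivAt.comp_hasDerivAt t
      (hγ.differentiable two_ne_zero).differentiableAt.hasDerivAt).deriv
  obtain ⟨⟨r, hrad⟩, ρ, hρC, hρp, hρb, hρF⟩ := complex_starshaped (Ω := Ω) (c := c) hm
    (hDo.preimage toR2.continuous) hbE
    ((toR2.toHomeomorph.isSimplyConnected_preimage (s := D)).2 hDs)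
    (preimage_mul_root hm0 hsym) hvE hgap (γ := fun t => toR2.symm (γ t))
    (toR2.symm.contDiff.comp (hγ.of_le (by norm_num)))
    (fun t => by
      rw [hderiv]
      exact fun h => hγ' t (by simpa using h))
    (by
      ext x
      rw [hmemF, ← hr]
      constructor
      · rintro ⟨t, rfl⟩; exact ⟨t, by simp⟩
      · rintro ⟨t, ht⟩; exact ⟨t, by simp [ht]⟩)
    (fun x hx => by rw [← streamFun_toR2]; exact hc _ ((hmemF x).1 hx))
  refine ⟨⟨fun θ => ρ θ - 1, hρC.sub contDiff_const, fun θ => by simp only [hρp θ],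
    fun θ => by linarith [(hρb θ).1], ?_, fun θ => (hρb θ).2.trans_lt hlt⟩, ?_⟩
  · ext x
    obtain ⟨z, rfl⟩ := toR2.surjective x
    rw [← hmemF, hρF]
    simp only [polarGraph, mem_ofPred_eq, add_sub_cancel, ← toR2_polar, toR2.injective.eq_iff]
  · have hmem : ∀ x ∈ frontier D, r ≤ ‖x‖ ∧ ‖x‖ ≤ r + 1 / m := by
      intro x hx
      obtain ⟨z, rfl⟩ := toR2.surjective x
      rw [toR2.norm_map]
      exact hrad z ((hmemF z).2 hx)
    have hne : ((fun x : R2 => ‖x‖) '' frontier D).Nonempty := by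
      rw [← hr]; exact (range_nonempty γ).image _
    have h1 : sSup ((fun x : R2 => ‖x‖) '' frontier D) ≤ r + 1 / m :=
      csSup_le hne (by rintro _ ⟨x, hx, rfl⟩; exact (hmem x hx).2)
    have h2 : r ≤ sInf ((fun x : R2 => ‖x‖) '' frontier D) :=
      le_csInf hne (by rintro _ ⟨x, hx, rfl⟩; exact (hmem x hx).1)
    linarith
end
end
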